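/- arXiv:2605.21999 — 2 statements merged into one kernel-verified Lean document; each statement's English description precedes it below -/
import Mathlib

section
/- On the event E, assume Condition (H) with the dataset in the sparse-unlearnable regime, and run adversarial training for T iterations. Then: (1) there exists a filter r ∈ [m] with w_{r,1}^{(T)} ≥ C_0/(α m^{1/3}); (2) there exists an unlearnable sample i ∈ S_U with max over r ∈ [m], j ≠ s(X_i) of y_i⟨w_r^{(T)}, x_{i,j}⟩ ≥ C_1/(3(mP)^{1/3}) (noise memorization); (3) the average robust training logistic loss is at most 40 m^{2/3}(log T)^{1/3}/(C_0²(1−ε/α)³ η α²(T−T_0)) + c·p_un = o(1) for an absolute constant c; and (4) the robust test error on the learnable test distribution satisfies L^rob(f_{W^{(T)}}) ≥ 1/2 − o(1). -/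
open Finset MeasureTheory ProbabilityTheory
open scoped ENNReal NNReal

noncomputable section

namespace AD

/-- Cubic ReLU activation. -/
def phi (z : ℝ) : ℝ := (max 0 z) ^ 3

/-- Negative sigmoid `ψ(z) = 1/(1+e^z)`. -/
def psi (z : ℝ) : ℝ := 1 / (1 + Real.exp z)

/-- Logistic loss `ℓ(z) = log(1+e^{-z})`. -/
def lloss (z : ℝ) : ℝ := Real.log (1 + Real.exp (-z))

/-- Logistic sigmoid `σ(z) = 1/(1+e^{-z})`. -/
def sigm (z : ℝ) : ℝ := 1 / (1 + Real.exp (-z))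

/-- Euclidean inner product on `Fin d → ℝ`. -/
def dot {d : ℕ} (a b : Fin d → ℝ) : ℝ := ∑ k, a k * b k

/-- Squared Euclidean norm. -/
def sqnorm {d : ℕ} (a : Fin d → ℝ) : ℝ := dot a a

/-- First standard basis vector `e₁` (the learnable feature `u`). -/
def e1 (d : ℕ) (hd : 0 < d) : Fin d → ℝ := fun k => if k = (⟨0, hd⟩ : Fin d) then 1 else 0

/-- Last standard basis vector `e_d` (the unlearnable feature `v`). -/
def eLast (d : ℕ) (_hd : 0 < d) : Fin d → ℝ := fun k => if (k : ℕ) = d - 1 then 1 else 0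

/-- The two-layer student network
`f_W(X) = ∑_r ∑_p [φ(⟨w_r,x_p⟩) − φ(−⟨w_r,x_p⟩)]`. -/
def netOut {m P d : ℕ} (w : Fin m → Fin d → ℝ) (X : Fin P → Fin d → ℝ) : ℝ :=
  ∑ r, ∑ p, (phi (dot (w r) (X p)) - phi (-(dot (w r) (X p))))

/-- The concentration event `E` of the paper, i.e. properties (P1)–(P8), stated for
training patches `x`, initialization `w0`, labels `y` and signal-patch indices `sig`. -/
def EventEOn (N m P d : ℕ) (hd : 0 < d) (sigman sigma0 delta : ℝ)
    (y : Fin N → ℝ) (sig : Fin N → Fin P)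
    (x : Fin N → Fin P → Fin d → ℝ) (w0 : Fin m → Fin d → ℝ) : Prop :=
  -- (P1) noise-patch norms
  (∀ i j, j ≠ sig i →
      sigman ^ 2 * d / 2 ≤ sqnorm (x i j) ∧ sqnorm (x i j) ≤ 3 * sigman ^ 2 * d / 2) ∧
  -- (P2) pairwise noise inner products
  (∀ i k j q, j ≠ sig i → q ≠ sig k → ((i, j) : Fin N × Fin P) ≠ (k, q) →
      |dot (x i j) (x k q)| ≤
        2 * sigman ^ 2 * Real.sqrt ((d : ℝ) * Real.log ((16 : ℝ) * N ^ 2 * P ^ 2 / delta))) ∧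
  -- (P3) sup-norm of noise patches
  (∀ i j, j ≠ sig i → ∀ kk : Fin d,
      |x i j kk| ≤ sigman * Real.sqrt (2 * Real.log ((16 : ℝ) * d * N * P / delta))) ∧
  -- (P4) initialization norms
  (∀ r, Real.sqrt (sqnorm (w0 r)) ≤ 2 * sigma0 * Real.sqrt d) ∧
  -- (P5) initialization signal correlation
  (∀ r, |dot (w0 r) (e1 d hd)| ≤ sigma0 * Real.sqrt (2 * Real.log ((16 : ℝ) * m / delta))) ∧
  -- (P6) initialization noise correlations
  (∀ r i j, j ≠ sig i →
      |dot (w0 r) (x i j)| ≤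
        2 * sigma0 * sigman * Real.sqrt ((d : ℝ) * Real.log ((16 : ℝ) * N * m * P / delta))) ∧
  -- (P7) maximal initial signal alignment
  (∃ r, sigma0 / 2 ≤ dot (w0 r) (e1 d hd)) ∧
  -- (P8) maximal initial noise alignment
  (∀ i j, j ≠ sig i → ∃ r, sigma0 * sigman * Real.sqrt d / 4 ≤ y i * dot (w0 r) (x i j))
structure Setting where
  N : ℕ
  m : ℕ
  P : ℕ
  d : ℕ
  T : ℕ
  hN : 0 < N
  hm : 0 < m
  hP : 0 < P
  hd : 0 < d
  alpha : ℝ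
  sigman : ℝ
  sigma0 : ℝ
  eta : ℝ
  eps : ℝ
  delta : ℝ
  halpha : 0 < alpha
  hsigman : 0 < sigman
  hsigma0 : 0 < sigma0
  heta : 0 < eta
  heps : 0 < eps
  hepsalpha : eps < alpha
  hdelta0 : 0 < delta
  hdelta1 : delta < 1
  /-- labels -/
  y : Fin N → ℝ
  hy : ∀ i, y i = 1 ∨ y i = -1
  /-- signal patch index -/
  sig : Fin N → Fin P
  /-- learnable samples -/
  SL : Finset (Fin N)
  /-- unlearnable samples -/
  SU : Finset (Fin N)
  hunion : SL ∪ SU = Finset.univ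
  hdisj : Disjoint SL SU
  /-- training patches -/
  x : Fin N → Fin P → Fin d → ℝ
  hsigL : ∀ i ∈ SL, x i (sig i) = (alpha * y i) • e1 d hd
  hsigU : ∀ i ∈ SU, x i (sig i) = (alpha * y i) • eLast d hd
  hnoiseU : ∀ i j, j ≠ sig i → dot (x i j) (e1 d hd) = 0
  hnoiseV : ∀ i j, j ≠ sig i → dot (x i j) (eLast d hd) = 0
  /-- weight trajectory -/
  w : ℕ → Fin m → Fin d → ℝ
  hwperp : ∀ t r, dot (w t r) (eLast d hd) = 0
  /-- adversarial training examples at each iteration -/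
  xadv : ℕ → Fin N → Fin P → Fin d → ℝ
  hadvnoise : ∀ t i j, j ≠ sig i → xadv t i j = x i j
  hadvspan : ∀ t i, ∃ c : ℝ, xadv t i (sig i) - x i (sig i) = c • x i (sig i)
  hadvlinf : ∀ t i p k, |xadv t i p k - x i p k| ≤ eps
  hadvlearn : ∀ t : ℕ, ∀ i ∈ SL,
    alpha - eps ≤ y i * dot (xadv t i (sig i)) (e1 d hd) ∧
      y i * dot (xadv t i (sig i)) (e1 d hd) ≤ alpha

namespace Setting

variable (S : Setting)

/-- Adversarial margin `y_i f_{W^{(t)}}(X̃_i^{(t)})`. -/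
def marg (t : ℕ) (i : Fin S.N) : ℝ := S.y i * netOut (S.w t) (S.xadv t i)

/-- Signal coordinate `w_{r,1}^{(t)}`. -/
def wsig (t : ℕ) (r : Fin S.m) : ℝ := S.w t r ⟨0, S.hd⟩

/-- Unlearnable fraction `p_un = |S_U|/N`. -/
def pun : ℝ := (S.SU.card : ℝ) / S.N

/-- The adversarial-training gradient-descent dynamics. -/
def ATDyn : Prop :=
  ∀ t r, S.w (t + 1) r = S.w t r +
    (3 * S.eta / S.N) •
      ∑ i : Fin S.N, (psi (S.marg t i) * S.y i) •
        ∑ p : Fin S.P, (dot (S.w t r) (S.xadv t i p)) ^ 2 • S.xadv t i p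

/-- The signed gradient weight of sample `i` at iteration `t` under adversarial
distillation from teacher logits `fT`. -/
def gAD (fT : Fin S.N → ℝ) (t : ℕ) (i : Fin S.N) : ℝ :=
  sigm (S.y i * fT i) * psi (S.marg t i) - sigm (-(S.y i * fT i)) * psi (-(S.marg t i))

/-- The adversarial-distillation gradient-descent dynamics. -/
def ADDyn (fT : Fin S.N → ℝ) : Prop :=
  ∀ t r, S.w (t + 1) r = S.w t r +
    (3 * S.eta / S.N) •
      ∑ i : Fin S.N, (S.gAD fT t i * S.y i) •
        ∑ p : Fin S.P, (dot (S.w t r) (S.xadv t i p)) ^ 2 • S.xadv t i p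

/-- Noise coefficients `ρ_{i,j,r}^{(t)}` (adversarial training). -/
def rho (i : Fin S.N) (j : Fin S.P) (r : Fin S.m) : ℕ → ℝ
  | 0 => 0
  | t + 1 => rho i j r t + (3 * S.eta / S.N) * psi (S.marg t i) * (dot (S.w t r) (S.x i j)) ^ 2

/-- Noise coefficients under adversarial distillation. -/
def rhoAD (fT : Fin S.N → ℝ) (i : Fin S.N) (j : Fin S.P) (r : Fin S.m) : ℕ → ℝ
  | 0 => 0
  | t + 1 => rhoAD fT i j r t + (3 * S.eta / S.N) * S.gAD fT t i * (dot (S.w t r) (S.x i j)) ^ 2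

/-- The event `E` for a setting. -/
def EventE : Prop :=
  EventEOn S.N S.m S.P S.d S.hd S.sigman S.sigma0 S.delta S.y S.sig S.x (S.w 0)

/-- Condition (H): the parameter requirements of Condition 4.1 of the paper
(without the unlearnable-fraction regime item, which is imposed separately). -/
def CondH (C : ℝ) : Prop :=
  1 ≤ C ∧
  -- training horizon
  C * S.N / (S.eta * S.sigma0 * S.sigman ^ 3 * ((S.d : ℝ) * Real.sqrt S.d)) ≤ (S.T : ℝ) ∧
  -- dimension
  C * S.m ^ 2 * S.P ^ 2 * S.N ^ 2 *
      (Real.log ((S.T : ℝ) * S.N * S.m * S.P / S.delta)) ^ 4 ≤ (S.d : ℝ) ∧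
  -- signal strength
  C * S.sigman * Real.sqrt S.d * Real.log ((S.T : ℝ) * S.N * S.m * S.P / S.delta) /
      (((S.N : ℝ) * (1 - S.pun)) ^ ((1 : ℝ) / 3)) ≤ S.alpha ∧
  -- initialization scale
  S.sigma0 ≤
    C⁻¹ *
        min (min (1 / ((S.m : ℝ) ^ ((2 : ℝ) / 3) * (S.P : ℝ) ^ ((2 : ℝ) / 3) *
            S.sigman * Real.sqrt S.d))
          (1 / (S.alpha * (S.m : ℝ) ^ ((2 : ℝ) / 3))))
          (1 / (S.sigman * S.m ^ 2 * Real.sqrt S.P * S.d)) /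
      Real.log ((S.T : ℝ) * S.d * S.N * S.m * S.P / S.delta) ∧
  -- learning rate
  S.eta ≤
    C⁻¹ * min (min (1 / (S.alpha ^ 3 * S.sigma0)) (1 / (S.sigman ^ 2 * S.d))) (1 / S.alpha ^ 2) /
      Real.log ((S.T : ℝ) * S.N * S.m * S.P / S.delta) ∧
  -- adversarial budget
  C * S.sigman * S.m * Real.sqrt S.P * Real.log ((S.T : ℝ) * S.d * S.N * S.P / S.delta) ≤ S.eps ∧
  S.eps < C⁻¹ * min S.alpha (1 / (S.m * S.sigma0 * S.d)) ∧
  -- width and number of patches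
  C * Real.log ((S.N : ℝ) * S.P / S.delta) ≤ (S.m : ℝ) ∧
  (S.m : ℝ) ≤ C * Real.log S.d ^ C ∧
  2 ≤ S.P ∧ (S.P : ℝ) ≤ C

/-- The sparse-unlearnable regime of Condition 4.1. -/
def SparseRegime (C : ℝ) : Prop :=
  C / S.N ≤ S.pun ∧ S.pun ≤ C⁻¹ * Real.log S.d / S.N ∧
  C * S.m * S.P * Real.log ((S.T : ℝ) * S.d * S.N * S.m * S.P / S.delta) ≤ (S.N : ℝ)

/-- The noise-stability bound (NS) on learnable samples at iteration `t`. -/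
def NS (t : ℕ) : Prop :=
  ∀ r : Fin S.m, ∀ i ∈ S.SL, ∀ j, j ≠ S.sig i →
    |dot (S.w t r) (S.x i j)| ≤
      3 * S.sigma0 * S.sigman *
          Real.sqrt ((S.d : ℝ) * Real.log ((16 : ℝ) * S.N * S.m * S.P / S.delta)) +
        21 * S.pun * S.N * S.P * Real.log S.T ^ ((1 : ℝ) / 3) / Real.sqrt S.d *
          Real.sqrt (Real.log ((16 : ℝ) * S.N ^ 2 * S.P ^ 2 / S.delta))

/-- The signal-learning hitting time `T₀`. -/
def T0 (C0 : ℝ) : ℕ :=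
  sInf {t : ℕ | ∃ r, C0 / (S.alpha * (S.m : ℝ) ^ ((1 : ℝ) / 3)) < S.wsig t r}

/-- Maximum of the noise coefficients over unlearnable noise patches. -/
def rhoMaxSU (t : ℕ) : ℝ :=
  sSup {z : ℝ | ∃ r : Fin S.m, ∃ k ∈ S.SU, ∃ q, q ≠ S.sig k ∧ z = S.rho k q r t}

/-- Shifted noise coefficients `ρ̂_{i,j,r}^{(t)}`. -/
def rhoHat (i : Fin S.N) (j : Fin S.P) (r : Fin S.m) (t : ℕ) : ℝ :=
  S.rho i j r t + S.y i * dot (S.w 0 r) (S.x i j) / sqnorm (S.x i j)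

/-- Maximum shifted noise coefficient over unlearnable noise patches. -/
def rhoHatMax (t : ℕ) : ℝ :=
  sSup {z : ℝ | ∃ r : Fin S.m, ∃ k ∈ S.SU, ∃ q, q ≠ S.sig k ∧ z = S.rhoHat k q r t}

/-- The noise-memorization hitting time `T₁`. -/
def T1 (C1 : ℝ) : ℕ :=
  sInf {t : ℕ | C1 / (((S.m : ℝ) * S.P) ^ ((1 : ℝ) / 3) * S.sigman ^ 2 * S.d) < S.rhoHatMax t}

/-- The Good-Teacher horizon `T_max`. -/
def Tmax : ℝ :=
  S.N / (1000 * S.eta * S.m * S.P * S.sigma0 ^ 4 * S.sigman ^ 6 * (S.d : ℝ) ^ 3 *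
    Real.log ((16 : ℝ) * S.N * S.m * S.P / S.delta) ^ 2)

end Setting
/-- Law of the label: uniform on `{+1, −1}`. -/
def labelLaw : Measure ℝ :=
  ((2 : ℝ≥0∞)⁻¹ • Measure.dirac (1 : ℝ)) + ((2 : ℝ≥0∞)⁻¹ • Measure.dirac (-1 : ℝ))

/-- Law of a single coordinate of a noise patch: `N(0, σ_n²)` off the feature
subspace coordinates, `δ₀` on coordinates `1` and `d`. -/
def noiseCoordLaw (sigman : ℝ) (d : ℕ) (k : Fin d) : Measure ℝ :=
  if (k : ℕ) = 0 ∨ (k : ℕ) = d - 1 then Measure.dirac 0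
  else gaussianReal 0 ⟨sigman ^ 2, sq_nonneg _⟩

/-- Law of a noise patch: `N(0, σ_n²(I_d − Π_F))`. -/
def noisePatchLaw (sigman : ℝ) (d : ℕ) : Measure (Fin d → ℝ) :=
  Measure.pi (noiseCoordLaw sigman d)

/-- Uniform law of the signal-patch index. -/
def uniformPatch (P : ℕ) (hP : 0 < P) : Measure (Fin P) :=
  (@PMF.uniformOfFintype (Fin P) _ ⟨⟨0, hP⟩⟩).toMeasure

/-- The learnable test distribution `D_L`: uniform label, uniform signal-patch index,
signal patch `α y u`, independent Gaussian noise patches. -/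
def testLaw (alpha sigman : ℝ) (P d : ℕ) (hP : 0 < P) (hd : 0 < d) :
    Measure ((Fin P → Fin d → ℝ) × ℝ) :=
  Measure.map
    (fun z : ℝ × Fin P × (Fin P → Fin d → ℝ) =>
      (Function.update z.2.2 z.2.1 ((alpha * z.1) • e1 d hd), z.1))
    ((labelLaw).prod ((uniformPatch P hP).prod (Measure.pi fun _ : Fin P => noisePatchLaw sigman d)))

/-- Robust test error of the student at iteration `t` on the learnable test
distribution `D_L`. -/
def Setting.robErr (S : Setting) (t : ℕ) : ℝ≥0∞ :=
  testLaw S.alpha S.sigman S.P S.d S.hP S.hd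
    {Xy : (Fin S.P → Fin S.d → ℝ) × ℝ |
      ∃ Δ : Fin S.P → Fin S.d → ℝ, (∀ p k, |Δ p k| ≤ S.eps) ∧
        Xy.2 * netOut (S.w t) (fun p => Xy.1 p + Δ p) < 0}

/-! In feature coordinates, a filter is described by its signal component and by its coefficients on
the training noise patches, and each coordinate grows by its own square, at a rate damped by the
logistic derivatives of the margins. The noise patches are nearly orthogonal, so the patches of a
sample are driven essentially by that sample alone. Learnable samples share the signal, which grows
first and makes their margins so large that their noise coefficients stay negligible afterwards.
Unlearnable samples have no signal the student can see; as long as none of their patches is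
memorized, their margins stay small, their logistic derivatives stay near `1 / 2`, and the quadratic
growth of the largest coefficient would blow up before the horizon. Hence a noise patch is
memorized, and since the unlearnable samples are few, so is their share of the loss.

The signal itself stays of logarithmic size, while the budget allows a large multiple of a
memorized training patch to be added to a non-signal patch of a test input. By the cubic activation
this outweighs the signal, and the fresh test noise, nearly orthogonal to every filter, does not
interfere; so the robust error is close to `1`. -/

/-! ### Logistic loss and scalar recursions -/

theorem psi_pos (z : ℝ) : 0 < psi z := by unfold psi; positivity

theorem psi_le_one (z : ℝ) : psi z ≤ 1 := by
  unfold psi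
  rw [div_le_one (by positivity)]
  linarith [Real.exp_pos z]

theorem psi_le_exp_neg (z : ℝ) : psi z ≤ Real.exp (-z) := by
  unfold psi
  rw [Real.exp_neg, one_div]
  exact inv_anti₀ (Real.exp_pos z) (by linarith [Real.exp_pos z])

theorem half_exp_neg_le_psi {z a : ℝ} (ha : 0 ≤ a) (hz : z ≤ a) :
    Real.exp (-a) / 2 ≤ psi z := by
  have h_exp : Real.exp z ≤ Real.exp a := Real.exp_le_exp.2 hz
  have h_one : 1 ≤ Real.exp a := Real.one_le_exp ha
  unfold psi
  rw [Real.exp_neg, div_le_div_iff₀ (by norm_num) (by positivity),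
    inv_mul_le_iff₀ (Real.exp_pos a)]
  linarith

theorem quarter_le_psi {z : ℝ} (hz : z ≤ 1) : 1 / 4 ≤ psi z := by
  have h_exp : Real.exp z ≤ Real.exp 1 := Real.exp_le_exp.2 hz
  unfold psi
  rw [div_le_div_iff₀ (by norm_num) (by positivity)]
  linarith [Real.exp_one_lt_d9]

theorem lloss_le_exp_neg (z : ℝ) : lloss z ≤ Real.exp (-z) := by
  unfold lloss
  linarith [Real.log_le_sub_one_of_pos (x := 1 + Real.exp (-z)) (by positivity)]

theorem lloss_le_one {z : ℝ} (hz : -(1 / 2) ≤ z) : lloss z ≤ 1 := by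
  have h_exp : Real.exp (-z) ≤ Real.exp (1 / 2) := Real.exp_le_exp.2 (by linarith)
  have h_sq : Real.exp (1 / 2) * Real.exp (1 / 2) = Real.exp 1 := by
    rw [← Real.exp_add]; norm_num
  have h_half : (1.64 : ℝ) ≤ Real.exp (1 / 2) := by
    by_contra! h
    nlinarith [Real.exp_pos (1 / 2 : ℝ), Real.exp_one_gt_d9]
  unfold lloss
  rw [Real.log_le_iff_le_exp (by positivity)]
  nlinarith

theorem cube_le_cube {a b : ℝ} (h : a ≤ b) : a ^ 3 ≤ b ^ 3 :=
  (Odd.strictMono_pow (by decide : Odd 3)).monotone h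

theorem rpow_third_cube {a : ℝ} (ha : 0 ≤ a) : (a ^ ((1 : ℝ) / 3)) ^ 3 = a := by
  rw [← Real.rpow_natCast, ← Real.rpow_mul ha]
  norm_num

theorem rate_le_two_div_sub {b g : ℝ} (hb : 0 < b) (hg : 0 ≤ g) (hgb : g * b ≤ 1) :
    g ≤ 2 / b - 2 / (b + g * b ^ 2) := by
  rw [div_sub_div _ _ hb.ne' (by positivity), le_div_iff₀ (by positivity)]
  nlinarith [mul_nonneg hg (sq_nonneg b)]

theorem sum_rate_le {b g : ℕ → ℝ} {t₀ t₁ : ℕ} (h01 : t₀ ≤ t₁) (hpos : 0 < b t₀)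
    (hg : ∀ t, 0 ≤ g t) (hstep : ∀ t < t₁, b t + g t * b t ^ 2 ≤ b (t + 1))
    (hsmall : ∀ t < t₁, g t * b t ≤ 1) :
    ∑ t ∈ Ico t₀ t₁, g t ≤ 2 / b t₀ := by
  have potential : ∀ n, t₀ ≤ n → n ≤ t₁ →
      0 < b n ∧ ∑ t ∈ Ico t₀ n, g t ≤ 2 / b t₀ - 2 / b n := by
    intro n hn
    induction n, hn using Nat.le_induction with
    | base => intro _; exact ⟨hpos, by simp⟩
    | succ n hn ih =>
      intro hn1
      obtain ⟨hb, hs⟩ := ih (by omega)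
      have grown_pos : 0 < b n + g n * b n ^ 2 :=
        add_pos_of_pos_of_nonneg hb (mul_nonneg (hg n) (sq_nonneg _))
      have div_le : 2 / b (n + 1) ≤ 2 / (b n + g n * b n ^ 2) :=
        div_le_div_of_nonneg_left zero_le_two grown_pos (hstep n hn1)
      refine ⟨grown_pos.trans_le (hstep n hn1), ?_⟩
      rw [sum_Ico_succ_top hn]
      linarith [rate_le_two_div_sub hb (hg n) (hsmall n hn1)]
  obtain ⟨hb, hs⟩ := potential t₁ h01 le_rfl
  have : 0 ≤ 2 / b t₁ := by positivity
  linarith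

/-! ### Cubic gradient dynamics -/

/-- Cubic-activation gradient descent in the coordinates of its feature decomposition. Filters are
indexed by `R`, noise patches by `ι` and samples by `K`. The signal component of a filter is
`signal`; its noise component is a combination of the noise patches with coefficients `coeff`, so
its correlations `corr` with the label-signed patches are determined by the normalized, label-signed
Gram matrix `gram`. The number `strength t k` is the fraction of the signal of sample `k` that
survives the attack at time `t`. -/
structure CubicDynamics (R ι K : Type*) [Fintype R] [Fintype ι] [Fintype K] [DecidableEq K] where
  learnable : Finset K
  unlearnable : Finset K
  isCompl : IsCompl learnable unlearnable
  sample : ι → K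
  P : ℝ
  mu : ℝ
  signalRate : ℝ
  noiseRate : ℝ
  signal : ℕ → R → ℝ
  coeff : ℕ → R → ι → ℝ
  corr : ℕ → R → ι → ℝ
  margin : ℕ → K → ℝ
  strength : ℕ → K → ℝ
  gram : ι → ι → ℝ
  signal_update : ∀ t r, signal (t + 1) r = signal t r +
    signalRate * (∑ k ∈ learnable, psi (margin t k) * strength t k ^ 3) * signal t r ^ 2
  coeff_zero : ∀ r i, coeff 0 r i = 0
  coeff_succ : ∀ t r i, coeff (t + 1) r i =
    coeff t r i + noiseRate * psi (margin t (sample i)) * corr t r i ^ 2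
  corr_eq : ∀ t r i, corr t r i = corr 0 r i + ∑ j, coeff t r j * gram i j
  margin_learnable : ∀ t, ∀ k ∈ learnable, margin t k =
    strength t k ^ 3 * ∑ r, signal t r ^ 3 + ∑ r, ∑ i with sample i = k, corr t r i ^ 3
  margin_unlearnable : ∀ t, ∀ k ∈ unlearnable,
    margin t k = ∑ r, ∑ i with sample i = k, corr t r i ^ 3
  signalRate_pos : 0 < signalRate
  noiseRate_pos : 0 < noiseRate
  strength_nonneg : ∀ t, ∀ k ∈ learnable, 0 ≤ strength t k
  strength_le_one : ∀ t, ∀ k ∈ learnable, strength t k ≤ 1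
  one_le_P : 1 ≤ P
  card_patches_le : ∀ k, (#{i | sample i = k} : ℝ) ≤ P
  mu_nonneg : 0 ≤ mu
  abs_gram_le : ∀ i j, i ≠ j → |gram i j| ≤ mu

namespace CubicDynamics

variable {R ι K : Type*} [Fintype R] [Fintype ι] [Fintype K] [DecidableEq K]
  (D : CubicDynamics R ι K)

/-- The number of samples, as a real number. -/
def N (_ : CubicDynamics R ι K) : ℝ := Fintype.card K

/-- The number of filters, as a real number. -/
def m (_ : CubicDynamics R ι K) : ℝ := Fintype.card R

/-- The cube root of the number of samples. -/
def N₃ : ℝ := D.N ^ ((1 : ℝ) / 3)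

/-- The cube root of the number of filters, which sets the scale `1 / m₃` of a learned signal. -/
def m₃ : ℝ := D.m ^ ((1 : ℝ) / 3)

/-- The growth rate of the signal dynamics `signal ↦ signal + gain * signal ^ 2`. -/
def gain (t : ℕ) : ℝ :=
  D.signalRate * ∑ k ∈ D.learnable, psi (D.margin t k) * D.strength t k ^ 3

/-- The total influence of the noise coefficients of a filter on its correlation with a patch. -/
def interference (t : ℕ) (r : R) : ℝ := D.mu * ∑ j, D.coeff t r j

/-- The contribution of the noise patches to the margin of a sample. -/
def noiseMargin (t : ℕ) (k : K) : ℝ := ∑ r, ∑ i with D.sample i = k, D.corr t r i ^ 3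

theorem margin_of_learnable {t : ℕ} {k : K} (hk : k ∈ D.learnable) :
    D.margin t k = D.strength t k ^ 3 * ∑ r, D.signal t r ^ 3 + D.noiseMargin t k :=
  D.margin_learnable t k hk

theorem margin_of_unlearnable {t : ℕ} {k : K} (hk : k ∈ D.unlearnable) :
    D.margin t k = D.noiseMargin t k :=
  D.margin_unlearnable t k hk

theorem card_add_card : (#D.learnable : ℝ) + #D.unlearnable = D.N := by
  have h := card_add_card_compl D.learnable
  rw [D.isCompl.compl_eq] at h
  rw [← Nat.cast_add, h, N]

theorem mem_or_mem (k : K) : k ∈ D.learnable ∨ k ∈ D.unlearnable := by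
  rw [← mem_union, ← sup_eq_union, D.isCompl.sup_eq_top]
  exact mem_univ k

theorem card_learnable_le : (#D.learnable : ℝ) ≤ D.N :=
  Nat.cast_le.2 (card_le_univ _)

theorem N_nonneg : 0 ≤ D.N := Nat.cast_nonneg _

theorem m_nonneg : 0 ≤ D.m := Nat.cast_nonneg _

theorem N₃_pow : D.N₃ ^ 3 = D.N := rpow_third_cube D.N_nonneg

theorem m₃_pow : D.m₃ ^ 3 = D.m := rpow_third_cube D.m_nonneg

theorem strength_cube_nonneg {t : ℕ} {k : K} (hk : k ∈ D.learnable) : 0 ≤ D.strength t k ^ 3 :=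
  pow_nonneg (D.strength_nonneg t k hk) 3

theorem strength_cube_le_one {t : ℕ} {k : K} (hk : k ∈ D.learnable) : D.strength t k ^ 3 ≤ 1 :=
  pow_le_one₀ (D.strength_nonneg t k hk) (D.strength_le_one t k hk)

theorem gain_nonneg (t : ℕ) : 0 ≤ D.gain t :=
  mul_nonneg D.signalRate_pos.le <| sum_nonneg fun _ hk =>
    mul_nonneg (psi_pos _).le (D.strength_cube_nonneg hk)

theorem gain_le_of_psi_le {t : ℕ} {c : ℝ} (hc : 0 ≤ c)
    (h : ∀ k ∈ D.learnable, psi (D.margin t k) ≤ c) : D.gain t ≤ D.signalRate * D.N * c := by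
  have term_le : ∀ k ∈ D.learnable, psi (D.margin t k) * D.strength t k ^ 3 ≤ c := fun k hk =>
    (mul_le_of_le_one_right (psi_pos _).le (D.strength_cube_le_one hk)).trans (h k hk)
  have sum_le : ∑ k ∈ D.learnable, psi (D.margin t k) * D.strength t k ^ 3 ≤ D.N * c := by
    refine (sum_le_card_nsmul _ _ c term_le).trans ?_
    rw [nsmul_eq_mul]
    exact mul_le_mul_of_nonneg_right D.card_learnable_le hc
  rw [mul_assoc]
  exact mul_le_mul_of_nonneg_left sum_le D.signalRate_pos.le

theorem signal_succ (t : ℕ) (r : R) :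
    D.signal (t + 1) r = D.signal t r + D.gain t * D.signal t r ^ 2 := D.signal_update t r

theorem signal_mono (r : R) : Monotone fun t => D.signal t r := by
  refine monotone_nat_of_le_succ fun t => ?_
  rw [D.signal_succ]
  exact le_add_of_nonneg_right (mul_nonneg (D.gain_nonneg t) (sq_nonneg _))

theorem coeff_increment_nonneg (t : ℕ) (r : R) (i : ι) :
    0 ≤ D.noiseRate * psi (D.margin t (D.sample i)) * D.corr t r i ^ 2 :=
  mul_nonneg (mul_pos D.noiseRate_pos (psi_pos _)).le (sq_nonneg _)

theorem coeff_mono (r : R) (i : ι) : Monotone fun t => D.coeff t r i := by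
  refine monotone_nat_of_le_succ fun t => ?_
  rw [D.coeff_succ]
  exact le_add_of_nonneg_right (D.coeff_increment_nonneg t r i)

theorem coeff_nonneg (t : ℕ) (r : R) (i : ι) : 0 ≤ D.coeff t r i := by
  rw [← D.coeff_zero r i]
  exact D.coeff_mono r i (Nat.zero_le t)

theorem coeff_eq_add_sum (r : R) (i : ι) {t₀ t₁ : ℕ} (h : t₀ ≤ t₁) :
    D.coeff t₁ r i = D.coeff t₀ r i +
      ∑ t ∈ Ico t₀ t₁, D.noiseRate * psi (D.margin t (D.sample i)) * D.corr t r i ^ 2 := by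
  induction t₁, h using Nat.le_induction with
  | base => simp
  | succ n hn ih => rw [sum_Ico_succ_top hn, D.coeff_succ, ih]; ring

theorem abs_corr_sub_le (t : ℕ) (r : R) (i : ι) :
    |D.corr t r i - D.corr 0 r i - D.coeff t r i * D.gram i i| ≤ D.interference t r := by
  classical
  have dev_eq : D.corr t r i - D.corr 0 r i - D.coeff t r i * D.gram i i
      = ∑ j ∈ univ.erase i, D.coeff t r j * D.gram i j := by
    rw [D.corr_eq t r i, ← add_sum_erase univ (fun j => D.coeff t r j * D.gram i j) (mem_univ i)]
    ring
  rw [dev_eq]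
  calc |∑ j ∈ univ.erase i, D.coeff t r j * D.gram i j|
      ≤ ∑ j ∈ univ.erase i, |D.coeff t r j * D.gram i j| := abs_sum_le_sum_abs _ _
    _ ≤ ∑ j ∈ univ.erase i, D.mu * D.coeff t r j := by
        refine sum_le_sum fun j hj => ?_
        rw [abs_mul, abs_of_nonneg (D.coeff_nonneg t r j), mul_comm]
        exact mul_le_mul_of_nonneg_right (D.abs_gram_le i j (ne_of_mem_erase hj).symm)
          (D.coeff_nonneg t r j)
    _ ≤ ∑ j, D.mu * D.coeff t r j :=
        sum_le_sum_of_subset_of_nonneg (erase_subset _ _)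
          fun j _ _ => mul_nonneg D.mu_nonneg (D.coeff_nonneg t r j)
    _ = D.interference t r := by rw [interference, mul_sum]

theorem sum_sample_le (s : Finset K) {f : K → ℝ} (hf : ∀ k ∈ s, 0 ≤ f k) :
    ∑ i with D.sample i ∈ s, f (D.sample i) ≤ D.P * ∑ k ∈ s, f k := by
  rw [← sum_fiberwise_of_maps_to (s := {i | D.sample i ∈ s}) (t := s) (g := D.sample)
    (fun i hi => (mem_filter.1 hi).2), mul_sum]
  refine sum_le_sum fun k hk => ?_
  rw [sum_congr rfl (g := fun _ => f k) (fun i hi => by rw [(mem_filter.1 hi).2]),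
    sum_const, nsmul_eq_mul]
  refine mul_le_mul_of_nonneg_right (le_trans ?_ (D.card_patches_le k)) (hf k hk)
  exact_mod_cast card_le_card (filter_subset_filter _ (filter_subset _ _))

theorem card_sample_mem_le (s : Finset K) : (#{i | D.sample i ∈ s} : ℝ) ≤ D.P * #s := by
  simpa using D.sum_sample_le s (f := fun _ => 1) (fun _ _ => zero_le_one)

theorem sum_coeff_le {t : ℕ} {r : R} {Q c : ℝ} (hQ : 0 ≤ Q)
    (hU : ∀ i, D.sample i ∈ D.unlearnable → D.coeff t r i ≤ Q)
    (hL : ∑ i with D.sample i ∈ D.learnable, D.coeff t r i ≤ c) :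
    ∑ i, D.coeff t r i ≤ #D.unlearnable * D.P * Q + c := by
  have unlearnable_le : ∑ i with D.sample i ∈ D.unlearnable, D.coeff t r i
      ≤ #D.unlearnable * D.P * Q :=
    calc ∑ i with D.sample i ∈ D.unlearnable, D.coeff t r i
        ≤ #{i | D.sample i ∈ D.unlearnable} • Q :=
          sum_le_card_nsmul _ _ Q fun i hi => hU i (mem_filter.1 hi).2
      _ ≤ (D.P * #D.unlearnable) * Q := by
          rw [nsmul_eq_mul]
          exact mul_le_mul_of_nonneg_right (D.card_sample_mem_le _) hQ
      _ = #D.unlearnable * D.P * Q := by ring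
  have compl : ∀ i, D.sample i ∉ D.learnable → D.sample i ∈ D.unlearnable :=
    fun i hi => (D.mem_or_mem _).resolve_left hi
  have split := sum_filter_add_sum_filter_not univ (fun i => D.sample i ∈ D.learnable)
    (fun i => D.coeff t r i)
  have rest_le : ∑ i with D.sample i ∉ D.learnable, D.coeff t r i
      ≤ ∑ i with D.sample i ∈ D.unlearnable, D.coeff t r i :=
    sum_le_sum_of_subset_of_nonneg (monotone_filter_right _ fun i _ hi => compl i hi)
      fun i _ _ => D.coeff_nonneg t r i
  linarith

theorem noiseMargin_le {t : ℕ} {k : K} {v : ℝ} (hv : 0 ≤ v)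
    (h : ∀ r i, D.sample i = k → D.corr t r i ≤ v) : D.noiseMargin t k ≤ D.m * D.P * v ^ 3 := by
  have filter_le : ∀ r : R, ∑ i with D.sample i = k, D.corr t r i ^ 3 ≤ D.P * v ^ 3 := fun r =>
    calc ∑ i with D.sample i = k, D.corr t r i ^ 3 ≤ #{i | D.sample i = k} • v ^ 3 :=
          sum_le_card_nsmul _ _ _ fun i hi => cube_le_cube (h r i (mem_filter.1 hi).2)
      _ ≤ D.P * v ^ 3 := by
          rw [nsmul_eq_mul]
          exact mul_le_mul_of_nonneg_right (D.card_patches_le k) (by positivity)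
  calc D.noiseMargin t k ≤ Fintype.card R • (D.P * v ^ 3) :=
        sum_le_card_nsmul _ _ _ fun r _ => filter_le r
    _ = D.m * D.P * v ^ 3 := by rw [nsmul_eq_mul, m, mul_assoc]

theorem corr_cube_le_noiseMargin_add {t : ℕ} {v : ℝ} (hv : 0 ≤ v) (r : R) (i : ι)
    (h : ∀ r' j, D.sample j = D.sample i → -v ≤ D.corr t r' j) :
    D.corr t r i ^ 3 ≤ D.noiseMargin t (D.sample i) + D.m * D.P * v ^ 3 := by
  have shifted_nonneg : ∀ r' j, D.sample j = D.sample i → 0 ≤ D.corr t r' j ^ 3 + v ^ 3 := by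
    intro r' j hj
    linarith [cube_le_cube (h r' j hj), (by ring : (-v) ^ 3 = -v ^ 3)]
  have le_sum : D.corr t r i ^ 3 + v ^ 3 ≤
      ∑ r', ∑ j with D.sample j = D.sample i, (D.corr t r' j ^ 3 + v ^ 3) :=
    calc D.corr t r i ^ 3 + v ^ 3
        ≤ ∑ j with D.sample j = D.sample i, (D.corr t r j ^ 3 + v ^ 3) :=
          single_le_sum (f := fun j => D.corr t r j ^ 3 + v ^ 3)
            (fun j hj => shifted_nonneg r j (mem_filter.1 hj).2) (by simp)
      _ ≤ _ := single_le_sum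
            (f := fun r' => ∑ j with D.sample j = D.sample i, (D.corr t r' j ^ 3 + v ^ 3))
            (fun r' _ => sum_nonneg fun j hj => shifted_nonneg r' j (mem_filter.1 hj).2)
            (mem_univ r)
  have sum_eq : ∑ r', ∑ j with D.sample j = D.sample i, (D.corr t r' j ^ 3 + v ^ 3)
      = D.noiseMargin t (D.sample i) + D.m * (#{j | D.sample j = D.sample i} * v ^ 3) := by
    simp only [sum_add_distrib, sum_const, nsmul_eq_mul, card_univ, noiseMargin, m]
  have shift_le : D.m * (#{j | D.sample j = D.sample i} * v ^ 3) ≤ D.m * (D.P * v ^ 3) := by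
    have := D.m_nonneg
    have := D.card_patches_le (D.sample i)
    gcongr
  have : 0 ≤ v ^ 3 := by positivity
  linarith

theorem neg_le_noiseMargin {t : ℕ} {k : K} {v : ℝ} (hv : 0 ≤ v)
    (h : ∀ r i, D.sample i = k → -v ≤ D.corr t r i) :
    -(D.m * D.P * v ^ 3) ≤ D.noiseMargin t k := by
  have filter_ge : ∀ r : R, -(D.P * v ^ 3) ≤ ∑ i with D.sample i = k, D.corr t r i ^ 3 := fun r =>
    calc -(D.P * v ^ 3) ≤ -((#{i | D.sample i = k} : ℝ) * v ^ 3) :=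
          neg_le_neg (mul_le_mul_of_nonneg_right (D.card_patches_le k) (by positivity))
      _ = #{i | D.sample i = k} • (-v) ^ 3 := by rw [nsmul_eq_mul]; ring
      _ ≤ _ := card_nsmul_le_sum _ _ _ fun i hi => cube_le_cube (h r i (mem_filter.1 hi).2)
  calc -(D.m * D.P * v ^ 3) = Fintype.card R • (-(D.P * v ^ 3)) := by rw [nsmul_eq_mul, m]; ring
    _ ≤ D.noiseMargin t k := card_nsmul_le_sum _ _ _ fun r _ => filter_ge r

theorem le_gain {t : ℕ} {c s : ℝ} (hs : 0 ≤ s)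
    (hψ : ∀ k ∈ D.learnable, c ≤ psi (D.margin t k))
    (h_strength : ∀ k ∈ D.learnable, s ≤ D.strength t k ^ 3) :
    D.signalRate * (#D.learnable * (c * s)) ≤ D.gain t := by
  refine mul_le_mul_of_nonneg_left ?_ D.signalRate_pos.le
  rw [← nsmul_eq_mul]
  exact card_nsmul_le_sum _ _ _ fun k hk =>
    mul_le_mul (hψ k hk) (h_strength k hk) hs (psi_pos _).le

theorem strength_cube_mul_le {t : ℕ} {k : K} (hk : k ∈ D.learnable) {c : ℝ} (hc : 0 ≤ c)
    (h : ∑ r, D.signal t r ^ 3 ≤ c) : D.strength t k ^ 3 * ∑ r, D.signal t r ^ 3 ≤ c :=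
  (mul_le_mul_of_nonneg_left h (D.strength_cube_nonneg hk)).trans
    (mul_le_of_le_one_left hc (D.strength_cube_le_one hk))

end CubicDynamics

/-! ### The early phase -/

/-- A cubic dynamics in the sparse-unlearnable regime. Here `ell ^ 2` is the logarithmic factor of
the regime, `tol` a small constant, `init` the scale of the initial noise correlations, `ratio` the
noise-to-signal ratio and `T` the training horizon. -/
structure SparseDynamics (R ι K : Type*) [Fintype R] [Fintype ι] [Fintype K] [DecidableEq K]
    extends CubicDynamics R ι K where
  ell : ℝ
  tol : ℝ
  init : ℝ
  ratio : ℝ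
  T : ℕ
  ell_ge : 100 ≤ ell
  tol_pos : 0 < tol
  tol_le : tol ≤ 1 / 1000
  init_pos : 0 < init
  ratio_pos : 0 < ratio
  noiseRate_eq : noiseRate = signalRate * ratio ^ 2
  mu_small : mu * toCubicDynamics.N * toCubicDynamics.m * P * ell ^ 3 ≤ tol
  init_small : init * toCubicDynamics.N * toCubicDynamics.m ^ 3 * ell ^ 6 ≤ tol
  width_small : toCubicDynamics.m * P * ell ^ 2 ≤ tol * toCubicDynamics.N
  noiseRate_small : noiseRate * toCubicDynamics.N * ell ^ 2 ≤ tol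
  signalRate_small : signalRate * toCubicDynamics.N * ell ^ 2 ≤ tol
  card_unlearnable_le : (#unlearnable : ℝ) ≤ tol * ell ^ 2
  ratio_cube_small : ratio ^ 3 * ell ^ 6 ≤ tol ^ 3 * #learnable
  horizon_large : 1 ≤ tol * (noiseRate * T * init)
  log_T_le : Real.log T ≤ ell ^ 2
  abs_signal_zero_small : ∀ r, |signal 0 r| * toCubicDynamics.m₃ ^ 2 ≤ tol
  exists_signal_zero : ∃ r, init / (2 * ratio) ≤ signal 0 r
  abs_corr_zero_le : ∀ r i, |corr 0 r i| ≤ 2 * ell * init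
  half_le_gram : ∀ i, 1 / 2 ≤ gram i i
  gram_le : ∀ i, gram i i ≤ 3 / 2
  le_strength : ∀ t, ∀ k ∈ learnable, 1 - tol ≤ strength t k

namespace SparseDynamics

variable {R ι K : Type*} [Fintype R] [Fintype ι] [Fintype K] [DecidableEq K]
  (D : SparseDynamics R ι K)

/-- Upper bound on the initial noise correlations. -/
def corrInit : ℝ := 2 * D.ell * D.init

/-- Interference caused by unlearnable noise coefficients of size one. -/
def leak : ℝ := #D.unlearnable * D.P * D.mu

/-- The bound maintained for the noise correlations of learnable samples while the unlearnable
noise coefficients are at most `Q`. -/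
def corrBound (Q : ℝ) : ℝ := 4 * (D.corrInit + D.leak * Q)

/-- No filter has learned the signal by time `t`. -/
def Early (t : ℕ) : Prop := ∀ r, D.signal t r ≤ 1 / (2 * D.m₃)

theorem one_le_ell : 1 ≤ D.ell := by linarith [D.ell_ge]

theorem ell_pos : 0 < D.ell := by linarith [D.ell_ge]

theorem tol_sq_le : D.tol * D.tol ≤ 1 / 1000 := by nlinarith [D.tol_pos, D.tol_le]

theorem one_le_m : 1 ≤ D.m := by
  obtain ⟨r, -⟩ := D.exists_signal_zero
  have : Nonempty R := ⟨r⟩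
  exact Nat.one_le_cast.2 Fintype.card_pos

theorem one_le_m₃ : 1 ≤ D.m₃ := Real.one_le_rpow D.one_le_m (by norm_num)

theorem one_le_mP : 1 ≤ D.m * D.P := one_le_mul_of_one_le_of_one_le D.one_le_m D.one_le_P

theorem ell_sq_le : D.ell ^ 2 ≤ D.tol * D.N :=
  (le_mul_of_one_le_left (sq_nonneg _) D.one_le_mP).trans D.width_small

theorem one_le_N : 1 ≤ D.N := by
  nlinarith [D.ell_sq_le, one_le_pow₀ (n := 2) D.one_le_ell, D.tol_le, D.N_nonneg]

theorem N_pos : 0 < D.N := by linarith [D.one_le_N]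

theorem one_le_N₃ : 1 ≤ D.N₃ := Real.one_le_rpow D.one_le_N (by norm_num)

theorem one_le_T : 1 ≤ D.T := by
  rw [Nat.one_le_iff_ne_zero]
  intro hT
  have h := D.horizon_large
  norm_num [hT] at h

theorem half_N_le_card_learnable : D.N / 2 ≤ #D.learnable := by
  have unlearnable_le : (#D.unlearnable : ℝ) ≤ D.tol * (D.tol * D.N) :=
    D.card_unlearnable_le.trans (mul_le_mul_of_nonneg_left D.ell_sq_le D.tol_pos.le)
  nlinarith [D.card_add_card, mul_le_mul_of_nonneg_right D.tol_sq_le D.N_nonneg]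

theorem card_learnable_pos : (0 : ℝ) < #D.learnable := by
  linarith [D.half_N_le_card_learnable, D.N_pos]

theorem corrInit_pos : 0 < D.corrInit :=
  mul_pos (mul_pos two_pos D.ell_pos) D.init_pos

theorem leak_nonneg : 0 ≤ D.leak :=
  mul_nonneg (mul_nonneg (Nat.cast_nonneg _) (zero_le_one.trans D.one_le_P)) D.mu_nonneg

theorem four_corrInit_le_corrBound {Q : ℝ} (hQ : 0 ≤ Q) : 4 * D.corrInit ≤ D.corrBound Q := by
  unfold corrBound
  linarith [mul_nonneg D.leak_nonneg hQ]

theorem gain_mul_le_of_psi_le {t : ℕ} {c : ℝ} (hc : 0 ≤ c)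
    (h : ∀ k ∈ D.learnable, psi (D.margin t k) ≤ c) : D.gain t * D.ell ^ 2 ≤ D.tol * c :=
  calc D.gain t * D.ell ^ 2 ≤ D.signalRate * D.N * c * D.ell ^ 2 :=
        mul_le_mul_of_nonneg_right (D.gain_le_of_psi_le hc h) (sq_nonneg _)
    _ = (D.signalRate * D.N * D.ell ^ 2) * c := by ring
    _ ≤ D.tol * c := mul_le_mul_of_nonneg_right D.signalRate_small hc

theorem gain_mul_le (t : ℕ) : D.gain t * D.ell ^ 2 ≤ D.tol := by
  simpa using D.gain_mul_le_of_psi_le (t := t) zero_le_one fun k _ => psi_le_one _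

theorem mu_mul_le : D.mu * (D.N * D.P) ≤ D.tol := by
  have base_nonneg : 0 ≤ D.mu * (D.N * D.P) :=
    mul_nonneg D.mu_nonneg (mul_nonneg D.N_nonneg (zero_le_one.trans D.one_le_P))
  have factor_ge : 1 ≤ D.m * D.ell ^ 3 :=
    one_le_mul_of_one_le_of_one_le D.one_le_m (one_le_pow₀ D.one_le_ell)
  calc D.mu * (D.N * D.P) ≤ D.mu * (D.N * D.P) * (D.m * D.ell ^ 3) :=
        le_mul_of_one_le_right base_nonneg factor_ge
    _ = D.mu * D.N * D.m * D.P * D.ell ^ 3 := by ring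
    _ ≤ D.tol := D.mu_small

theorem scaled_corrInit_le : D.N * D.m * D.corrInit ≤ D.tol := by
  have := D.init_pos
  have := D.N_pos
  have := D.one_le_m
  have hl := D.ell_ge
  have two_ell_le : 2 * D.ell ≤ D.ell ^ 6 := by
    have : 2 ≤ D.ell ^ 5 := (by norm_num : (2 : ℝ) ≤ 100 ^ 5).trans (by gcongr)
    calc 2 * D.ell ≤ D.ell ^ 5 * D.ell := by gcongr
      _ = D.ell ^ 6 := by ring
  have m_le : D.m ≤ D.m ^ 3 := le_self_pow₀ D.one_le_m (by norm_num)
  calc D.N * D.m * (2 * D.ell * D.init) = D.init * D.N * D.m * (2 * D.ell) := by ring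
    _ ≤ D.init * D.N * D.m ^ 3 * D.ell ^ 6 := by gcongr
    _ ≤ D.tol := D.init_small

theorem scaled_leak_le : D.N * D.m * D.leak * D.ell ≤ D.tol ^ 2 := by
  have := D.mu_nonneg
  have := D.N_pos
  have := D.one_le_m
  have := D.one_le_P
  have := D.tol_pos
  have := D.ell_pos
  calc D.N * D.m * (#D.unlearnable * D.P * D.mu) * D.ell
      = #D.unlearnable * (D.mu * D.N * D.m * D.P * D.ell) := by ring
    _ ≤ (D.tol * D.ell ^ 2) * (D.mu * D.N * D.m * D.P * D.ell) :=
        mul_le_mul_of_nonneg_right D.card_unlearnable_le (by positivity)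
    _ = D.tol * (D.mu * D.N * D.m * D.P * D.ell ^ 3) := by ring
    _ ≤ D.tol * D.tol := mul_le_mul_of_nonneg_left D.mu_small D.tol_pos.le
    _ = D.tol ^ 2 := by ring

theorem scaled_corrBound_le {Q : ℝ} (hQ : Q ≤ 3 * D.ell) :
    D.N * D.m * D.corrBound Q ≤ 5 * D.tol := by
  have leak_le : D.N * D.m * D.leak * Q ≤ D.N * D.m * D.leak * (3 * D.ell) :=
    mul_le_mul_of_nonneg_left hQ
      (mul_nonneg (mul_nonneg D.N_nonneg D.m_nonneg) D.leak_nonneg)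
  unfold corrBound
  nlinarith [D.scaled_corrInit_le, D.scaled_leak_le, D.tol_pos, D.tol_le]

theorem le_of_scaled_le {v : ℝ} (hv : 0 ≤ v) (h : D.N * D.m * v ≤ 5 * D.tol) :
    v ≤ 1 / 200 := by
  have : v ≤ D.N * D.m * v := le_mul_of_one_le_left hv
    (one_le_mul_of_one_le_of_one_le D.one_le_N D.one_le_m)
  linarith [D.tol_le]

theorem cube_le_of_scaled_le {v : ℝ} (hv : 0 ≤ v) (h : D.N * D.m * v ≤ 5 * D.tol) :
    D.m * D.P * v ^ 3 ≤ 1 / 100 := by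
  have hN := D.N_pos
  have he := D.tol_pos
  have he' := D.tol_le
  have mP_le : D.m * D.P ≤ D.N := by
    nlinarith [D.width_small, one_le_pow₀ (n := 2) D.one_le_ell, D.one_le_mP]
  have Nv_le : D.N * v ≤ 5 * D.tol :=
    (mul_le_mul_of_nonneg_right (le_mul_of_one_le_right hN.le D.one_le_m) hv).trans h
  calc D.m * D.P * v ^ 3 ≤ D.N * v ^ 3 := by gcongr
    _ = (D.N * v) * v ^ 2 := by ring
    _ ≤ (5 * D.tol) * 1 := by
        gcongr
        nlinarith [D.le_of_scaled_le hv h]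
    _ ≤ 1 / 100 := by linarith

theorem le_strength_cube {t : ℕ} {k : K} (hk : k ∈ D.learnable) :
    99 / 100 ≤ D.strength t k ^ 3 :=
  calc (99 / 100 : ℝ) ≤ (999 / 1000) ^ 3 := by norm_num
    _ ≤ D.strength t k ^ 3 := cube_le_cube (by linarith [D.le_strength t k hk, D.tol_le])

theorem noiseRate_mul_sum_psi_le (t : ℕ) :
    D.noiseRate * ∑ k ∈ D.learnable, psi (D.margin t k) ≤ 5 / 4 * D.ratio ^ 2 * D.gain t := by
  have hs := D.signalRate_pos
  have sum_le : ∑ k ∈ D.learnable, psi (D.margin t k) ≤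
      5 / 4 * ∑ k ∈ D.learnable, psi (D.margin t k) * D.strength t k ^ 3 := by
    rw [mul_sum]
    refine sum_le_sum fun k hk => ?_
    nlinarith [D.le_strength_cube (t := t) hk, psi_pos (D.margin t k)]
  calc D.noiseRate * ∑ k ∈ D.learnable, psi (D.margin t k)
      ≤ D.signalRate * D.ratio ^ 2 *
          (5 / 4 * ∑ k ∈ D.learnable, psi (D.margin t k) * D.strength t k ^ 3) := by
        rw [D.noiseRate_eq]
        gcongr
    _ = 5 / 4 * D.ratio ^ 2 * D.gain t := by unfold CubicDynamics.gain; ring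

theorem sum_signal_cube_le_of_early {t : ℕ} (h : D.Early t) : ∑ r, D.signal t r ^ 3 ≤ 1 / 8 := by
  have := D.one_le_m₃
  calc ∑ r, D.signal t r ^ 3 ≤ Fintype.card R • (1 / (2 * D.m₃)) ^ 3 :=
        sum_le_card_nsmul _ _ _ fun r _ => cube_le_cube (h r)
    _ = D.m₃ ^ 3 * (1 / (2 * D.m₃)) ^ 3 := by rw [nsmul_eq_mul, D.m₃_pow, CubicDynamics.m]
    _ = 1 / 8 := by field_simp; norm_num

theorem gain_mul_signal_le_one {t : ℕ} {r : R} (h : D.signal t r ≤ 2 * D.ell) :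
    D.gain t * D.signal t r ≤ 1 := by
  have hg := D.gain_nonneg t
  calc D.gain t * D.signal t r ≤ D.gain t * (2 * D.ell) := mul_le_mul_of_nonneg_left h hg
    _ ≤ D.gain t * D.ell ^ 2 := mul_le_mul_of_nonneg_left (by nlinarith [D.ell_ge]) hg
    _ ≤ 1 := by linarith [D.gain_mul_le t, D.tol_le]

theorem sum_gain_le {t₀ t₁ : ℕ} (h01 : t₀ ≤ t₁) {r : R} {c : ℝ} (hc : 0 < c)
    (hr : c ≤ D.signal t₀ r) (hcap : ∀ t < t₁, D.signal t r ≤ 2 * D.ell) :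
    ∑ t ∈ Ico t₀ t₁, D.gain t ≤ 2 / c :=
  (sum_rate_le (b := fun t => D.signal t r) h01 (hc.trans_le hr) D.gain_nonneg
    (fun t _ => (D.signal_succ t r).ge) fun t ht => D.gain_mul_signal_le_one (hcap t ht)).trans
    (by gcongr)

theorem signal_le_of_early {t : ℕ} (h : D.Early t) (r : R) : D.signal t r ≤ 2 * D.ell := by
  have : 1 / (2 * D.m₃) ≤ 1 := div_le_one_of_le₀ (by linarith [D.one_le_m₃])
    (by linarith [D.one_le_m₃])
  linarith [h r, D.ell_ge]

theorem abs_corr_le (t : ℕ) (r : R) (i : ι) :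
    |D.corr t r i| ≤ D.corrInit + 3 / 2 * D.coeff t r i + D.interference t r := by
  have own_nonneg : 0 ≤ D.coeff t r i * D.gram i i :=
    mul_nonneg (D.coeff_nonneg t r i) (by linarith [D.half_le_gram i])
  have own_le : D.coeff t r i * D.gram i i ≤ D.coeff t r i * (3 / 2) :=
    mul_le_mul_of_nonneg_left (D.gram_le i) (D.coeff_nonneg t r i)
  have h_init := abs_le.1 (D.abs_corr_zero_le r i)
  have h_dev := abs_le.1 (D.abs_corr_sub_le t r i)
  unfold corrInit
  rw [abs_le]
  constructor <;> linarith

theorem quarter_le_psi_of_early {t : ℕ} {k : K} (hk : k ∈ D.learnable) (hE : D.Early t)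
    (h_corr : ∀ r i, |D.corr t r i| ≤ 2 * D.corrInit) : 1 / 4 ≤ psi (D.margin t k) := by
  have hA := D.corrInit_pos
  have signal_part := D.strength_cube_mul_le (t := t) hk (by norm_num)
    (D.sum_signal_cube_le_of_early hE)
  have noise_part := D.noiseMargin_le (k := k) (by positivity)
    fun r i _ => (abs_le.1 (h_corr r i)).2
  have noise_small := D.cube_le_of_scaled_le (v := 2 * D.corrInit) (by positivity)
    (by linarith [D.scaled_corrInit_le, D.tol_pos])
  apply quarter_le_psi
  rw [D.margin_of_learnable hk]
  linarith

theorem early_time_le {s : ℕ} (hE : ∀ t < s, D.Early t)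
    (hψ : ∀ t < s, ∀ k ∈ D.learnable, 1 / 4 ≤ psi (D.margin t k)) :
    s * (D.signalRate * #D.learnable) ≤ 20 * D.ratio / D.init := by
  have := D.ratio_pos
  have := D.init_pos
  obtain ⟨r, hr⟩ := D.exists_signal_zero
  have total_gain_le := D.sum_gain_le (Nat.zero_le s) (by positivity) hr
    fun t ht => D.signal_le_of_early (hE t ht) r
  have total_gain_ge := card_nsmul_le_sum (Ico 0 s) D.gain
    (D.signalRate * (#D.learnable * (1 / 4 * (4 / 5)))) fun t ht =>
      D.le_gain (by norm_num) (hψ t (mem_Ico.1 ht).2)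
        fun k hk => by linarith [D.le_strength_cube (t := t) hk]
  rw [Nat.card_Ico, Nat.sub_zero, nsmul_eq_mul] at total_gain_ge
  calc s * (D.signalRate * #D.learnable) ≤ 5 * (2 / (D.init / (2 * D.ratio))) := by linarith
    _ = 20 * D.ratio / D.init := by field_simp; norm_num

theorem early_coeff_le {s : ℕ}
    (h_time : s * (D.signalRate * #D.learnable) ≤ 20 * D.ratio / D.init)
    (h_corr : ∀ t < s, ∀ r i, |D.corr t r i| ≤ 2 * D.corrInit) (r : R) (i : ι) :
    D.coeff s r i ≤ D.tol * D.corrInit := by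
  have hA := D.corrInit_pos
  have hx := D.ratio_pos
  have hs := D.init_pos
  have hl := D.ell_pos
  have he := D.tol_pos
  have hcL := D.card_learnable_pos
  have increment_le : ∀ t ∈ Ico 0 s, D.noiseRate * psi (D.margin t (D.sample i)) *
      D.corr t r i ^ 2 ≤ D.noiseRate * (2 * D.corrInit) ^ 2 := fun t ht =>
    mul_le_mul (mul_le_of_le_one_right D.noiseRate_pos.le (psi_le_one _))
      (sq_le_sq' (abs_le.1 (h_corr t (mem_Ico.1 ht).2 r i)).1
        (abs_le.1 (h_corr t (mem_Ico.1 ht).2 r i)).2) (sq_nonneg _) D.noiseRate_pos.le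
  have time_le : (s : ℝ) * D.signalRate ≤ 20 * D.ratio / D.init / #D.learnable := by
    rw [le_div_iff₀ hcL]; linarith
  have ratio_le : D.ratio ^ 3 / #D.learnable ≤ D.tol ^ 3 / D.ell ^ 6 := by
    rw [div_le_div_iff₀ hcL (by positivity)]; exact D.ratio_cube_small
  calc D.coeff s r i
      = ∑ t ∈ Ico 0 s, D.noiseRate * psi (D.margin t (D.sample i)) * D.corr t r i ^ 2 := by
        rw [D.coeff_eq_add_sum r i (Nat.zero_le s), D.coeff_zero, zero_add]
    _ ≤ s * (D.noiseRate * (2 * D.corrInit) ^ 2) := by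
        simpa using sum_le_card_nsmul _ _ _ increment_le
    _ = (s * D.signalRate) * (D.ratio ^ 2 * (4 * D.corrInit ^ 2)) := by
        rw [D.noiseRate_eq]; ring
    _ ≤ (20 * D.ratio / D.init / #D.learnable) * (D.ratio ^ 2 * (4 * D.corrInit ^ 2)) := by gcongr
    _ = (D.ratio ^ 3 / #D.learnable) * (160 * D.ell * D.corrInit) := by
        unfold corrInit; field_simp; ring
    _ ≤ (D.tol ^ 3 / D.ell ^ 6) * (160 * D.ell * D.corrInit) := by gcongr
    _ = D.tol * D.corrInit * (160 * D.tol ^ 2 / D.ell ^ 5) := by field_simp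
    _ ≤ D.tol * D.corrInit := by
        refine mul_le_of_le_one_right (by positivity) (div_le_one_of_le₀ ?_ (by positivity))
        nlinarith [one_le_pow₀ (n := 5) D.one_le_ell, D.tol_sq_le]

theorem abs_corr_le_of_coeff_le {s : ℕ} (h : ∀ r i, D.coeff s r i ≤ D.tol * D.corrInit)
    (r : R) (i : ι) : |D.corr s r i| ≤ 2 * D.corrInit := by
  have hA := D.corrInit_pos
  have he := D.tol_pos
  have he' := D.tol_le
  have sum_le := D.sum_coeff_le (t := s) (r := r) (by positivity) (fun i _ => h r i)
    (sum_le_card_nsmul _ _ _ fun i _ => h r i)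
  have card_le : (#{i | D.sample i ∈ D.learnable} : ℝ) * (D.tol * D.corrInit) ≤
      D.P * #D.learnable * (D.tol * D.corrInit) :=
    mul_le_mul_of_nonneg_right (D.card_sample_mem_le _) (by positivity)
  have interference_le : D.interference s r ≤ D.tol * (D.tol * D.corrInit) :=
    calc D.interference s r ≤ D.mu * ((#D.learnable + #D.unlearnable) * D.P *
          (D.tol * D.corrInit)) := by
          rw [nsmul_eq_mul] at sum_le
          exact mul_le_mul_of_nonneg_left (by linarith) D.mu_nonneg
      _ = D.mu * (D.N * D.P) * (D.tol * D.corrInit) := by rw [D.card_add_card]; ring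
      _ ≤ D.tol * (D.tol * D.corrInit) :=
          mul_le_mul_of_nonneg_right D.mu_mul_le (by positivity)
  have tol_corrInit_le : D.tol * D.corrInit ≤ 1 / 1000 * D.corrInit := by gcongr
  have tol_tol_corrInit_le : D.tol * (D.tol * D.corrInit) ≤ D.tol * D.corrInit :=
    mul_le_of_le_one_left (by positivity) (by linarith)
  linarith [D.abs_corr_le s r i, h r i]

theorem abs_corr_le_of_early (s : ℕ) :
    (∀ t < s, D.Early t) → ∀ r i, |D.corr s r i| ≤ 2 * D.corrInit := by
  induction s using Nat.strong_induction_on with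
  | _ s ih =>
    intro hE
    have h_corr : ∀ t < s, ∀ r i, |D.corr t r i| ≤ 2 * D.corrInit := fun t ht =>
      ih t ht fun u hu => hE u (hu.trans ht)
    have h_time := D.early_time_le hE fun t ht _ hk =>
      D.quarter_le_psi_of_early hk (hE t ht) (h_corr t ht)
    exact D.abs_corr_le_of_coeff_le (D.early_coeff_le h_time h_corr)

theorem time_le_of_early {s : ℕ} (hE : ∀ t < s, D.Early t) :
    s * (D.signalRate * #D.learnable) ≤ 20 * D.ratio / D.init :=
  D.early_time_le hE fun t ht _ hk => D.quarter_le_psi_of_early hk (hE t ht)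
    (D.abs_corr_le_of_early t fun u hu => hE u (hu.trans ht))

theorem coeff_le_of_early {s : ℕ} (hE : ∀ t < s, D.Early t) (r : R) (i : ι) :
    D.coeff s r i ≤ D.tol * D.corrInit :=
  D.early_coeff_le (D.time_le_of_early hE)
    (fun t ht => D.abs_corr_le_of_early t fun u hu => hE u (hu.trans ht)) r i

/-! ### Bounds under capped signals -/

theorem ratio_small : D.ratio * D.ell ^ 2 ≤ D.tol * D.N₃ := by
  have := D.ratio_pos
  have := D.tol_pos
  have := D.one_le_N₃
  refine (pow_le_pow_iff_left₀ (by positivity) (by positivity) (three_ne_zero)).1 ?_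
  calc (D.ratio * D.ell ^ 2) ^ 3 = D.ratio ^ 3 * D.ell ^ 6 := by ring
    _ ≤ D.tol ^ 3 * #D.learnable := D.ratio_cube_small
    _ ≤ D.tol ^ 3 * D.N := by gcongr; exact D.card_learnable_le
    _ = (D.tol * D.N₃) ^ 3 := by rw [mul_pow, D.N₃_pow]

theorem ratio_sq_mul_le_of_scaled_le {v : ℝ} (hv : 0 ≤ v) (h : D.N * D.m * v ≤ 5 * D.tol) :
    5 * D.m₃ * D.ratio ^ 2 * v ≤ D.tol := by
  have := D.ratio_pos
  have := D.tol_pos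
  have := D.m_nonneg
  have := D.one_le_m₃
  have := D.one_le_N₃
  have ratio_le : D.ratio ≤ D.tol * D.N₃ :=
    (le_mul_of_one_le_right D.ratio_pos.le (one_le_pow₀ D.one_le_ell)).trans D.ratio_small
  have N₃_sq_le : D.N₃ ^ 2 ≤ D.N := by
    rw [← D.N₃_pow]; exact pow_le_pow_right₀ D.one_le_N₃ (by norm_num)
  have m₃_le : D.m₃ ≤ D.m := by
    rw [← D.m₃_pow]; exact le_self_pow₀ D.one_le_m₃ (by norm_num)
  calc 5 * D.m₃ * D.ratio ^ 2 * v ≤ 5 * D.m₃ * (D.tol * D.N₃) ^ 2 * v := by gcongr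
    _ = 5 * D.m₃ * (D.tol ^ 2 * D.N₃ ^ 2) * v := by ring
    _ ≤ 5 * D.m * (D.tol ^ 2 * D.N) * v := by gcongr
    _ = 5 * D.tol ^ 2 * (D.N * D.m * v) := by ring
    _ ≤ 5 * D.tol ^ 2 * (5 * D.tol) := by gcongr
    _ = D.tol * (25 * (D.tol * D.tol)) := by ring
    _ ≤ D.tol := mul_le_of_le_one_right D.tol_pos.le (by linarith [D.tol_sq_le])

theorem exists_late_start {s : ℕ} (hcap : ∀ t < s, ∀ r, D.signal t r ≤ 2 * D.ell) :
    ∃ t₁ ≤ s, (∀ t < t₁, D.Early t) ∧ ∑ t ∈ Ico t₁ s, D.gain t ≤ 4 * D.m₃ := by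
  classical
  have hm := D.one_le_m₃
  have hex : ∃ t, t = s ∨ ¬ D.Early t := ⟨s, Or.inl rfl⟩
  have first_le : Nat.find hex ≤ s := Nat.find_min' hex (Or.inl rfl)
  refine ⟨Nat.find hex, first_le,
    fun t ht => not_not.1 (not_or.1 (Nat.find_min hex ht)).2, ?_⟩
  rcases Nat.find_spec hex with h_end | h_late
  · rw [h_end, Ico_self, sum_empty]
    positivity
  · obtain ⟨r, hr⟩ := not_forall.1 h_late
    calc ∑ t ∈ Ico (Nat.find hex) s, D.gain t ≤ 2 / (1 / (2 * D.m₃)) :=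
          D.sum_gain_le first_le (by positivity) (not_le.1 hr).le fun t ht => hcap t ht r
      _ = 4 * D.m₃ := by field_simp; norm_num

theorem sum_noiseRate_mul_sum_psi_le {t₀ t₁ : ℕ}
    (h : ∑ t ∈ Ico t₀ t₁, D.gain t ≤ 4 * D.m₃) :
    ∑ t ∈ Ico t₀ t₁, D.noiseRate * ∑ k ∈ D.learnable, psi (D.margin t k) ≤
      5 * D.m₃ * D.ratio ^ 2 :=
  calc ∑ t ∈ Ico t₀ t₁, D.noiseRate * ∑ k ∈ D.learnable, psi (D.margin t k)
      ≤ ∑ t ∈ Ico t₀ t₁, 5 / 4 * D.ratio ^ 2 * D.gain t :=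
        sum_le_sum fun t _ => D.noiseRate_mul_sum_psi_le t
    _ = 5 / 4 * D.ratio ^ 2 * ∑ t ∈ Ico t₀ t₁, D.gain t := by rw [mul_sum]
    _ ≤ 5 / 4 * D.ratio ^ 2 * (4 * D.m₃) := by gcongr
    _ = 5 * D.m₃ * D.ratio ^ 2 := by ring

theorem coeff_le_add_sum_psi {t₁ s : ℕ} (h : t₁ ≤ s) (hE : ∀ t < t₁, D.Early t) {v : ℝ}
    {r : R} {i : ι} (h_corr : ∀ t < s, |D.corr t r i| ≤ v) :
    D.coeff s r i ≤ D.tol * D.corrInit +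
      v ^ 2 * ∑ t ∈ Ico t₁ s, D.noiseRate * psi (D.margin t (D.sample i)) := by
  rw [D.coeff_eq_add_sum r i h, mul_sum]
  refine add_le_add (D.coeff_le_of_early hE r i) (sum_le_sum fun t ht => ?_)
  rw [mul_comm (v ^ 2)]
  have corr_le := abs_le.1 (h_corr t (mem_Ico.1 ht).2)
  exact mul_le_mul_of_nonneg_left (sq_le_sq' corr_le.1 corr_le.2)
    (mul_pos D.noiseRate_pos (psi_pos _)).le

/- After the early phase the total gain is at most `4 * m₃`, and the learnable noise coefficients
grow at a rate `ratio ^ 2 * v ^ 2` relative to the gain. -/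
theorem exists_coeff_le_weight {s : ℕ} (hcap : ∀ t < s, ∀ r, D.signal t r ≤ 2 * D.ell) {v : ℝ}
    (hv : 0 ≤ v) (h_scaled : D.N * D.m * v ≤ 5 * D.tol)
    (h_corr : ∀ t < s, ∀ r i, D.sample i ∈ D.learnable → |D.corr t r i| ≤ v) :
    ∃ w : K → ℝ, (∀ k, 0 ≤ w k) ∧ ∑ k ∈ D.learnable, w k ≤ D.tol * v ∧
      ∀ r i, D.sample i ∈ D.learnable → D.coeff s r i ≤ D.tol * D.corrInit + w (D.sample i) := by
  obtain ⟨t₁, ht₁, hE, h_gain⟩ := D.exists_late_start hcap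
  refine ⟨fun k => v ^ 2 * ∑ t ∈ Ico t₁ s, D.noiseRate * psi (D.margin t k), fun k => ?_, ?_,
    fun r i hi => D.coeff_le_add_sum_psi ht₁ hE fun t ht => h_corr t ht r i hi⟩
  · exact mul_nonneg (sq_nonneg _) <| sum_nonneg fun t _ =>
      (mul_pos D.noiseRate_pos (psi_pos _)).le
  · calc ∑ k ∈ D.learnable, v ^ 2 * ∑ t ∈ Ico t₁ s, D.noiseRate * psi (D.margin t k)
        = v ^ 2 * ∑ t ∈ Ico t₁ s, D.noiseRate * ∑ k ∈ D.learnable, psi (D.margin t k) := by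
          simp only [← mul_sum]; rw [sum_comm]
      _ ≤ v ^ 2 * (5 * D.m₃ * D.ratio ^ 2) :=
          mul_le_mul_of_nonneg_left (D.sum_noiseRate_mul_sum_psi_le h_gain) (sq_nonneg _)
      _ = (5 * D.m₃ * D.ratio ^ 2 * v) * v := by ring
      _ ≤ D.tol * v := mul_le_mul_of_nonneg_right (D.ratio_sq_mul_le_of_scaled_le hv h_scaled) hv

theorem learnable_coeff_le {s : ℕ} (hcap : ∀ t < s, ∀ r, D.signal t r ≤ 2 * D.ell) {v : ℝ}
    (hv : 0 ≤ v) (h_scaled : D.N * D.m * v ≤ 5 * D.tol)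
    (h_corr : ∀ t < s, ∀ r i, D.sample i ∈ D.learnable → |D.corr t r i| ≤ v) (r : R) :
    (∀ i, D.sample i ∈ D.learnable → D.coeff s r i ≤ D.tol * D.corrInit + D.tol * v) ∧
      ∑ i with D.sample i ∈ D.learnable, D.coeff s r i ≤
        D.N * D.P * (D.tol * D.corrInit) + D.P * (D.tol * v) := by
  obtain ⟨w, hw, sum_le, coeff_le⟩ := D.exists_coeff_le_weight hcap hv h_scaled h_corr
  have hP := zero_le_one.trans D.one_le_P
  constructor
  · intro i hi
    linarith [coeff_le r i hi, single_le_sum (f := w) (fun k _ => hw k) hi]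
  · calc ∑ i with D.sample i ∈ D.learnable, D.coeff s r i
        ≤ ∑ i with D.sample i ∈ D.learnable, (D.tol * D.corrInit + w (D.sample i)) :=
          sum_le_sum fun i hi => coeff_le r i (mem_filter.1 hi).2
      _ = #{i | D.sample i ∈ D.learnable} * (D.tol * D.corrInit) +
            ∑ i with D.sample i ∈ D.learnable, w (D.sample i) := by
          rw [sum_add_distrib, sum_const, nsmul_eq_mul]
      _ ≤ D.N * D.P * (D.tol * D.corrInit) + D.P * (D.tol * v) := by
          refine add_le_add (mul_le_mul_of_nonneg_right ?_
            (mul_pos D.tol_pos D.corrInit_pos).le)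
            ((D.sum_sample_le D.learnable fun k _ => hw k).trans
              (mul_le_mul_of_nonneg_left sum_le hP))
          rw [mul_comm D.N]
          exact (D.card_sample_mem_le _).trans (mul_le_mul_of_nonneg_left D.card_learnable_le hP)

/-- Up to time `t` the signals are capped by `2 * ell`, and the unlearnable noise coefficients by
`Q ≤ 3 * ell`. -/
structure Capped (t : ℕ) (Q : ℝ) : Prop where
  nonneg : 0 ≤ Q
  le : Q ≤ 3 * D.ell
  signal_le : ∀ s < t, ∀ r, D.signal s r ≤ 2 * D.ell
  coeff_le : ∀ r i, D.sample i ∈ D.unlearnable → D.coeff t r i ≤ Q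

section

variable {D} {t : ℕ} {Q : ℝ}

theorem Capped.mono {s : ℕ} (h : D.Capped t Q) (hst : s ≤ t) : D.Capped s Q where
  nonneg := h.nonneg
  le := h.le
  signal_le u hu := h.signal_le u (hu.trans_le hst)
  coeff_le r i hi := (D.coeff_mono r i hst).trans (h.coeff_le r i hi)

theorem Capped.corrBound_pos (h : D.Capped t Q) : 0 < D.corrBound Q := by
  linarith [D.four_corrInit_le_corrBound h.nonneg, D.corrInit_pos]

theorem Capped.interference_le_of_abs_corr_le (h : D.Capped t Q)
    (h_corr : ∀ s < t, ∀ r i, D.sample i ∈ D.learnable → |D.corr s r i| ≤ D.corrBound Q)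
    (r : R) : D.interference t r ≤ D.leak * Q + D.mu * (D.N * D.P) * D.corrBound Q := by
  have hY := h.corrBound_pos
  have hA := D.corrInit_pos
  have he := D.tol_pos
  have hP := zero_lt_one.trans_le D.one_le_P
  have sum_le := D.sum_coeff_le h.nonneg (h.coeff_le r)
    (D.learnable_coeff_le h.signal_le hY.le (D.scaled_corrBound_le h.le) h_corr r).2
  have learnable_part : D.N * D.P * (D.tol * D.corrInit) + D.P * (D.tol * D.corrBound Q) ≤
      D.N * D.P * D.corrBound Q :=
    calc D.N * D.P * (D.tol * D.corrInit) + D.P * (D.tol * D.corrBound Q)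
        ≤ D.N * D.P * (D.tol * D.corrInit) + D.N * D.P * (D.tol * D.corrBound Q) := by
          gcongr
          exact le_mul_of_one_le_left hP.le D.one_le_N
      _ = D.N * D.P * (D.tol * (D.corrInit + D.corrBound Q)) := by ring
      _ ≤ D.N * D.P * D.corrBound Q := by
          refine mul_le_mul_of_nonneg_left ?_ (mul_nonneg D.N_nonneg hP.le)
          nlinarith [D.tol_le, D.four_corrInit_le_corrBound h.nonneg]
  calc D.interference t r ≤ D.mu * (#D.unlearnable * D.P * Q + D.N * D.P * D.corrBound Q) :=
        mul_le_mul_of_nonneg_left (by linarith) D.mu_nonneg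
    _ = D.leak * Q + D.mu * (D.N * D.P) * D.corrBound Q := by unfold leak; ring

theorem half_corrBound_ge (hQ : 0 ≤ Q) :
    D.leak * Q + D.mu * (D.N * D.P) * D.corrBound Q ≤ D.corrBound Q / 2 := by
  have hA := D.corrInit_pos
  have hY := D.four_corrInit_le_corrBound hQ
  have spill_le : D.mu * (D.N * D.P) * D.corrBound Q ≤ 1 / 1000 * D.corrBound Q :=
    mul_le_mul_of_nonneg_right (D.mu_mul_le.trans D.tol_le) (by linarith)
  have : D.corrBound Q = 4 * (D.corrInit + D.leak * Q) := rfl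
  linarith

theorem Capped.abs_corr_le (h : D.Capped t Q) :
    ∀ r i, D.sample i ∈ D.learnable → |D.corr t r i| ≤ D.corrBound Q := by
  induction t using Nat.strong_induction_on with
  | _ t ih =>
    intro r i hi
    have h_corr := fun s hs => ih s hs (h.mono (le_of_lt hs))
    have hA := D.corrInit_pos
    have hY := D.four_corrInit_le_corrBound h.nonneg
    have own := (D.learnable_coeff_le h.signal_le h.corrBound_pos.le
      (D.scaled_corrBound_le h.le) h_corr r).1 i hi
    have cross := (h.interference_le_of_abs_corr_le h_corr r).trans (half_corrBound_ge h.nonneg)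
    nlinarith [D.abs_corr_le t r i, D.tol_le]

theorem Capped.interference_le (h : D.Capped t Q) (r : R) :
    D.interference t r ≤ D.leak * Q + D.mu * (D.N * D.P) * D.corrBound Q :=
  h.interference_le_of_abs_corr_le (fun _ hs => (h.mono (le_of_lt hs)).abs_corr_le) r

theorem Capped.interference_le_half (h : D.Capped t Q) (r : R) :
    D.interference t r ≤ D.corrBound Q / 2 :=
  (h.interference_le r).trans (half_corrBound_ge h.nonneg)

theorem Capped.abs_corr_sub_coeff_mul_gram_le (h : D.Capped t Q) (r : R) (i : ι) :
    |D.corr t r i - D.coeff t r i * D.gram i i| ≤ D.corrBound Q := by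
  have h_dev := abs_le.1 (D.abs_corr_sub_le t r i)
  have h_init := abs_le.1 (D.abs_corr_zero_le r i)
  have h_cross := h.interference_le_half r
  have hY := D.four_corrInit_le_corrBound h.nonneg
  have hA := D.corrInit_pos
  have : D.corrInit = 2 * D.ell * D.init := rfl
  rw [abs_le]
  constructor <;> linarith

end

theorem T_pos : (0 : ℝ) < D.T := Nat.cast_pos.2 D.one_le_T

theorem psi_le_inv_T {z : ℝ} (hz : D.ell ^ 2 ≤ z) : psi z ≤ 1 / D.T :=
  calc psi z ≤ Real.exp (-z) := psi_le_exp_neg z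
    _ ≤ Real.exp (-Real.log D.T) := Real.exp_le_exp.2 (by linarith [D.log_T_le])
    _ = 1 / D.T := by rw [Real.exp_neg, Real.exp_log D.T_pos, one_div]

theorem ell_sq_add_one_le : D.ell ^ 2 + 1 ≤ D.ell ^ 3 / 64 := by
  have hl := D.ell_ge
  have cube_ge : 100 * D.ell ^ 2 ≤ D.ell ^ 3 := by
    rw [pow_succ D.ell 2, mul_comm]
    exact mul_le_mul_of_nonneg_left hl (sq_nonneg _)
  nlinarith

theorem neg_tol_div_le_signal (t : ℕ) (r : R) : -(D.tol / D.m₃) ≤ D.signal t r := by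
  have hm := D.one_le_m₃
  have abs_le_div : |D.signal 0 r| ≤ D.tol / D.m₃ := by
    rw [le_div_iff₀ (by linarith)]
    exact (mul_le_mul_of_nonneg_left (le_self_pow₀ hm two_ne_zero) (abs_nonneg _)).trans
      (D.abs_signal_zero_small r)
  exact (abs_le.1 abs_le_div).1.trans (D.signal_mono r (Nat.zero_le t))

theorem signal_zero_le (r : R) : D.signal 0 r ≤ D.tol :=
  (le_abs_self _).trans <| (le_mul_of_one_le_right (abs_nonneg _)
    (one_le_pow₀ D.one_le_m₃)).trans (D.abs_signal_zero_small r)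

theorem neg_le_signal_cube (t : ℕ) (r : R) : -(1 / 1000 / D.m) ≤ D.signal t r ^ 3 := by
  have he := D.tol_pos
  have hm := D.one_le_m
  calc -(1 / 1000 / D.m) ≤ -(D.tol ^ 3 / D.m) := by
        gcongr
        nlinarith [D.tol_le, D.tol_sq_le]
    _ = (-(D.tol / D.m₃)) ^ 3 := by rw [← D.m₃_pow]; ring
    _ ≤ D.signal t r ^ 3 := cube_le_cube (D.neg_tol_div_le_signal t r)

theorem signal_cube_le_sum_add (t : ℕ) (r : R) :
    D.signal t r ^ 3 ≤ ∑ r, D.signal t r ^ 3 + 1 / 1000 := by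
  have hm := D.one_le_m
  have shifted_le := single_le_sum (f := fun r => D.signal t r ^ 3 + 1 / 1000 / D.m)
    (fun r _ => by linarith [D.neg_le_signal_cube t r]) (mem_univ r)
  have total_shift : ∑ _r : R, 1 / 1000 / D.m = 1 / 1000 := by
    rw [sum_const, nsmul_eq_mul]
    exact mul_div_cancel₀ _ (zero_lt_one.trans_le hm).ne'
  rw [sum_add_distrib, total_shift] at shifted_le
  have : 0 ≤ 1 / 1000 / D.m := by positivity
  linarith

section

variable {D} {t : ℕ} {Q : ℝ}

theorem Capped.corrBound_le (h : D.Capped t Q) : D.corrBound Q ≤ 1 / 200 :=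
  D.le_of_scaled_le h.corrBound_pos.le (D.scaled_corrBound_le h.le)

theorem Capped.corrBound_cube_le (h : D.Capped t Q) :
    D.m * D.P * D.corrBound Q ^ 3 ≤ 1 / 100 :=
  D.cube_le_of_scaled_le h.corrBound_pos.le (D.scaled_corrBound_le h.le)

theorem Capped.coeff_div_two_sub_le_corr (h : D.Capped t Q) (r : R) (i : ι) :
    D.coeff t r i / 2 - D.corrBound Q ≤ D.corr t r i := by
  have own_ge : D.coeff t r i * (1 / 2) ≤ D.coeff t r i * D.gram i i :=
    mul_le_mul_of_nonneg_left (D.half_le_gram i) (D.coeff_nonneg t r i)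
  linarith [(abs_le.1 (h.abs_corr_sub_coeff_mul_gram_le r i)).1]

theorem Capped.neg_corrBound_le_corr (h : D.Capped t Q) (r : R) (i : ι) :
    -D.corrBound Q ≤ D.corr t r i := by
  linarith [h.coeff_div_two_sub_le_corr r i, D.coeff_nonneg t r i]

theorem Capped.neg_le_noiseMargin (h : D.Capped t Q) (k : K) : -(1 / 100) ≤ D.noiseMargin t k :=
  (neg_le_neg h.corrBound_cube_le).trans
    (D.neg_le_noiseMargin h.corrBound_pos.le fun r i _ => h.neg_corrBound_le_corr r i)

theorem Capped.ell_sq_le_margin_of_le_signal (h : D.Capped t Q) {r : R}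
    (hr : D.ell ≤ D.signal t r) {k : K} (hk : k ∈ D.learnable) : D.ell ^ 2 ≤ D.margin t k := by
  have signal_part : D.ell ^ 3 - 1 / 1000 ≤ ∑ r, D.signal t r ^ 3 := by
    linarith [D.signal_cube_le_sum_add t r, cube_le_cube hr]
  rw [D.margin_of_learnable hk]
  nlinarith [h.neg_le_noiseMargin k, D.le_strength_cube (t := t) hk, D.ell_sq_add_one_le,
    sq_nonneg D.ell]

theorem Capped.ell_sq_le_margin_of_le_coeff (h : D.Capped t Q) {r : R} {i : ι}
    (hi : D.sample i ∈ D.unlearnable) (hr : D.ell ≤ D.coeff t r i) :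
    D.ell ^ 2 ≤ D.margin t (D.sample i) := by
  have corr_ge : D.ell / 4 ≤ D.corr t r i := by
    linarith [h.coeff_div_two_sub_le_corr r i, h.corrBound_le, D.ell_ge]
  have noise_part := D.corr_cube_le_noiseMargin_add h.corrBound_pos.le r i
    fun r' j _ => h.neg_corrBound_le_corr r' j
  rw [D.margin_of_unlearnable hi]
  have : (D.ell / 4) ^ 3 = D.ell ^ 3 / 64 := by ring
  linarith [cube_le_cube corr_ge, D.ell_sq_add_one_le, h.corrBound_cube_le]

theorem Capped.signal_succ_le (h : D.Capped t Q) {r : R} (hr : D.signal t r ≤ 2 * D.ell) :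
    D.signal (t + 1) r ≤ max (D.ell + 1) (D.signal t r + 1 / D.T) := by
  have hl := D.ell_ge
  have he := D.tol_pos
  have he' := D.tol_le
  have hg := D.gain_nonneg t
  have hT := D.T_pos
  rw [D.signal_succ]
  rcases le_total (D.signal t r) D.ell with h_small | h_large
  · have tol_div_le : D.tol / D.m₃ ≤ D.tol := div_le_self he.le D.one_le_m₃
    have sq_le : D.signal t r ^ 2 ≤ D.ell ^ 2 :=
      sq_le_sq' (by linarith [D.neg_tol_div_le_signal t r]) h_small
    refine le_max_of_le_left ?_
    linarith [mul_le_mul_of_nonneg_left sq_le hg, D.gain_mul_le t]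
  · have gain_le := D.gain_mul_le_of_psi_le (t := t) (one_div_pos.2 hT).le fun k hk =>
      D.psi_le_inv_T (h.ell_sq_le_margin_of_le_signal h_large hk)
    have sq_le : D.signal t r ^ 2 ≤ 4 * D.ell ^ 2 := by nlinarith
    refine le_max_of_le_right ?_
    have : 4 * (D.tol * (1 / D.T)) ≤ 1 / D.T := by nlinarith [one_div_pos.2 hT]
    linarith [mul_le_mul_of_nonneg_left sq_le hg]

theorem Capped.coeff_succ_le (h : D.Capped t (D.ell + 2)) {r : R} {i : ι}
    (hi : D.sample i ∈ D.unlearnable) :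
    D.coeff (t + 1) r i ≤ max (D.ell + 1) (D.coeff t r i + 1 / D.T) := by
  have hl := D.ell_ge
  have he' := D.tol_le
  have hν := D.noiseRate_pos
  have corr_ge : -(2 * D.ell) ≤ D.corr t r i := by
    linarith [h.neg_corrBound_le_corr r i, h.corrBound_le]
  have corr_le : D.corr t r i ≤ 2 * D.ell := by
    linarith [(abs_le.1 (h.abs_corr_sub_coeff_mul_gram_le r i)).2, h.corrBound_le,
      h.coeff_le r i hi, mul_le_mul_of_nonneg_left (D.gram_le i) (D.coeff_nonneg t r i)]
  have rate_le : D.noiseRate * D.ell ^ 2 ≤ D.tol :=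
    (mul_le_mul_of_nonneg_right (le_mul_of_one_le_right hν.le D.one_le_N) (sq_nonneg _)).trans
      D.noiseRate_small
  have step_le : D.noiseRate * D.corr t r i ^ 2 ≤ 1 :=
    calc D.noiseRate * D.corr t r i ^ 2 ≤ D.noiseRate * (2 * D.ell) ^ 2 :=
          mul_le_mul_of_nonneg_left (sq_le_sq' corr_ge corr_le) hν.le
      _ = 4 * (D.noiseRate * D.ell ^ 2) := by ring
      _ ≤ 1 := by linarith
  have increment_le : D.noiseRate * psi (D.margin t (D.sample i)) * D.corr t r i ^ 2 ≤
      psi (D.margin t (D.sample i)) := by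
    rw [mul_right_comm]
    exact mul_le_of_le_one_left (psi_pos _).le step_le
  rw [D.coeff_succ]
  rcases le_total (D.coeff t r i) D.ell with h_small | h_large
  · exact le_max_of_le_left (by linarith [psi_le_one (D.margin t (D.sample i))])
  · refine le_max_of_le_right ?_
    linarith [D.psi_le_inv_T (h.ell_sq_le_margin_of_le_coeff hi h_large)]

/- Above the level `ell` the loss derivatives are at most `1 / T`, so that `T` steps add at most
one. -/
theorem signal_and_coeff_le (t : ℕ) (ht : t ≤ D.T) :
    (∀ r, D.signal t r ≤ D.ell + 1 + t / D.T) ∧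
      ∀ r i, D.sample i ∈ D.unlearnable → D.coeff t r i ≤ D.ell + 1 + t / D.T := by
  have hl := D.ell_ge
  have hT := D.T_pos
  induction t using Nat.strong_induction_on with
  | _ t ih =>
    rcases t with _ | t
    · simp only [Nat.cast_zero, zero_div, add_zero, D.coeff_zero]
      exact ⟨fun r => by linarith [D.signal_zero_le r, D.tol_le], fun _ _ _ => by linarith⟩
    have frac_le_one : ∀ s ≤ t, (s : ℝ) / D.T ≤ 1 := fun s hs =>
      (div_le_one hT).2 (Nat.cast_le.2 (by lia))
    have signal_le : ∀ s ≤ t, ∀ r, D.signal s r ≤ 2 * D.ell := fun s hs r => by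
      linarith [(ih s (by lia) (by lia)).1 r, frac_le_one s hs]
    have capped : D.Capped t (D.ell + 2) :=
      { nonneg := by linarith
        le := by linarith
        signal_le := fun s hs => signal_le s hs.le
        coeff_le := fun r i hi => by
          linarith [(ih t (by lia) (by lia)).2 r i hi, frac_le_one t le_rfl] }
    have frac_succ : ((t + 1 : ℕ) : ℝ) / D.T = t / D.T + 1 / D.T := by
      rw [Nat.cast_succ, add_div]
    have frac_nonneg : 0 ≤ ((t + 1 : ℕ) : ℝ) / D.T := by positivity
    obtain ⟨ih_signal, ih_coeff⟩ := ih t (by lia) (by lia)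
    exact ⟨fun r => (capped.signal_succ_le (signal_le t le_rfl r)).trans <|
        max_le (by linarith) (by linarith [ih_signal r]),
      fun r i hi => (capped.coeff_succ_le hi).trans <|
        max_le (by linarith) (by linarith [ih_coeff r i hi])⟩

theorem signal_le (ht : t ≤ D.T) (r : R) : D.signal t r ≤ 2 * D.ell := by
  have : (t : ℝ) / D.T ≤ 1 := (div_le_one D.T_pos).2 (Nat.cast_le.2 ht)
  linarith [(signal_and_coeff_le t ht).1 r, D.ell_ge]

theorem capped (ht : t ≤ D.T) : D.Capped t (D.ell + 2) where
  nonneg := by linarith [D.ell_pos]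
  le := by linarith [D.ell_ge]
  signal_le s hs := signal_le (hs.le.trans ht)
  coeff_le r i hi := by
    have : (t : ℝ) / D.T ≤ 1 := (div_le_one D.T_pos).2 (Nat.cast_le.2 ht)
    linarith [(signal_and_coeff_le t ht).2 r i hi]

end

/-! ### Learning of the signal -/

theorem ratio_cube_le : D.ratio ^ 3 ≤ D.tol ^ 3 * #D.learnable :=
  (le_mul_of_one_le_right (pow_pos D.ratio_pos 3).le (one_le_pow₀ D.one_le_ell)).trans
    D.ratio_cube_small

theorem time_le_half_of_early {s : ℕ} (hE : ∀ t < s, D.Early t) : (s : ℝ) ≤ D.T / 2 := by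
  have hs := D.signalRate_pos
  have hi := D.init_pos
  have hx := D.ratio_pos
  have he := D.tol_pos
  have hT := D.T_pos
  have hL := D.card_learnable_pos
  have tol_pow_le : 40 * D.tol ^ 4 ≤ 1 := by nlinarith [D.tol_sq_le, mul_pos he he]
  have time_le := D.time_le_of_early hE
  rw [le_div_iff₀ hi] at time_le
  have horizon := D.horizon_large
  rw [D.noiseRate_eq] at horizon
  refine le_of_mul_le_mul_left ?_ (by positivity : 0 < D.init * D.signalRate * #D.learnable)
  calc D.init * D.signalRate * #D.learnable * s
      = s * (D.signalRate * #D.learnable) * D.init := by ring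
    _ ≤ 20 * D.ratio * 1 := by linarith
    _ ≤ 20 * D.ratio * (D.tol * (D.signalRate * D.ratio ^ 2 * D.T * D.init)) := by gcongr
    _ = 20 * D.tol * D.signalRate * D.T * D.init * D.ratio ^ 3 := by ring
    _ ≤ 20 * D.tol * D.signalRate * D.T * D.init * (D.tol ^ 3 * #D.learnable) := by
        gcongr; exact D.ratio_cube_le
    _ = (40 * D.tol ^ 4) * (D.init * D.signalRate * #D.learnable * (D.T / 2)) := by ring
    _ ≤ D.init * D.signalRate * #D.learnable * (D.T / 2) :=
        mul_le_of_le_one_left (by positivity) tol_pow_le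

theorem exists_lt_signal : ∃ t ≤ D.T, ∃ r, 1 / (2 * D.m₃) < D.signal t r := by
  by_contra! h
  linarith [D.time_le_half_of_early fun t ht => h t (le_of_lt ht), D.T_pos]

theorem half_le_log_N₃ : 1 / 2 ≤ Real.log D.N₃ := by
  have hn := D.one_le_N₃
  have N_ge : 8 ≤ D.N := by
    nlinarith [D.ell_sq_le, D.tol_le, D.ell_ge, D.N_nonneg]
  have two_le : 2 ≤ D.N₃ := by
    refine (pow_le_pow_iff_left₀ zero_le_two (by linarith) three_ne_zero).1 ?_
    rw [D.N₃_pow]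
    linarith
  have inv_le : D.N₃⁻¹ ≤ 2⁻¹ := inv_anti₀ two_pos two_le
  linarith [Real.one_sub_inv_le_log_of_pos (by linarith : 0 < D.N₃)]

theorem le_psi_margin_of_sum_signal_cube_le
    (h : ∑ r, D.signal D.T r ^ 3 ≤ 4 * Real.log D.N₃) {t : ℕ} (ht : t ≤ D.T) {k : K}
    (hk : k ∈ D.learnable) : 1 / (4 * D.N₃ ^ 4) ≤ psi (D.margin t k) := by
  have hn := D.one_le_N₃
  have hlog := D.half_le_log_N₃
  have capped := capped ht
  have signal_part : ∑ r, D.signal t r ^ 3 ≤ 4 * Real.log D.N₃ :=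
    (sum_le_sum fun r _ => cube_le_cube (D.signal_mono r ht)).trans h
  have noise_part := (D.noiseMargin_le (k := k) capped.corrBound_pos.le fun r i hi =>
    (abs_le.1 (capped.abs_corr_le r i (hi ▸ hk))).2).trans capped.corrBound_cube_le
  have margin_le : D.margin t k ≤ 4 * Real.log D.N₃ + 1 / 100 := by
    rw [D.margin_of_learnable hk]
    linarith [D.strength_cube_mul_le hk (by linarith) signal_part]
  have exp_log : Real.exp (4 * Real.log D.N₃) = D.N₃ ^ 4 := by
    rw [← Real.exp_log (by linarith : 0 < D.N₃), ← Real.exp_nat_mul, Real.log_exp]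
    norm_num
  calc 1 / (4 * D.N₃ ^ 4) = 1 / D.N₃ ^ 4 * (1 / 2) / 2 := by field_simp; ring
    _ ≤ 1 / D.N₃ ^ 4 * Real.exp (-(1 / 100)) / 2 := by
        gcongr
        linarith [Real.add_one_le_exp (-(1 / 100 : ℝ))]
    _ = Real.exp (-(4 * Real.log D.N₃ + 1 / 100)) / 2 := by
        rw [neg_add, Real.exp_add, Real.exp_neg (4 * _), exp_log, one_div]
    _ ≤ psi (D.margin t k) := half_exp_neg_le_psi (by linarith) margin_le

theorem signalRate_div_le_gain (h : ∑ r, D.signal D.T r ^ 3 ≤ 4 * Real.log D.N₃) {t : ℕ}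
    (ht : t ≤ D.T) : D.signalRate / (10 * D.N₃) ≤ D.gain t := by
  have hs := D.signalRate_pos
  have hn := D.one_le_N₃
  calc D.signalRate / (10 * D.N₃)
      = D.signalRate * (D.N₃ ^ 3 / 2 * (1 / (4 * D.N₃ ^ 4) * (4 / 5))) := by
        field_simp; ring
    _ ≤ D.signalRate * (#D.learnable * (1 / (4 * D.N₃ ^ 4) * (4 / 5))) := by
        rw [D.N₃_pow]
        gcongr
        exact D.half_N_le_card_learnable
    _ ≤ D.gain t := D.le_gain (by norm_num)
        (fun k hk => D.le_psi_margin_of_sum_signal_cube_le h ht hk)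
        fun k hk => by linarith [D.le_strength_cube (t := t) hk]

theorem T_mul_signalRate_le (h : ∑ r, D.signal D.T r ^ 3 ≤ 4 * Real.log D.N₃) :
    D.T * D.signalRate ≤ 80 * D.m₃ * D.N₃ := by
  have hs := D.signalRate_pos
  have hn := D.one_le_N₃
  obtain ⟨t₁, ht₁, hE, gain_le⟩ := D.exists_late_start fun t ht => signal_le (le_of_lt ht)
  have late_ge : (D.T / 2 : ℝ) ≤ (D.T - t₁ : ℕ) := by
    rw [Nat.cast_sub ht₁]
    linarith [D.time_le_half_of_early hE]
  have gain_ge : (D.T - t₁ : ℕ) * (D.signalRate / (10 * D.N₃)) ≤ 4 * D.m₃ := by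
    rw [← Nat.card_Ico, ← nsmul_eq_mul]
    exact (card_nsmul_le_sum _ _ _ fun t ht =>
      D.signalRate_div_le_gain h (mem_Ico.1 ht).2.le).trans gain_le
  have half_le : D.T / 2 * (D.signalRate / (10 * D.N₃)) ≤ 4 * D.m₃ :=
    (by gcongr : _ ≤ _).trans gain_ge
  calc D.T * D.signalRate = D.T / 2 * (D.signalRate / (10 * D.N₃)) * (20 * D.N₃) := by
        field_simp; ring
    _ ≤ 4 * D.m₃ * (20 * D.N₃) := by gcongr
    _ = 80 * D.m₃ * D.N₃ := by ring

theorem lt_T_mul_signalRate : 80 * D.m₃ * D.N₃ < D.T * D.signalRate := by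
  by_contra! h
  have hs := D.signalRate_pos
  have hi := D.init_pos
  have hx := D.ratio_pos
  have he := D.tol_pos
  have he' := D.tol_le
  have hn := D.one_le_N₃
  have hm := D.one_le_m
  have hm₃ := D.one_le_m₃
  have hN := D.N_pos
  have ratio_le : D.ratio ≤ D.tol * D.N₃ :=
    (le_mul_of_one_le_right hx.le (one_le_pow₀ D.one_le_ell)).trans D.ratio_small
  have m₃_le : D.m₃ ≤ D.m ^ 3 :=
    calc D.m₃ ≤ D.m₃ ^ 3 := le_self_pow₀ hm₃ three_ne_zero
      _ = D.m := D.m₃_pow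
      _ ≤ D.m ^ 3 := le_self_pow₀ hm three_ne_zero
  have init_le : D.init * D.N * D.m₃ ≤ D.tol :=
    calc D.init * D.N * D.m₃ ≤ D.init * D.N * D.m ^ 3 := by gcongr
      _ ≤ D.init * D.N * D.m ^ 3 * D.ell ^ 6 :=
          le_mul_of_one_le_right (by positivity) (one_le_pow₀ D.one_le_ell)
      _ ≤ D.tol := D.init_small
  have horizon := D.horizon_large
  rw [D.noiseRate_eq] at horizon
  have : D.tol * (D.signalRate * D.ratio ^ 2 * D.T * D.init) < 1 :=
    calc D.tol * (D.signalRate * D.ratio ^ 2 * D.T * D.init)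
        = D.tol * D.init * D.ratio ^ 2 * (D.T * D.signalRate) := by ring
      _ ≤ D.tol * D.init * (D.tol * D.N₃) ^ 2 * (80 * D.m₃ * D.N₃) := by gcongr
      _ = 80 * D.tol ^ 3 * (D.init * D.N₃ ^ 3 * D.m₃) := by ring
      _ = 80 * D.tol ^ 3 * (D.init * D.N * D.m₃) := by rw [D.N₃_pow]
      _ ≤ 80 * (1 / 1000) ^ 3 * (1 / 1000) := by
          have := init_le.trans he'
          gcongr
      _ < 1 := by norm_num
  linarith

theorem four_mul_log_N₃_le : 4 * Real.log D.N₃ ≤ ∑ r, D.signal D.T r ^ 3 := by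
  by_contra! h
  exact (D.T_mul_signalRate_le h.le).not_gt D.lt_T_mul_signalRate

theorem lloss_margin_le_of_learnable {k : K} (hk : k ∈ D.learnable) :
    lloss (D.margin D.T k) ≤ 1 / D.N := by
  have margin_ge : Real.log D.N ≤ D.margin D.T k := by
    rw [← D.N₃_pow, Real.log_pow, D.margin_of_learnable hk]
    push_cast
    nlinarith [(capped (D := D) le_rfl).neg_le_noiseMargin k, D.le_strength_cube (t := D.T) hk,
      D.four_mul_log_N₃_le, D.half_le_log_N₃]
  calc lloss (D.margin D.T k) ≤ Real.exp (-D.margin D.T k) := lloss_le_exp_neg _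
    _ ≤ Real.exp (-Real.log D.N) := Real.exp_le_exp.2 (neg_le_neg margin_ge)
    _ = 1 / D.N := by rw [Real.exp_neg, Real.exp_log D.N_pos, one_div]

theorem lloss_margin_le_of_unlearnable {k : K} (hk : k ∈ D.unlearnable) :
    lloss (D.margin D.T k) ≤ 1 := by
  refine lloss_le_one ?_
  rw [D.margin_of_unlearnable hk]
  linarith [(capped (D := D) le_rfl).neg_le_noiseMargin k]

theorem sum_lloss_margin_le : ∑ k, lloss (D.margin D.T k) ≤ 1 + #D.unlearnable := by
  have cover : D.learnable ∪ D.unlearnable = univ := by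
    rw [← sup_eq_union, D.isCompl.sup_eq_top, top_eq_univ]
  have learnable_part : ∑ k ∈ D.learnable, lloss (D.margin D.T k) ≤ 1 :=
    calc ∑ k ∈ D.learnable, lloss (D.margin D.T k) ≤ #D.learnable • (1 / D.N) :=
          sum_le_card_nsmul _ _ _ fun _ hk => D.lloss_margin_le_of_learnable hk
      _ = #D.learnable / D.N := by rw [nsmul_eq_mul, mul_one_div]
      _ ≤ 1 := (div_le_one D.N_pos).2 D.card_learnable_le
  have unlearnable_part : ∑ k ∈ D.unlearnable, lloss (D.margin D.T k) ≤ #D.unlearnable := by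
    simpa using sum_le_card_nsmul _ _ _ fun _ hk => D.lloss_margin_le_of_unlearnable hk
  rw [← cover, sum_union D.isCompl.disjoint]
  exact add_le_add learnable_part unlearnable_part

/-! ### Memorization of the noise -/

/-- The cube root of `m * P`, which sets the scale `1 / M₃` of a memorized noise correlation. -/
def M₃ : ℝ := (D.m * D.P) ^ ((1 : ℝ) / 3)

/-- The noise coefficient, shifted so that `shiftedCoeff * gram` starts at the initial
correlation. -/
def shiftedCoeff (t : ℕ) (r : R) (i : ι) : ℝ := D.coeff t r i + D.corr 0 r i / D.gram i i

/-- The largest shifted coefficient among the noise patches of unlearnable samples. -/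
def peak (t : ℕ) : ℝ :=
  ⨆ a : R × {i // D.sample i ∈ D.unlearnable}, D.shiftedCoeff t a.1 a.2

theorem M₃_pow : D.M₃ ^ 3 = D.m * D.P := rpow_third_cube (by linarith [D.one_le_mP])

theorem one_le_M₃ : 1 ≤ D.M₃ := Real.one_le_rpow D.one_le_mP (by norm_num)

theorem M₃_le_N : D.M₃ ≤ D.N :=
  calc D.M₃ ≤ D.M₃ ^ 3 := le_self_pow₀ D.one_le_M₃ three_ne_zero
    _ = D.m * D.P := D.M₃_pow
    _ ≤ D.m * D.P * D.ell ^ 2 :=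
        le_mul_of_one_le_right (by linarith [D.one_le_mP]) (one_le_pow₀ D.one_le_ell)
    _ ≤ D.tol * D.N := D.width_small
    _ ≤ D.N := mul_le_of_le_one_left D.N_nonneg (by linarith [D.tol_le])

theorem gram_pos (i : ι) : 0 < D.gram i i := by linarith [D.half_le_gram i]

theorem abs_corr_sub_shiftedCoeff_mul_gram_le (t : ℕ) (r : R) (i : ι) :
    |D.corr t r i - D.shiftedCoeff t r i * D.gram i i| ≤ D.interference t r := by
  have shift_eq :
      D.shiftedCoeff t r i * D.gram i i = D.corr 0 r i + D.coeff t r i * D.gram i i := by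
    rw [shiftedCoeff, add_mul, div_mul_cancel₀ _ (D.gram_pos i).ne', add_comm]
  rw [shift_eq, ← sub_sub]
  exact D.abs_corr_sub_le t r i

theorem coeff_le_shiftedCoeff_add (t : ℕ) (r : R) (i : ι) :
    D.coeff t r i ≤ D.shiftedCoeff t r i + 2 * D.corrInit := by
  have shift_ge : -(2 * D.corrInit) ≤ D.corr 0 r i / D.gram i i := by
    rw [le_div_iff₀ (D.gram_pos i)]
    have corr_ge : -D.corrInit ≤ D.corr 0 r i := (abs_le.1 (D.abs_corr_zero_le r i)).1
    nlinarith [D.half_le_gram i, D.corrInit_pos]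
  unfold shiftedCoeff
  linarith

theorem shiftedCoeff_succ (t : ℕ) (r : R) (i : ι) :
    D.shiftedCoeff (t + 1) r i = D.shiftedCoeff t r i +
      D.noiseRate * psi (D.margin t (D.sample i)) * D.corr t r i ^ 2 := by
  unfold shiftedCoeff
  rw [D.coeff_succ]
  ring

theorem shiftedCoeff_le_peak (t : ℕ) (r : R) {i : ι} (hi : D.sample i ∈ D.unlearnable) :
    D.shiftedCoeff t r i ≤ D.peak t :=
  le_ciSup (f := fun a : R × {i // D.sample i ∈ D.unlearnable} => D.shiftedCoeff t a.1 a.2)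
    (Set.finite_range _).bddAbove (r, ⟨i, hi⟩)

section

variable [Nonempty (R × {i // D.sample i ∈ D.unlearnable})]

theorem exists_shiftedCoeff_eq_peak (t : ℕ) :
    ∃ r i, D.sample i ∈ D.unlearnable ∧ D.shiftedCoeff t r i = D.peak t := by
  obtain ⟨⟨r, i, hi⟩, h⟩ := exists_eq_ciSup_of_finite
    (f := fun a : R × {i // D.sample i ∈ D.unlearnable} => D.shiftedCoeff t a.1 a.2)
  exact ⟨r, i, hi, h⟩

theorem peak_mono : Monotone D.peak := by
  refine monotone_nat_of_le_succ fun t => ?_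
  obtain ⟨r, i, hi, h⟩ := D.exists_shiftedCoeff_eq_peak t
  refine le_trans ?_ (D.shiftedCoeff_le_peak (t + 1) r hi)
  rw [D.shiftedCoeff_succ, h]
  exact le_add_of_nonneg_right (D.coeff_increment_nonneg t r i)

end

theorem le_peak_of_le_corr_zero {r : R} {i : ι} (hi : D.sample i ∈ D.unlearnable)
    (h : D.init / 4 ≤ D.corr 0 r i) (t : ℕ) : D.init / 6 ≤ D.peak t := by
  have : Nonempty (R × {i // D.sample i ∈ D.unlearnable}) := ⟨(r, ⟨i, hi⟩)⟩
  refine le_trans ?_ ((D.shiftedCoeff_le_peak 0 r hi).trans (D.peak_mono (Nat.zero_le t)))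
  rw [shiftedCoeff, D.coeff_zero, zero_add, le_div_iff₀ (D.gram_pos i)]
  nlinarith [D.gram_le i, D.init_pos]

theorem mu_mul_ell_le : D.mu * (D.N * D.P) * D.ell ≤ D.tol := by
  have := D.mu_nonneg
  have := D.N_pos
  have := D.one_le_P
  have hl := D.one_le_ell
  calc D.mu * (D.N * D.P) * D.ell ≤ D.mu * (D.N * D.P) * (D.m * D.ell ^ 3) := by
        gcongr
        exact (le_self_pow₀ hl three_ne_zero).trans
          (le_mul_of_one_le_left (by positivity) D.one_le_m)
    _ = D.mu * D.N * D.m * D.P * D.ell ^ 3 := by ring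
    _ ≤ D.tol := D.mu_small

theorem leak_mul_ell_le : D.leak * D.ell ≤ D.tol ^ 2 :=
  calc D.leak * D.ell ≤ D.N * D.m * (D.leak * D.ell) :=
        le_mul_of_one_le_left (mul_nonneg D.leak_nonneg D.ell_pos.le)
          (one_le_mul_of_one_le_of_one_le D.one_le_N D.one_le_m)
    _ = D.N * D.m * D.leak * D.ell := by ring
    _ ≤ D.tol ^ 2 := D.scaled_leak_le

section

variable {D} {t : ℕ}

theorem corrInit_le_of_init_le {u : ℝ} (h : D.init / 6 ≤ u) : D.corrInit ≤ 12 * D.ell * u := by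
  unfold corrInit
  nlinarith [D.ell_pos]

theorem capped_of_peak_le_one (ht : t ≤ D.T) (h_init : D.init / 6 ≤ D.peak t)
    (h_one : D.peak t ≤ 1) : D.Capped t (D.peak t + 2 * D.corrInit) where
  nonneg := by linarith [D.init_pos, D.corrInit_pos]
  le := by
    have := D.le_of_scaled_le D.corrInit_pos.le (by linarith [D.scaled_corrInit_le, D.tol_pos])
    linarith [D.ell_ge]
  signal_le _ hs := signal_le (hs.le.trans ht)
  coeff_le r i hi := (D.coeff_le_shiftedCoeff_add t r i).trans
    (add_le_add_left (D.shiftedCoeff_le_peak t r hi) _)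

theorem interference_le_peak (ht : t ≤ D.T) (h_init : D.init / 6 ≤ D.peak t)
    (h_one : D.peak t ≤ 1) (r : R) : D.interference t r ≤ D.peak t / 16 := by
  set u := D.peak t
  have hu : 0 < u := by linarith [D.init_pos]
  have he := D.tol_pos
  have he' := D.tol_le
  have hA := D.corrInit_pos
  have h_corrInit := corrInit_le_of_init_le h_init
  have spill_nonneg : 0 ≤ D.mu * (D.N * D.P) :=
    mul_nonneg D.mu_nonneg (mul_nonneg D.N_nonneg (zero_le_one.trans D.one_le_P))
  have leak_le : D.leak * (u + 2 * D.corrInit) ≤ u / 100 :=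
    calc D.leak * (u + 2 * D.corrInit) ≤ D.leak * (25 * D.ell * u) :=
          mul_le_mul_of_nonneg_left (by nlinarith [D.one_le_ell]) D.leak_nonneg
      _ = D.leak * D.ell * (25 * u) := by ring
      _ ≤ D.tol ^ 2 * (25 * u) := mul_le_mul_of_nonneg_right D.leak_mul_ell_le (by linarith)
      _ ≤ (1 / 1000) ^ 2 * (25 * u) := by gcongr
      _ ≤ u / 100 := by linarith
  have init_spill_le : D.mu * (D.N * D.P) * D.corrInit ≤ 12 * u / 1000 :=
    calc D.mu * (D.N * D.P) * D.corrInit ≤ D.mu * (D.N * D.P) * (12 * D.ell * u) := by gcongr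
      _ = D.mu * (D.N * D.P) * D.ell * (12 * u) := by ring
      _ ≤ 1 / 1000 * (12 * u) :=
          mul_le_mul_of_nonneg_right (D.mu_mul_ell_le.trans he') (by linarith)
      _ = 12 * u / 1000 := by ring
  have leak_spill_le : D.mu * (D.N * D.P) * (D.leak * (u + 2 * D.corrInit)) ≤ u / 1000 :=
    calc D.mu * (D.N * D.P) * (D.leak * (u + 2 * D.corrInit)) ≤ 1 / 1000 * (u / 100) :=
          mul_le_mul (D.mu_mul_le.trans he') leak_le
            (mul_nonneg D.leak_nonneg (by linarith)) (by norm_num)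
      _ ≤ u / 1000 := by linarith
  have spill_eq : D.mu * (D.N * D.P) * D.corrBound (u + 2 * D.corrInit) =
      4 * (D.mu * (D.N * D.P) * D.corrInit +
        D.mu * (D.N * D.P) * (D.leak * (u + 2 * D.corrInit))) := by
    unfold corrBound; ring
  linarith [(capped_of_peak_le_one ht h_init h_one).interference_le r]

theorem le_corr_of_shiftedCoeff_eq_peak (ht : t ≤ D.T) (h_init : D.init / 6 ≤ D.peak t)
    (h_one : D.peak t ≤ 1) {r : R} {i : ι} (h : D.shiftedCoeff t r i = D.peak t) :
    7 / 16 * D.peak t ≤ D.corr t r i := by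
  have own_ge : D.peak t * (1 / 2) ≤ D.peak t * D.gram i i :=
    mul_le_mul_of_nonneg_left (D.half_le_gram i) (by linarith [D.init_pos])
  have deviation := (abs_le.1 (D.abs_corr_sub_shiftedCoeff_mul_gram_le t r i)).1
  rw [h] at deviation
  linarith [interference_le_peak ht h_init h_one r]

theorem corr_le_two_mul_peak (ht : t ≤ D.T) (h_init : D.init / 6 ≤ D.peak t)
    (h_one : D.peak t ≤ 1) (r : R) {i : ι} (hi : D.sample i ∈ D.unlearnable) :
    D.corr t r i ≤ 2 * D.peak t := by
  have own_le : D.shiftedCoeff t r i * D.gram i i ≤ D.peak t * (3 / 2) :=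
    mul_le_mul (D.shiftedCoeff_le_peak t r hi) (D.gram_le i) (D.gram_pos i).le
      (by linarith [D.init_pos])
  linarith [(abs_le.1 (D.abs_corr_sub_shiftedCoeff_mul_gram_le t r i)).2, D.init_pos,
    interference_le_peak ht h_init h_one r]

theorem margin_le_one_of_peak_le (ht : t ≤ D.T) (h_init : D.init / 6 ≤ D.peak t)
    (h_small : D.peak t ≤ 1 / (2 * D.M₃)) {k : K} (hk : k ∈ D.unlearnable) :
    D.margin t k ≤ 1 := by
  have hM := D.one_le_M₃
  have hu : 0 ≤ 2 * D.peak t := by linarith [D.init_pos]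
  have h_one : D.peak t ≤ 1 := h_small.trans (div_le_one_of_le₀ (by linarith) (by linarith))
  rw [D.margin_of_unlearnable hk]
  calc D.noiseMargin t k ≤ D.m * D.P * (2 * D.peak t) ^ 3 :=
        D.noiseMargin_le hu fun r i hi => corr_le_two_mul_peak ht h_init h_one r (hi ▸ hk)
    _ ≤ D.m * D.P * (2 * (1 / (2 * D.M₃))) ^ 3 := by
        have := D.one_le_mP
        gcongr
    _ = 1 := by rw [← D.M₃_pow]; field_simp

theorem peak_growth (ht : t ≤ D.T) (h_init : D.init / 6 ≤ D.peak t)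
    (h_small : D.peak t ≤ 1 / (2 * D.M₃)) [Nonempty (R × {i // D.sample i ∈ D.unlearnable})] :
    D.peak t + D.noiseRate / 25 * D.peak t ^ 2 ≤ D.peak (t + 1) := by
  have hM := D.one_le_M₃
  have hrate := D.noiseRate_pos
  have hu : 0 < D.peak t := by linarith [D.init_pos]
  have h_one : D.peak t ≤ 1 := h_small.trans (div_le_one_of_le₀ (by linarith) (by linarith))
  obtain ⟨r, i, hi, h⟩ := D.exists_shiftedCoeff_eq_peak t
  have corr_ge := le_corr_of_shiftedCoeff_eq_peak ht h_init h_one h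
  have psi_ge := quarter_le_psi (margin_le_one_of_peak_le ht h_init h_small hi)
  calc D.peak t + D.noiseRate / 25 * D.peak t ^ 2
      ≤ D.peak t + D.noiseRate * (1 / 4) * (7 / 16 * D.peak t) ^ 2 := by
        nlinarith [mul_pos hrate (pow_pos hu 2)]
    _ ≤ D.shiftedCoeff t r i +
          D.noiseRate * psi (D.margin t (D.sample i)) * D.corr t r i ^ 2 := by
        rw [h]; gcongr
    _ = D.shiftedCoeff (t + 1) r i := (D.shiftedCoeff_succ t r i).symm
    _ ≤ D.peak (t + 1) := D.shiftedCoeff_le_peak (t + 1) r hi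

theorem noiseRate_le : D.noiseRate ≤ 1 := by
  have factor_ge : 1 ≤ D.N * D.ell ^ 2 :=
    one_le_mul_of_one_le_of_one_le D.one_le_N (one_le_pow₀ D.one_le_ell)
  calc D.noiseRate ≤ D.noiseRate * (D.N * D.ell ^ 2) :=
        le_mul_of_one_le_right D.noiseRate_pos.le factor_ge
    _ = D.noiseRate * D.N * D.ell ^ 2 := by ring
    _ ≤ 1 := by linarith [D.noiseRate_small, D.tol_le]

theorem lt_peak_horizon {r : R} {i : ι} (hi : D.sample i ∈ D.unlearnable)
    (h : D.init / 4 ≤ D.corr 0 r i) : 1 / (2 * D.M₃) < D.peak D.T := by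
  by_contra! h_small
  have : Nonempty (R × {i // D.sample i ∈ D.unlearnable}) := ⟨(r, ⟨i, hi⟩)⟩
  have hM := D.one_le_M₃
  have hs := D.init_pos
  have hrate := D.noiseRate_pos
  have h_init := D.le_peak_of_le_corr_zero hi h
  have peak_le : ∀ t < D.T, D.peak t ≤ 1 / (2 * D.M₃) := fun t ht =>
    (D.peak_mono ht.le).trans h_small
  have peak_le_one : ∀ t < D.T, D.peak t ≤ 1 := fun t ht =>
    (peak_le t ht).trans (div_le_one_of_le₀ (by linarith) (by linarith))
  have escape := sum_rate_le (b := D.peak) (g := fun _ => D.noiseRate / 25) (Nat.zero_le D.T)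
    (by linarith [h_init 0]) (fun _ => by positivity)
    (fun t ht => peak_growth ht.le (h_init t) (peak_le t ht)) fun t ht =>
      mul_le_one₀ (by linarith [D.noiseRate_le]) (by linarith [h_init t]) (peak_le_one t ht)
  have escape_time : D.T * (D.noiseRate / 25) ≤ 12 / D.init :=
    calc D.T * (D.noiseRate / 25) ≤ 2 / D.peak 0 := by simpa using escape
      _ ≤ 2 / (D.init / 6) := div_le_div_of_nonneg_left zero_le_two (by positivity) (h_init 0)
      _ = 12 / D.init := by field_simp; norm_num
  rw [le_div_iff₀ hs] at escape_time
  nlinarith [D.horizon_large, D.tol_le, D.tol_pos]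

theorem exists_le_corr {r : R} {i : ι} (hi : D.sample i ∈ D.unlearnable)
    (h : D.init / 4 ≤ D.corr 0 r i) :
    ∃ r i, D.sample i ∈ D.unlearnable ∧ 1 / (6 * D.M₃) ≤ D.corr D.T r i := by
  have : Nonempty (R × {i // D.sample i ∈ D.unlearnable}) := ⟨(r, ⟨i, hi⟩)⟩
  have hM := D.one_le_M₃
  have h_peak := lt_peak_horizon hi h
  obtain ⟨r', i', hi', h_eq⟩ := D.exists_shiftedCoeff_eq_peak D.T
  refine ⟨r', i', hi', ?_⟩
  have h_cap := capped (D := D) le_rfl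
  have corrBound_le : D.corrBound (D.ell + 2) ≤ 1 / 200 / D.M₃ := by
    rw [le_div_iff₀ (by linarith), mul_comm]
    calc D.M₃ * D.corrBound (D.ell + 2) ≤ D.N * D.m * D.corrBound (D.ell + 2) :=
          mul_le_mul_of_nonneg_right
            (D.M₃_le_N.trans (le_mul_of_one_le_right D.N_nonneg D.one_le_m)) h_cap.corrBound_pos.le
      _ ≤ 1 / 200 := by linarith [D.scaled_corrBound_le h_cap.le, D.tol_le]
  have own_ge : D.peak D.T * (1 / 2) ≤ D.peak D.T * D.gram i' i' :=
    mul_le_mul_of_nonneg_left (D.half_le_gram i')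
      (h_peak.le.trans' (div_nonneg zero_le_one (by linarith)))
  have deviation := (abs_le.1 (D.abs_corr_sub_shiftedCoeff_mul_gram_le D.T r' i')).1
  rw [h_eq] at deviation
  have h_cross := h_cap.interference_le_half r'
  have scale : 1 / (6 * D.M₃) = 1 / (2 * D.M₃) * (1 / 2) - 1 / 12 / D.M₃ := by field_simp; norm_num
  have slack : 1 / 200 / D.M₃ ≤ 1 / 12 / D.M₃ := by gcongr; norm_num
  linarith [h_cap.corrBound_pos]

end

end SparseDynamics

/-! ### Adversarial training in feature coordinates -/

section Dot

variable {d : ℕ}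

theorem dot_comm (a b : Fin d → ℝ) : dot a b = dot b a := dotProduct_comm a b

theorem dot_add_left (a b c : Fin d → ℝ) : dot (a + b) c = dot a c + dot b c :=
  add_dotProduct a b c

theorem dot_add_right (a b c : Fin d → ℝ) : dot a (b + c) = dot a b + dot a c :=
  dotProduct_add a b c

theorem dot_smul_left (s : ℝ) (a b : Fin d → ℝ) : dot (s • a) b = s * dot a b :=
  smul_dotProduct s a b

theorem dot_smul_right (s : ℝ) (a b : Fin d → ℝ) : dot a (s • b) = s * dot a b :=
  dotProduct_smul s a b

theorem dot_sum_left {ι : Type*} (s : Finset ι) (f : ι → Fin d → ℝ) (b : Fin d → ℝ) :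
    dot (∑ i ∈ s, f i) b = ∑ i ∈ s, dot (f i) b :=
  sum_dotProduct s f b

theorem dot_e1_right (hd : 0 < d) (a : Fin d → ℝ) : dot a (e1 d hd) = a ⟨0, hd⟩ := by
  simp [dot, e1]

theorem dot_e1_self (hd : 0 < d) : dot (e1 d hd) (e1 d hd) = 1 := by
  simp [dot, e1]

end Dot

theorem phi_sub_phi_neg (z : ℝ) : phi z - phi (-z) = z ^ 3 := by
  unfold phi
  rcases le_total 0 z with h | h
  · rw [max_eq_right h, max_eq_left (neg_nonpos.2 h)]; ring
  · rw [max_eq_left h, max_eq_right (neg_nonneg.2 h)]; ring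

theorem netOut_eq_sum_cube {m P d : ℕ} (w : Fin m → Fin d → ℝ) (X : Fin P → Fin d → ℝ) :
    netOut w X = ∑ r, ∑ p, dot (w r) (X p) ^ 3 := by
  simp only [netOut, phi_sub_phi_neg]

namespace Setting

variable (S : Setting)

/-- Positions `(i, j)` of the noise patches in the training set: all patches of the sample `i`
except its signal patch. -/
abbrev NoiseIdx : Type := {p : Fin S.N × Fin S.P // p.2 ≠ S.sig p.1}

theorem sum_noiseIdx (f : Fin S.N × Fin S.P → ℝ) :
    ∑ p : S.NoiseIdx, f p.1 = ∑ k, ∑ j with j ≠ S.sig k, f (k, j) := by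
  rw [← sum_subtype (univ.filter fun p : Fin S.N × Fin S.P => p.2 ≠ S.sig p.1)
    (fun p => by simp) f, sum_filter, ← univ_product_univ, sum_product]
  exact sum_congr rfl fun k _ => by rw [sum_filter]

theorem sum_noiseIdx_sample_eq (f : Fin S.N × Fin S.P → ℝ) (k : Fin S.N) :
    ∑ p : S.NoiseIdx with p.1.1 = k, f p.1 = ∑ j with j ≠ S.sig k, f (k, j) := by
  rw [sum_filter, S.sum_noiseIdx (fun x => if x.1 = k then f x else 0), sum_eq_single k]
  · simp
  · intro k' _ hk
    simp [hk]
  · simp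

theorem sum_eq_signal_add_noise (f : Fin S.P → ℝ) (k : Fin S.N) :
    ∑ p, f p = f (S.sig k) + ∑ j with j ≠ S.sig k, f j := by
  rw [← add_sum_erase univ f (mem_univ (S.sig k)), filter_ne']

theorem y_sq (i : Fin S.N) : S.y i ^ 2 = 1 := by
  rcases S.hy i with h | h <;> rw [h] <;> norm_num

theorem mem_SL_or_mem_SU (i : Fin S.N) : i ∈ S.SL ∨ i ∈ S.SU := by
  rw [← mem_union, S.hunion]
  exact mem_univ i

/-- The fraction of the signal that survives the attack on the sample `i` at iteration `t`: the
attacked signal patch of a learnable sample is `y_i α · advStrength` times the learnable feature. -/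
def advStrength (t : ℕ) (i : Fin S.N) : ℝ :=
  S.y i * dot (S.xadv t i (S.sig i)) (e1 S.d S.hd) / S.alpha

/-- The signed correlation `y_i ⟨w_r, x_{i,j}⟩` of the filter `r` with the noise patch
`p = (i, j)`. -/
def noiseCorr (t : ℕ) (r : Fin S.m) (p : S.NoiseIdx) : ℝ :=
  S.y p.1.1 * dot (S.w t r) (S.x p.1.1 p.1.2)

theorem dot_xadv_e1 (t : ℕ) (i : Fin S.N) :
    dot (S.xadv t i (S.sig i)) (e1 S.d S.hd) = S.y i * (S.alpha * S.advStrength t i) := by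
  have hα := S.halpha
  have h : S.alpha * S.advStrength t i = S.y i * dot (S.xadv t i (S.sig i)) (e1 S.d S.hd) := by
    unfold advStrength
    field_simp
  rw [h, ← mul_assoc, ← sq, S.y_sq, one_mul]

theorem xadv_learnable {t : ℕ} {i : Fin S.N} (hi : i ∈ S.SL) :
    S.xadv t i (S.sig i) = (S.y i * (S.alpha * S.advStrength t i)) • e1 S.d S.hd := by
  obtain ⟨c, hc⟩ := S.hadvspan t i
  have hspan : S.xadv t i (S.sig i) = ((1 + c) * (S.alpha * S.y i)) • e1 S.d S.hd := by
    rw [sub_eq_iff_eq_add.1 hc, S.hsigL i hi, smul_smul, ← add_smul]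
    congr 1
    ring
  rw [← S.dot_xadv_e1]
  conv_rhs => rw [hspan, dot_smul_left, dot_e1_self, mul_one]
  exact hspan

theorem dot_xadv_learnable {t : ℕ} {i : Fin S.N} (hi : i ∈ S.SL) (r : Fin S.m) :
    dot (S.w t r) (S.xadv t i (S.sig i)) =
      S.y i * S.advStrength t i * (S.alpha * S.wsig t r) := by
  rw [S.xadv_learnable hi, dot_smul_right, dot_e1_right]
  unfold wsig
  ring

theorem dot_xadv_unlearnable {t : ℕ} {i : Fin S.N} (hi : i ∈ S.SU) (r : Fin S.m) :
    dot (S.w t r) (S.xadv t i (S.sig i)) = 0 := by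
  obtain ⟨c, hc⟩ := S.hadvspan t i
  rw [sub_eq_iff_eq_add.1 hc, S.hsigU i hi, dot_add_right, dot_smul_right, dot_smul_right,
    S.hwperp]
  ring

theorem marg_eq (t : ℕ) (i : Fin S.N) : S.marg t i =
    ∑ r, S.y i * dot (S.w t r) (S.xadv t i (S.sig i)) ^ 3 +
      ∑ r, ∑ p with p.1.1 = i, S.noiseCorr t r p ^ 3 := by
  unfold marg noiseCorr
  rw [netOut_eq_sum_cube, mul_sum, ← sum_add_distrib]
  refine sum_congr rfl fun r _ => ?_
  rw [S.sum_noiseIdx_sample_eq (fun p => (S.y p.1 * dot (S.w t r) (S.x p.1 p.2)) ^ 3) i,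
    S.sum_eq_signal_add_noise _ i, mul_add, mul_sum]
  congr 1
  refine sum_congr rfl fun j hj => ?_
  rw [S.hadvnoise t i j (mem_filter.1 hj).2]
  linear_combination (-(S.y i * dot (S.w t r) (S.x i j) ^ 3)) * S.y_sq i

theorem marg_learnable {t : ℕ} {i : Fin S.N} (hi : i ∈ S.SL) : S.marg t i =
    S.advStrength t i ^ 3 * ∑ r, (S.alpha * S.wsig t r) ^ 3 +
      ∑ r, ∑ p with p.1.1 = i, S.noiseCorr t r p ^ 3 := by
  rw [S.marg_eq, mul_sum]
  congr 1
  refine sum_congr rfl fun r _ => ?_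
  rw [S.dot_xadv_learnable hi]
  linear_combination
    (S.advStrength t i * (S.alpha * S.wsig t r)) ^ 3 * (S.y i ^ 2 + 1) * S.y_sq i

theorem marg_unlearnable {t : ℕ} {i : Fin S.N} (hi : i ∈ S.SU) : S.marg t i =
    ∑ r, ∑ p with p.1.1 = i, S.noiseCorr t r p ^ 3 := by
  rw [S.marg_eq]
  simp [S.dot_xadv_unlearnable hi]

variable {S} in
theorem ATDyn.dot_succ (h : S.ATDyn) (t : ℕ) (r : Fin S.m) (v : Fin S.d → ℝ) :
    dot (S.w (t + 1) r) v = dot (S.w t r) v +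
      3 * S.eta / S.N * ∑ i, psi (S.marg t i) * S.y i *
        (dot (S.w t r) (S.xadv t i (S.sig i)) ^ 2 * dot (S.xadv t i (S.sig i)) v +
          ∑ j with j ≠ S.sig i, dot (S.w t r) (S.x i j) ^ 2 * dot (S.x i j) v) := by
  rw [h t r, dot_add_left, dot_smul_left, dot_sum_left]
  congr 2
  refine sum_congr rfl fun i _ => ?_
  rw [dot_smul_left, dot_sum_left, S.sum_eq_signal_add_noise _ i, dot_smul_left]
  congr 2
  refine sum_congr rfl fun j hj => ?_
  rw [S.hadvnoise t i j (mem_filter.1 hj).2, dot_smul_left]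

theorem wsig_eq_dot (t : ℕ) (r : Fin S.m) : S.wsig t r = dot (S.w t r) (e1 S.d S.hd) :=
  (dot_e1_right S.hd _).symm

theorem label_mul_gradient_e1 (t : ℕ) (r : Fin S.m) (i : Fin S.N) :
    S.y i * (dot (S.w t r) (S.xadv t i (S.sig i)) ^ 2 *
        dot (S.xadv t i (S.sig i)) (e1 S.d S.hd) +
      ∑ j with j ≠ S.sig i, dot (S.w t r) (S.x i j) ^ 2 * dot (S.x i j) (e1 S.d S.hd)) =
    if i ∈ S.SL then S.advStrength t i ^ 3 * (S.alpha * S.wsig t r) ^ 2 * S.alpha else 0 := by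
  have hnoise : ∑ j with j ≠ S.sig i,
      dot (S.w t r) (S.x i j) ^ 2 * dot (S.x i j) (e1 S.d S.hd) = 0 :=
    sum_eq_zero fun j hj => by rw [S.hnoiseU i j (mem_filter.1 hj).2, mul_zero]
  rw [hnoise, add_zero]
  split_ifs with hi
  · rw [S.dot_xadv_learnable hi, S.dot_xadv_e1]
    linear_combination S.advStrength t i ^ 3 * (S.alpha * S.wsig t r) ^ 2 * S.alpha *
      (S.y i ^ 2 + 1) * S.y_sq i
  · rw [S.dot_xadv_unlearnable ((S.mem_SL_or_mem_SU i).resolve_left hi)]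
    ring

variable {S} in
theorem ATDyn.wsig_succ (h : S.ATDyn) (t : ℕ) (r : Fin S.m) :
    S.alpha * S.wsig (t + 1) r = S.alpha * S.wsig t r + 3 * S.eta * S.alpha ^ 2 / S.N *
      (∑ i ∈ S.SL, psi (S.marg t i) * S.advStrength t i ^ 3) * (S.alpha * S.wsig t r) ^ 2 := by
  rw [S.wsig_eq_dot (t + 1), h.dot_succ, ← S.wsig_eq_dot t]
  simp only [mul_assoc (psi _), S.label_mul_gradient_e1, mul_ite, mul_zero, sum_ite_mem, univ_inter,
    mul_add, mul_sum, sum_mul]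
  congr 1
  exact sum_congr rfl fun i _ => by ring

variable {S} in
theorem ATDyn.dot_eq (h : S.ATDyn) (t : ℕ) (r : Fin S.m) {v : Fin S.d → ℝ}
    (hv : dot v (e1 S.d S.hd) = 0) :
    dot (S.w t r) v = dot (S.w 0 r) v +
      ∑ p : S.NoiseIdx, S.rho p.1.1 p.1.2 r t * (S.y p.1.1 * dot (S.x p.1.1 p.1.2) v) := by
  induction t with
  | zero => simp [rho]
  | succ t ih =>
    rw [h.dot_succ t r v, ih, add_assoc,
      S.sum_noiseIdx (fun p => S.rho p.1 p.2 r t * (S.y p.1 * dot (S.x p.1 p.2) v)),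
      S.sum_noiseIdx (fun p => S.rho p.1 p.2 r (t + 1) * (S.y p.1 * dot (S.x p.1 p.2) v)),
      mul_sum, ← sum_add_distrib]
    congr 1
    refine sum_congr rfl fun i _ => ?_
    have hsignal :
        dot (S.w t r) (S.xadv t i (S.sig i)) ^ 2 * dot (S.xadv t i (S.sig i)) v = 0 := by
      rcases S.mem_SL_or_mem_SU i with hi | hi
      · rw [S.xadv_learnable hi, dot_smul_left, dot_comm _ v, hv]; ring
      · rw [S.dot_xadv_unlearnable hi]; ring
    rw [hsignal, zero_add, mul_sum, mul_sum, ← sum_add_distrib]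
    refine sum_congr rfl fun j _ => ?_
    simp only [rho]
    ring

/-! ### The parameter regime -/

theorem one_le_N : (1 : ℝ) ≤ S.N := by exact_mod_cast S.hN

theorem one_le_m : (1 : ℝ) ≤ S.m := by exact_mod_cast S.hm

theorem one_le_P : (1 : ℝ) ≤ S.P := by exact_mod_cast S.hP

theorem one_le_d : (1 : ℝ) ≤ S.d := by exact_mod_cast S.hd

theorem one_le_sqrt_d : 1 ≤ √(S.d : ℝ) := Real.one_le_sqrt.2 S.one_le_d

theorem one_le_inv_delta : 1 ≤ 1 / S.delta :=
  one_le_one_div S.hdelta0 S.hdelta1.le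

theorem card_SL_add_card_SU : (#S.SL : ℝ) + #S.SU = S.N := by
  have h := card_union_of_disjoint S.hdisj
  rw [S.hunion, card_univ, Fintype.card_fin] at h
  exact_mod_cast h.symm

theorem N_mul_one_sub_pun : (S.N : ℝ) * (1 - S.pun) = #S.SL := by
  have hN := S.one_le_N
  unfold pun
  field_simp
  exact (eq_sub_of_add_eq S.card_SL_add_card_SU).symm

/-- The logarithmic factor `log (T N m P / δ)` of Condition (H). -/
def logFactor : ℝ := Real.log ((S.T : ℝ) * S.N * S.m * S.P / S.delta)

/-- The logarithmic factor `log (T d N m P / δ)` of Condition (H). -/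
def logFactorDim : ℝ := Real.log ((S.T : ℝ) * S.d * S.N * S.m * S.P / S.delta)

/-- The square root of the logarithmic factor, which bounds the maximum of all the Gaussian
variables of the problem in units of their standard deviation. -/
def ell : ℝ := √S.logFactor

/-- The order `σ_0 σ_n √d` of the correlation of an initial filter with a noise patch. -/
def initScale : ℝ := S.sigma0 * S.sigman * √(S.d : ℝ)

/-- The order `σ_n² d` of the squared norm of a noise patch. -/
def noiseEnergy : ℝ := S.sigman ^ 2 * S.d

/-- The noise-to-signal ratio `σ_n √d / α`. -/
def noiseToSignal : ℝ := S.sigman * √(S.d : ℝ) / S.alpha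

theorem initScale_pos : 0 < S.initScale :=
  mul_pos (mul_pos S.hsigma0 S.hsigman) (zero_lt_one.trans_le S.one_le_sqrt_d)

theorem noiseEnergy_pos : 0 < S.noiseEnergy :=
  mul_pos (pow_pos S.hsigman 2) (zero_lt_one.trans_le S.one_le_d)

theorem noiseToSignal_pos : 0 < S.noiseToSignal :=
  div_pos (mul_pos S.hsigman (zero_lt_one.trans_le S.one_le_sqrt_d)) S.halpha

theorem eta_mul_energy_mul_initScale :
    S.eta * S.sigma0 * S.sigman ^ 3 * ((S.d : ℝ) * √(S.d : ℝ)) =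
      S.eta * S.noiseEnergy * S.initScale := by
  unfold noiseEnergy initScale
  ring

/-- A weak form of Condition (H): the horizon, dimension, signal, initialization, learning rate
and budget constraints, with the width and the number of patches (at least two) left free and with
the minima in the initialization, learning rate and budget constraints cut down to the terms
listed here. -/
structure WeakCondH (C : ℝ) : Prop where
  one_le : 1 ≤ C
  horizon : C * S.N ≤ S.T * (S.eta * S.noiseEnergy * S.initScale)
  dimension : C * S.m ^ 2 * S.P ^ 2 * S.N ^ 2 * S.logFactor ^ 4 ≤ (S.d : ℝ)
  signal_strength :
    C * S.sigman * √(S.d : ℝ) * S.logFactor / (#S.SL : ℝ) ^ ((1 : ℝ) / 3) ≤ S.alpha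
  init_signal : C * S.logFactorDim * (S.alpha * S.sigma0 * (S.m : ℝ) ^ ((2 : ℝ) / 3)) ≤ 1
  init_noise : C * S.logFactorDim * (S.initScale * (S.m ^ 2 * √(S.P : ℝ) * √(S.d : ℝ))) ≤ 1
  rate_noise : C * S.logFactor * (S.eta * S.noiseEnergy) ≤ 1
  rate_signal : C * S.logFactor * (S.eta * S.alpha ^ 2) ≤ 1
  le_budget :
    C * S.sigman * S.m * √(S.P : ℝ) * Real.log ((S.T : ℝ) * S.d * S.N * S.P / S.delta) ≤ S.eps
  budget_le : C * S.eps ≤ S.alpha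
  two_le_P : 2 ≤ S.P

/-- The regime of the theorem, with constants: `C` is the constant of the weak Condition (H) and of
the sparse-unlearnable regime, and `e` is the tolerance that all the small quantities of the
dynamics are to meet; `C` is large in terms of `e`. -/
structure Regime (C e : ℝ) : Prop extends S.WeakCondH C where
  sparse : S.SparseRegime C
  tol_pos : 0 < e
  tol_le : e ≤ 1 / 1000
  log_ge : 10000 ≤ Real.log C
  nine_le_tol_sq_mul : 9 ≤ e ^ 2 * C

variable {S}

theorem CondH.one_le_T {C : ℝ} (h : S.CondH C) : 1 ≤ S.T := by
  have hd := S.one_le_d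
  have hN := S.one_le_N
  have hη := S.heta
  have hσ₀ := S.hsigma0
  have hσ := S.hsigman
  have hC := h.1
  exact_mod_cast (show (0 : ℝ) < _ by positivity).trans_le h.2.1

theorem CondH.logFactor_pos {C : ℝ} (h : S.CondH C) : 0 < S.logFactor := by
  have hT : (1 : ℝ) ≤ S.T := by exact_mod_cast h.one_le_T
  have hP : (2 : ℝ) ≤ S.P := by exact_mod_cast h.2.2.2.2.2.2.2.2.2.2.1
  refine Real.log_pos ?_
  calc (1 : ℝ) < 1 * 1 * 1 * 2 * 1 := by norm_num
    _ ≤ (S.T : ℝ) * S.N * S.m * S.P * (1 / S.delta) := by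
        gcongr
        exacts [S.one_le_N, S.one_le_m, S.one_le_inv_delta]
    _ = S.T * S.N * S.m * S.P / S.delta := by ring

theorem logFactor_le_logFactorDim (hT : 1 ≤ S.T) : S.logFactor ≤ S.logFactorDim := by
  have : (1 : ℝ) ≤ S.T := by exact_mod_cast hT
  have hN := S.one_le_N
  have hm := S.one_le_m
  have hP := S.one_le_P
  have hδ := S.hdelta0
  refine Real.log_le_log (by positivity) ?_
  gcongr
  exact le_mul_of_one_le_right (by positivity) S.one_le_d

theorem mul_mul_le_of_le_inv_mul_div {C L x a : ℝ} (hC : 0 < C) (hL : 0 < L)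
    (h : x ≤ C⁻¹ * a / L) : C * L * x ≤ a := by
  calc C * L * x ≤ C * L * (C⁻¹ * a / L) := by gcongr
    _ = a := by field_simp

theorem CondH.weakCondH {C : ℝ} (h : S.CondH C) : S.WeakCondH C := by
  have hL := h.logFactor_pos
  have hLd := hL.trans_le (logFactor_le_logFactorDim h.one_le_T)
  obtain ⟨hC, hT, hd, hα, hσ₀, hη, hε, hε', -, -, hP, -⟩ := h
  have hC₀ : 0 < C := zero_lt_one.trans_le hC
  have hd₀ := zero_lt_one.trans_le S.one_le_d
  have hm₀ := zero_lt_one.trans_le S.one_le_m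
  have hP₀ := zero_lt_one.trans_le S.one_le_P
  have hα₀ := S.halpha
  have hσ := S.hsigman
  have hinit := mul_mul_le_of_le_inv_mul_div hC₀ hLd hσ₀
  have hrate := mul_mul_le_of_le_inv_mul_div hC₀ hL hη
  refine ⟨hC, ?_, hd, ?_, ?_, ?_, ?_, ?_, hε, ?_, hP⟩
  · rwa [S.eta_mul_energy_mul_initScale, div_le_iff₀
      (mul_pos (mul_pos S.heta S.noiseEnergy_pos) S.initScale_pos)] at hT
  · rwa [S.N_mul_one_sub_pun] at hα
  · have hle := hinit.trans ((min_le_left _ _).trans (min_le_right _ _))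
    rw [le_div_iff₀ (by positivity)] at hle
    linarith
  · have hle := hinit.trans (min_le_right _ _)
    rw [le_div_iff₀ (by positivity)] at hle
    calc C * S.logFactorDim * (S.initScale * (S.m ^ 2 * √(S.P : ℝ) * √(S.d : ℝ)))
        = C * S.logFactorDim * S.sigma0 *
            (S.sigman * S.m ^ 2 * √(S.P : ℝ) * √(S.d : ℝ) ^ 2) := by unfold initScale; ring
      _ ≤ 1 := by rwa [Real.sq_sqrt hd₀.le]
  · have hle := hrate.trans ((min_le_left _ _).trans (min_le_right _ _))
    rw [le_div_iff₀ (by positivity)] at hle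
    unfold noiseEnergy
    linarith
  · have hle := hrate.trans (min_le_right _ _)
    rw [le_div_iff₀ (by positivity)] at hle
    linarith
  · calc C * S.eps ≤ C * (C⁻¹ * S.alpha) := by
          gcongr
          exact hε'.le.trans (by gcongr; exact min_le_left _ _)
      _ = S.alpha := by field_simp

namespace Regime

variable {C e : ℝ}

theorem pos (h : S.Regime C e) : 0 < C := zero_lt_one.trans_le h.one_le

theorem tol_mul_ge (h : S.Regime C e) : 9000 ≤ e * C := by
  nlinarith [h.nine_le_tol_sq_mul, h.tol_le, h.tol_pos, mul_pos h.tol_pos h.pos]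

theorem const_ge (h : S.Regime C e) : 9000000 ≤ C := by
  nlinarith [h.tol_mul_ge, h.tol_le, h.pos]

theorem le_tol_mul (h : S.Regime C e) {a b k : ℝ} (hb : 0 ≤ b) (hk : k ≤ 9000)
    (hab : C * a ≤ k * b) : a ≤ e * b := by
  refine le_of_mul_le_mul_left ?_ h.pos
  calc C * a ≤ k * b := hab
    _ ≤ e * C * b := by gcongr; exact hk.trans h.tol_mul_ge
    _ = C * (e * b) := by ring

theorem T_pos (h : S.Regime C e) : 0 < S.T := by
  have hscale := mul_pos (mul_pos S.heta S.noiseEnergy_pos) S.initScale_pos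
  have hT := (mul_pos h.pos (zero_lt_one.trans_le S.one_le_N)).trans_le h.horizon
  exact_mod_cast pos_of_mul_pos_left hT hscale.le

theorem one_le_T (h : S.Regime C e) : (1 : ℝ) ≤ S.T := by exact_mod_cast h.T_pos

theorem two_le_P_cast (h : S.Regime C e) : (2 : ℝ) ≤ S.P := by exact_mod_cast h.two_le_P

theorem half_le_logFactorDim (h : S.Regime C e) : 1 / 2 ≤ S.logFactorDim := by
  have hlog : Real.log 2 ≤ S.logFactorDim := by
    refine Real.log_le_log (by norm_num) ?_
    calc (2 : ℝ) = 1 * 1 * 1 * 1 * 2 * 1 := by norm_num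
      _ ≤ (S.T : ℝ) * S.d * S.N * S.m * S.P * (1 / S.delta) := by
          gcongr
          exacts [h.one_le_T, S.one_le_d, S.one_le_N, S.one_le_m, h.two_le_P_cast,
            S.one_le_inv_delta]
      _ = S.T * S.d * S.N * S.m * S.P / S.delta := by ring
  linarith [Real.log_two_gt_d9]

theorem const_le_N (h : S.Regime C e) : C ≤ S.N := by
  calc C = C * 1 * 2 * (1 / 2) := by ring
    _ ≤ C * S.m * S.P * S.logFactorDim := by
        have hC := h.pos
        gcongr
        exacts [S.one_le_m, h.two_le_P_cast, h.half_le_logFactorDim]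
    _ ≤ S.N := h.sparse.2.2

theorem logFactor_ge (h : S.Regime C e) : 10000 ≤ S.logFactor := by
  have hN := S.one_le_N
  calc 10000 ≤ Real.log C := h.log_ge
    _ ≤ S.logFactor := by
        refine Real.log_le_log h.pos (h.const_le_N.trans ?_)
        calc (S.N : ℝ) = 1 * S.N * 1 * 1 * 1 := by ring
          _ ≤ S.T * S.N * S.m * S.P * (1 / S.delta) := by
              gcongr
              exacts [h.one_le_T, S.one_le_m, S.one_le_P, S.one_le_inv_delta]
          _ = S.T * S.N * S.m * S.P / S.delta := by ring

theorem logFactor_pos (h : S.Regime C e) : 0 < S.logFactor := by linarith [h.logFactor_ge]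

theorem ell_sq (h : S.Regime C e) : S.ell ^ 2 = S.logFactor := Real.sq_sqrt h.logFactor_pos.le

theorem ell_ge (h : S.Regime C e) : 100 ≤ S.ell :=
  Real.le_sqrt_of_sq_le (by linarith [h.logFactor_ge])

theorem logFactor_le_dim (h : S.Regime C e) : S.logFactor ≤ S.logFactorDim :=
  logFactor_le_logFactorDim h.T_pos

theorem initScale_mul_sqrt_d_le_one (h : S.Regime C e) : S.initScale * √(S.d : ℝ) ≤ 1 := by
  have hinit := S.initScale_pos
  have hC : 1 ≤ C * S.logFactorDim := by
    nlinarith [h.const_ge, h.half_le_logFactorDim]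
  have hP : 1 ≤ √(S.P : ℝ) := Real.one_le_sqrt.2 S.one_le_P
  calc S.initScale * √(S.d : ℝ) = 1 * (S.initScale * (1 ^ 2 * 1 * √(S.d : ℝ))) := by ring
    _ ≤ C * S.logFactorDim * (S.initScale * (S.m ^ 2 * √(S.P : ℝ) * √(S.d : ℝ))) := by
        gcongr
        exact S.one_le_m
    _ ≤ 1 := h.init_noise

theorem eta_mul_noiseEnergy_le_one (h : S.Regime C e) : S.eta * S.noiseEnergy ≤ 1 := by
  have hpos := mul_pos S.heta S.noiseEnergy_pos
  have hC : 1 ≤ C * S.logFactor := by nlinarith [h.const_ge, h.logFactor_ge]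
  exact (le_mul_of_one_le_left hpos.le hC).trans h.rate_noise

theorem const_mul_sqrt_d_le_T (h : S.Regime C e) : C * √(S.d : ℝ) ≤ S.T := by
  have hinit := S.initScale_pos
  calc C * √(S.d : ℝ) ≤ C * S.N * √(S.d : ℝ) := by
        gcongr
        exact le_mul_of_one_le_right h.pos.le S.one_le_N
    _ ≤ S.T * (S.eta * S.noiseEnergy * S.initScale) * √(S.d : ℝ) :=
        mul_le_mul_of_nonneg_right h.horizon (Real.sqrt_nonneg _)
    _ = S.T * (S.eta * S.noiseEnergy * (S.initScale * √(S.d : ℝ))) := by ring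
    _ ≤ S.T * (1 * 1) := by
        gcongr
        exacts [h.eta_mul_noiseEnergy_le_one, h.initScale_mul_sqrt_d_le_one]
    _ = S.T := by ring

theorem sixteen_le_T (h : S.Regime C e) : (16 : ℝ) ≤ S.T := by
  have hd := mul_le_mul_of_nonneg_left S.one_le_sqrt_d h.pos.le
  linarith [h.const_mul_sqrt_d_le_T, h.const_ge]

theorem log_T_le (h : S.Regime C e) : Real.log S.T ≤ S.ell ^ 2 := by
  rw [h.ell_sq]
  have hT := h.one_le_T
  refine Real.log_le_log (by linarith) ?_
  calc (S.T : ℝ) = S.T * 1 * 1 * 1 * 1 := by ring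
    _ ≤ S.T * S.N * S.m * S.P * (1 / S.delta) := by
        gcongr
        exacts [S.one_le_N, S.one_le_m, S.one_le_P, S.one_le_inv_delta]
    _ = S.T * S.N * S.m * S.P / S.delta := by ring

theorem log_d_le (h : S.Regime C e) : Real.log S.d ≤ 2 * S.ell ^ 2 := by
  have hd := S.one_le_d
  have hsqrt : √(S.d : ℝ) ≤ S.T :=
    (le_mul_of_one_le_left (Real.sqrt_nonneg _) h.one_le).trans h.const_mul_sqrt_d_le_T
  have hlog := Real.log_le_log (zero_lt_one.trans_le S.one_le_sqrt_d) hsqrt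
  rw [Real.log_sqrt (by linarith)] at hlog
  linarith [h.log_T_le]

theorem log_pairs_le (h : S.Regime C e) :
    Real.log ((16 : ℝ) * S.N ^ 2 * S.P ^ 2 / S.delta) ≤ 2 * S.ell ^ 2 := by
  have hN := S.one_le_N
  have hP := S.one_le_P
  have hδ := S.hdelta0
  have hT := h.sixteen_le_T
  have hsq : 2 * S.logFactor = Real.log (((S.T : ℝ) * S.N * S.m * S.P / S.delta) ^ 2) := by
    rw [Real.log_pow]
    norm_num [logFactor]
  rw [h.ell_sq, hsq]
  refine Real.log_le_log (by positivity) ?_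
  calc (16 : ℝ) * S.N ^ 2 * S.P ^ 2 / S.delta
      = 4 ^ 2 * S.N ^ 2 * 1 ^ 2 * S.P ^ 2 * (1 / S.delta * 1) := by ring
    _ ≤ (S.T : ℝ) ^ 2 * S.N ^ 2 * S.m ^ 2 * S.P ^ 2 * (1 / S.delta * (1 / S.delta)) := by
        gcongr
        exacts [by linarith, S.one_le_m, S.one_le_inv_delta]
    _ = (S.T * S.N * S.m * S.P / S.delta) ^ 2 := by ring

theorem log_noise_init_le (h : S.Regime C e) :
    Real.log ((16 : ℝ) * S.N * S.m * S.P / S.delta) ≤ S.ell ^ 2 := by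
  have hN := S.one_le_N
  have hm := S.one_le_m
  have hP := S.one_le_P
  have hδ := S.hdelta0
  rw [h.ell_sq]
  refine Real.log_le_log (by positivity) ?_
  gcongr
  exact h.sixteen_le_T

theorem log_signal_init_le (h : S.Regime C e) :
    Real.log ((16 : ℝ) * S.m / S.delta) ≤ S.ell ^ 2 := by
  have hm := S.one_le_m
  have hδ := S.hdelta0
  refine (Real.log_le_log (by positivity) ?_).trans h.log_noise_init_le
  calc (16 : ℝ) * S.m / S.delta = 16 * 1 * S.m * 1 / S.delta := by ring
    _ ≤ 16 * S.N * S.m * S.P / S.delta := by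
        gcongr
        exacts [S.one_le_N, S.one_le_P]

end Regime

variable (S)

/-- The bound of the event `E` on the coordinates of the training noise patches. -/
def noiseSup : ℝ := S.sigman * √(2 * Real.log ((16 : ℝ) * S.d * S.N * S.P / S.delta))

/-- The factor by which a memorized training noise patch is scaled up to attack a test input. -/
def attackScale : ℝ := 30 * S.m * √(S.P : ℝ) * S.ell

/-- The Gram matrix of the label-signed noise patches, in units of `σ_n² d`. -/
def noiseGram (p p' : S.NoiseIdx) : ℝ :=
  S.y p.1.1 * S.y p'.1.1 * dot (S.x p.1.1 p.1.2) (S.x p'.1.1 p'.1.2) / S.noiseEnergy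

theorem abs_y (i : Fin S.N) : |S.y i| = 1 := by
  rcases S.hy i with h | h <;> rw [h] <;> norm_num

theorem sqrt_d_sq : √(S.d : ℝ) ^ 2 = S.d := Real.sq_sqrt (Nat.cast_nonneg _)

theorem card_noiseIdx_sample_le (k : Fin S.N) :
    (#{p : S.NoiseIdx | p.1.1 = k} : ℝ) ≤ S.P := by
  have h := S.sum_noiseIdx_sample_eq (fun _ => 1) k
  simp only [sum_const, nsmul_eq_mul, mul_one] at h
  rw [h]
  exact_mod_cast (card_filter_le _ _).trans (card_fin S.P).le

variable {S}

namespace Regime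

variable {C e : ℝ}

theorem const_le_card_SU (h : S.Regime C e) : C ≤ #S.SU :=
  (div_le_div_iff_of_pos_right (zero_lt_one.trans_le S.one_le_N)).1 h.sparse.1

theorem const_mul_card_SU_le (h : S.Regime C e) : C * #S.SU ≤ 2 * S.ell ^ 2 := by
  have hC := h.pos
  have hle : (#S.SU : ℝ) ≤ C⁻¹ * Real.log S.d :=
    (div_le_div_iff_of_pos_right (zero_lt_one.trans_le S.one_le_N)).1 h.sparse.2.1
  calc C * #S.SU ≤ C * (C⁻¹ * Real.log S.d) := by gcongr
    _ = Real.log S.d := by field_simp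
    _ ≤ 2 * S.ell ^ 2 := h.log_d_le

theorem card_SU_le (h : S.Regime C e) : (#S.SU : ℝ) ≤ e * S.ell ^ 2 :=
  h.le_tol_mul (sq_nonneg _) (by norm_num) h.const_mul_card_SU_le

theorem const_mul_width_le (h : S.Regime C e) : C * (S.m * S.P * S.ell ^ 2) ≤ S.N := by
  have hC := h.pos
  calc C * (S.m * S.P * S.ell ^ 2) = C * S.m * S.P * S.logFactor := by rw [h.ell_sq]; ring
    _ ≤ C * S.m * S.P * S.logFactorDim := by
        gcongr
        exact h.logFactor_le_dim
    _ ≤ S.N := h.sparse.2.2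

theorem width_le (h : S.Regime C e) : S.m * S.P * S.ell ^ 2 ≤ e * S.N :=
  h.le_tol_mul (Nat.cast_nonneg _) (by norm_num) (h.const_mul_width_le.trans_eq (one_mul _).symm)

theorem ell_sq_le (h : S.Regime C e) : S.ell ^ 2 ≤ e * S.N :=
  (le_mul_of_one_le_left (sq_nonneg _)
    (one_le_mul_of_one_le_of_one_le S.one_le_m S.one_le_P)).trans h.width_le

theorem m_le_N (h : S.Regime C e) : (S.m : ℝ) ≤ S.N := by
  have hell := h.ell_ge
  have hC := h.const_ge
  calc (S.m : ℝ) = 1 * (S.m * 1 * 1 ^ 2) := by ring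
    _ ≤ C * (S.m * S.P * S.ell ^ 2) := by
        gcongr
        exacts [by linarith, S.one_le_P, by linarith]
    _ ≤ S.N := h.const_mul_width_le

theorem pun_le (h : S.Regime C e) : S.pun ≤ e := by
  unfold pun
  rw [div_le_iff₀ (zero_lt_one.trans_le S.one_le_N)]
  refine h.card_SU_le.trans (mul_le_mul_of_nonneg_left ?_ h.tol_pos.le)
  exact h.ell_sq_le.trans (mul_le_of_le_one_left (Nat.cast_nonneg _) (by linarith [h.tol_le]))

theorem card_SL_pos (h : S.Regime C e) : (0 : ℝ) < #S.SL := by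
  rw [← S.N_mul_one_sub_pun]
  exact mul_pos (zero_lt_one.trans_le S.one_le_N) (by linarith [h.pun_le, h.tol_le])

theorem dimension_le (h : S.Regime C e) :
    3 * (S.m * S.P * S.N * S.ell ^ 4) ≤ e * √(S.d : ℝ) := by
  have he := h.tol_pos
  refine le_of_sq_le_sq ?_ (by positivity)
  calc (3 * (S.m * S.P * S.N * S.ell ^ 4)) ^ 2
      = 9 * (S.m ^ 2 * S.P ^ 2 * S.N ^ 2 * (S.ell ^ 2) ^ 4) := by ring
    _ ≤ (e ^ 2 * C) * (S.m ^ 2 * S.P ^ 2 * S.N ^ 2 * (S.ell ^ 2) ^ 4) := by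
        gcongr
        exact h.nine_le_tol_sq_mul
    _ = e ^ 2 * (C * S.m ^ 2 * S.P ^ 2 * S.N ^ 2 * S.logFactor ^ 4) := by rw [h.ell_sq]; ring
    _ ≤ e ^ 2 * S.d := by
        gcongr
        exact h.dimension
    _ = (e * √(S.d : ℝ)) ^ 2 := by rw [mul_pow, S.sqrt_d_sq]

theorem mu_le (h : S.Regime C e) :
    3 * S.ell / √(S.d : ℝ) * S.N * S.m * S.P * S.ell ^ 3 ≤ e := by
  calc 3 * S.ell / √(S.d : ℝ) * S.N * S.m * S.P * S.ell ^ 3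
      = 3 * (S.m * S.P * S.N * S.ell ^ 4) / √(S.d : ℝ) := by ring
    _ ≤ e := (div_le_iff₀ (zero_lt_one.trans_le S.one_le_sqrt_d)).2 h.dimension_le

theorem init_noise_le (h : S.Regime C e) : S.initScale * S.N * S.m ^ 3 * S.ell ^ 6 ≤ e := by
  have he := h.tol_pos
  have hinit := S.initScale_pos
  have hdim : S.N * S.m * S.ell ^ 4 ≤ e * √(S.d : ℝ) := by
    have hP : S.m * 1 * S.N * S.ell ^ 4 ≤ S.m * S.P * S.N * S.ell ^ 4 := by
      gcongr
      exact S.one_le_P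
    have hpos : 0 ≤ S.m * S.P * S.N * S.ell ^ 4 := by positivity
    linarith [h.dimension_le]
  have hlog : S.ell ^ 2 ≤ C * S.logFactorDim := by
    rw [h.ell_sq]
    exact h.logFactor_le_dim.trans
      (le_mul_of_one_le_left (by linarith [h.half_le_logFactorDim]) h.one_le)
  calc S.initScale * S.N * S.m ^ 3 * S.ell ^ 6
      = (S.N * S.m * S.ell ^ 4) * (S.ell ^ 2 * (S.initScale * S.m ^ 2)) := by ring
    _ ≤ (e * √(S.d : ℝ)) * (C * S.logFactorDim * (S.initScale * S.m ^ 2)) := by gcongr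
    _ = e * (C * S.logFactorDim * (S.initScale * (S.m ^ 2 * 1 * √(S.d : ℝ)))) := by ring
    _ ≤ e * (C * S.logFactorDim * (S.initScale * (S.m ^ 2 * √(S.P : ℝ) * √(S.d : ℝ)))) := by
        have hLd := h.half_le_logFactorDim
        have hC := h.pos
        gcongr
        exact Real.one_le_sqrt.2 S.one_le_P
    _ ≤ e := mul_le_of_le_one_right he.le h.init_noise

theorem rate_le (h : S.Regime C e) {q : ℝ} (hq : C * S.logFactor * (S.eta * q) ≤ 1) :
    3 * S.eta * q / S.N * S.N * S.ell ^ 2 ≤ e := by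
  have hN := S.one_le_N
  calc 3 * S.eta * q / S.N * S.N * S.ell ^ 2 = 3 * (S.logFactor * (S.eta * q)) := by
        rw [h.ell_sq]; field_simp
    _ ≤ e * 1 := h.le_tol_mul (k := 3) zero_le_one (by norm_num) (by linarith)
    _ = e := mul_one e

theorem horizon_large (h : S.Regime C e) :
    1 ≤ e * (3 * S.eta * S.noiseEnergy / S.N * S.T * S.initScale) := by
  have hN := zero_lt_one.trans_le S.one_le_N
  have hC : C ≤ 3 * S.eta * S.noiseEnergy / S.N * S.T * S.initScale := by
    calc C ≤ 3 * C := by linarith [h.pos]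
      _ = 3 * (C * S.N) / S.N := by field_simp
      _ ≤ 3 * (S.T * (S.eta * S.noiseEnergy * S.initScale)) / S.N := by
          gcongr 3 * ?_ / S.N
          exact h.horizon
      _ = 3 * S.eta * S.noiseEnergy / S.N * S.T * S.initScale := by ring
  exact le_trans (by linarith [h.tol_mul_ge]) (mul_le_mul_of_nonneg_left hC h.tol_pos.le)

theorem ratio_cube_le (h : S.Regime C e) :
    S.noiseToSignal ^ 3 * S.ell ^ 6 ≤ e ^ 3 * #S.SL := by
  have hroot : 0 < (#S.SL : ℝ) ^ ((1 : ℝ) / 3) := Real.rpow_pos_of_pos h.card_SL_pos _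
  have hα := S.halpha
  have hratio := S.noiseToSignal_pos
  have hstrength := h.signal_strength
  rw [div_le_iff₀ hroot, ← h.ell_sq] at hstrength
  have hlinear : S.noiseToSignal * S.ell ^ 2 ≤ e * (#S.SL : ℝ) ^ ((1 : ℝ) / 3) := by
    refine h.le_tol_mul (k := 1) hroot.le (by norm_num) ?_
    calc C * (S.noiseToSignal * S.ell ^ 2)
        = C * S.sigman * √(S.d : ℝ) * S.ell ^ 2 / S.alpha := by unfold noiseToSignal; ring
      _ ≤ 1 * (#S.SL : ℝ) ^ ((1 : ℝ) / 3) := by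
          rw [div_le_iff₀ hα]
          linarith
  calc S.noiseToSignal ^ 3 * S.ell ^ 6 = (S.noiseToSignal * S.ell ^ 2) ^ 3 := by ring
    _ ≤ (e * (#S.SL : ℝ) ^ ((1 : ℝ) / 3)) ^ 3 := by gcongr
    _ = e ^ 3 * #S.SL := by rw [mul_pow, rpow_third_cube (Nat.cast_nonneg _)]

theorem eps_le (h : S.Regime C e) : S.eps ≤ e * S.alpha :=
  h.le_tol_mul S.halpha.le (by norm_num) (h.budget_le.trans_eq (one_mul _).symm)

theorem attackScale_mul_noiseSup_le (h : S.Regime C e) : S.attackScale * S.noiseSup ≤ S.eps := by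
  set Le := Real.log ((S.T : ℝ) * S.d * S.N * S.P / S.delta) with hLe
  have hN := S.one_le_N
  have hd := S.one_le_d
  have hP := S.one_le_P
  have hm := S.one_le_m
  have hT := h.one_le_T
  have hδ := S.hdelta0
  have hσ := S.hsigman
  have hlog : S.logFactor ≤ 2 * Le := by
    have hsq : 2 * Le = Real.log (((S.T : ℝ) * S.d * S.N * S.P / S.delta) ^ 2) := by
      rw [Real.log_pow]
      norm_num [hLe]
    rw [hsq]
    refine Real.log_le_log (by positivity) ?_
    calc (S.T : ℝ) * S.N * S.m * S.P / S.delta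
        = (S.T * 1) * 1 ^ 2 * (S.N * S.m) * (S.P * 1) * (1 / S.delta * 1) := by ring
      _ ≤ (S.T * S.T) * S.d ^ 2 * (S.N * S.N) * (S.P * S.P) * (1 / S.delta * (1 / S.delta)) := by
          gcongr
          exacts [by exact_mod_cast h.m_le_N, S.one_le_inv_delta]
      _ = (S.T * S.d * S.N * S.P / S.delta) ^ 2 := by ring
  have hLe₀ : 0 ≤ Le := by linarith [h.logFactor_pos]
  have hsup : S.noiseSup ≤ S.sigman * √(2 * Le) := by
    unfold noiseSup
    gcongr
    refine Real.log_le_log (by positivity) ?_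
    gcongr
    exact h.sixteen_le_T
  have hell : S.ell ≤ √(2 * Le) := Real.sqrt_le_sqrt hlog
  calc S.attackScale * S.noiseSup ≤ 30 * S.m * √(S.P : ℝ) * √(2 * Le) * (S.sigman * √(2 * Le)) := by
        have hsup₀ : 0 ≤ S.noiseSup := mul_nonneg hσ.le (Real.sqrt_nonneg _)
        unfold attackScale
        gcongr
    _ = 30 * S.m * √(S.P : ℝ) * S.sigman * √(2 * Le) ^ 2 := by ring
    _ = 60 * S.sigman * S.m * √(S.P : ℝ) * Le := by rw [Real.sq_sqrt (by linarith)]; ring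
    _ ≤ C * S.sigman * S.m * √(S.P : ℝ) * Le := by
        gcongr
        linarith [h.const_ge]
    _ ≤ S.eps := h.le_budget

end Regime

/-! ### Adversarial training as a cubic dynamics -/

namespace EventE

theorem half_le_noiseGram (hE : S.EventE) (p : S.NoiseIdx) : 1 / 2 ≤ S.noiseGram p p := by
  have hnorm := (hE.1 p.1.1 p.1.2 p.2).1
  rw [noiseGram, ← pow_two, S.y_sq, one_mul, le_div_iff₀ S.noiseEnergy_pos, noiseEnergy, ← sqnorm]
  linarith

theorem noiseGram_le (hE : S.EventE) (p : S.NoiseIdx) : S.noiseGram p p ≤ 3 / 2 := by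
  have hnorm := (hE.1 p.1.1 p.1.2 p.2).2
  rw [noiseGram, ← pow_two, S.y_sq, one_mul, div_le_iff₀ S.noiseEnergy_pos, noiseEnergy, ← sqnorm]
  linarith

theorem exists_signal_zero (hE : S.EventE) :
    ∃ r, S.initScale / (2 * S.noiseToSignal) ≤ S.alpha * S.wsig 0 r := by
  obtain ⟨r, hr⟩ := hE.2.2.2.2.2.2.1
  have hα := S.halpha
  have hσ := S.hsigman
  have hd := zero_lt_one.trans_le S.one_le_sqrt_d
  refine ⟨r, ?_⟩
  calc S.initScale / (2 * S.noiseToSignal) = S.alpha * (S.sigma0 / 2) := by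
        unfold initScale noiseToSignal
        field_simp
    _ ≤ S.alpha * S.wsig 0 r := by
        rw [wsig_eq_dot]
        gcongr

theorem exists_le_noiseCorr_zero (hE : S.EventE) (p : S.NoiseIdx) :
    ∃ r, S.initScale / 4 ≤ S.noiseCorr 0 r p :=
  hE.2.2.2.2.2.2.2 p.1.1 p.1.2 p.2

end EventE

namespace Regime

variable {C e : ℝ}

theorem abs_noiseGram_le (h : S.Regime C e) (hE : S.EventE) {p p' : S.NoiseIdx} (hp : p ≠ p') :
    |S.noiseGram p p'| ≤ 3 * S.ell / √(S.d : ℝ) := by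
  have hdot := hE.2.1 p.1.1 p'.1.1 p.1.2 p'.1.2 p.2 p'.2 (fun hpp => hp (Subtype.ext hpp))
  have hell := h.ell_ge
  have hd := zero_lt_one.trans_le S.one_le_sqrt_d
  have hlog : √(Real.log ((16 : ℝ) * S.N ^ 2 * S.P ^ 2 / S.delta)) ≤ 3 / 2 * S.ell := by
    refine Real.sqrt_le_iff.2 ⟨by positivity, h.log_pairs_le.trans ?_⟩
    nlinarith
  unfold noiseGram
  rw [abs_div, abs_mul, abs_mul, S.abs_y, S.abs_y, one_mul, one_mul, abs_of_pos S.noiseEnergy_pos,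
    div_le_iff₀ S.noiseEnergy_pos]
  calc |dot (S.x p.1.1 p.1.2) (S.x p'.1.1 p'.1.2)|
      ≤ 2 * S.sigman ^ 2 *
          (√(S.d : ℝ) * √(Real.log ((16 : ℝ) * S.N ^ 2 * S.P ^ 2 / S.delta))) := by
        rwa [← Real.sqrt_mul (Nat.cast_nonneg _)]
    _ ≤ 2 * S.sigman ^ 2 * (√(S.d : ℝ) * (3 / 2 * S.ell)) := by gcongr
    _ = 3 * S.ell / √(S.d : ℝ) * (S.sigman ^ 2 * √(S.d : ℝ) ^ 2) := by field_simp
    _ = 3 * S.ell / √(S.d : ℝ) * S.noiseEnergy := by rw [S.sqrt_d_sq, noiseEnergy]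

theorem abs_noiseCorr_zero_le (h : S.Regime C e) (hE : S.EventE) (r : Fin S.m) (p : S.NoiseIdx) :
    |S.noiseCorr 0 r p| ≤ 2 * S.ell * S.initScale := by
  have hdot := hE.2.2.2.2.2.1 r p.1.1 p.1.2 p.2
  have hσ := S.hsigman
  have hσ₀ := S.hsigma0
  have hlog : √(Real.log ((16 : ℝ) * S.N * S.m * S.P / S.delta)) ≤ S.ell :=
    Real.sqrt_le_iff.2 ⟨Real.sqrt_nonneg _, h.log_noise_init_le⟩
  rw [noiseCorr, abs_mul, S.abs_y, one_mul]
  calc |dot (S.w 0 r) (S.x p.1.1 p.1.2)|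
      ≤ 2 * S.sigma0 * S.sigman *
          (√(S.d : ℝ) * √(Real.log ((16 : ℝ) * S.N * S.m * S.P / S.delta))) := by
        rwa [← Real.sqrt_mul (Nat.cast_nonneg _)]
    _ ≤ 2 * S.sigma0 * S.sigman * (√(S.d : ℝ) * S.ell) := by gcongr
    _ = 2 * S.ell * S.initScale := by unfold initScale; ring

theorem abs_signal_zero_le (h : S.Regime C e) (hE : S.EventE) (r : Fin S.m) :
    |S.alpha * S.wsig 0 r| ≤ 2 * S.ell * (S.alpha * S.sigma0) := by
  have hell := h.ell_ge
  have hα := S.halpha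
  have hσ₀ := S.hsigma0
  have hlog : √(2 * Real.log ((16 : ℝ) * S.m / S.delta)) ≤ 2 * S.ell := by
    refine Real.sqrt_le_iff.2 ⟨by positivity, ?_⟩
    nlinarith [h.log_signal_init_le]
  rw [abs_mul, abs_of_pos hα, S.wsig_eq_dot]
  calc S.alpha * |dot (S.w 0 r) (e1 S.d S.hd)| ≤ S.alpha * (S.sigma0 * (2 * S.ell)) := by
        gcongr
        exact (hE.2.2.2.2.1 r).trans (by gcongr)
    _ = 2 * S.ell * (S.alpha * S.sigma0) := by ring

theorem abs_signal_zero_small (h : S.Regime C e) (hE : S.EventE) (r : Fin S.m) :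
    |S.alpha * S.wsig 0 r| * ((S.m : ℝ) ^ ((1 : ℝ) / 3)) ^ 2 ≤ e := by
  have hell := h.ell_ge
  have hα := S.halpha
  have hσ₀ := S.hsigma0
  have hroot : ((S.m : ℝ) ^ ((1 : ℝ) / 3)) ^ 2 = (S.m : ℝ) ^ ((2 : ℝ) / 3) := by
    rw [← Real.rpow_natCast, ← Real.rpow_mul (Nat.cast_nonneg _)]
    norm_num
  have hlog : S.ell ≤ S.logFactorDim := by nlinarith [h.logFactor_le_dim, h.ell_sq]
  rw [hroot]
  calc |S.alpha * S.wsig 0 r| * (S.m : ℝ) ^ ((2 : ℝ) / 3)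
      ≤ 2 * S.ell * (S.alpha * S.sigma0) * (S.m : ℝ) ^ ((2 : ℝ) / 3) := by
        gcongr
        exact h.abs_signal_zero_le hE r
    _ = 2 * (S.ell * (S.alpha * S.sigma0 * (S.m : ℝ) ^ ((2 : ℝ) / 3))) := by ring
    _ ≤ 2 * (S.logFactorDim * (S.alpha * S.sigma0 * (S.m : ℝ) ^ ((2 : ℝ) / 3))) := by gcongr
    _ ≤ e * 1 := h.le_tol_mul (k := 2) zero_le_one (by norm_num) (by linarith [h.init_signal])
    _ = e := mul_one e

theorem one_sub_le_advStrength (h : S.Regime C e) (t : ℕ) {k : Fin S.N} (hk : k ∈ S.SL) :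
    1 - e ≤ S.advStrength t k := by
  rw [advStrength, le_div_iff₀ S.halpha]
  linarith [(S.hadvlearn t k hk).1, h.eps_le]

end Regime

theorem advStrength_le_one (t : ℕ) {k : Fin S.N} (hk : k ∈ S.SL) : S.advStrength t k ≤ 1 :=
  (div_le_one S.halpha).2 (S.hadvlearn t k hk).2

theorem advStrength_nonneg (t : ℕ) {k : Fin S.N} (hk : k ∈ S.SL) : 0 ≤ S.advStrength t k :=
  div_nonneg (by linarith [(S.hadvlearn t k hk).1, S.hepsalpha]) S.halpha.le

theorem ATDyn.noiseCorr_eq (hdyn : S.ATDyn) (t : ℕ) (r : Fin S.m) (p : S.NoiseIdx) :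
    S.noiseCorr t r p = S.noiseCorr 0 r p +
      ∑ p' : S.NoiseIdx, S.noiseEnergy * S.rho p'.1.1 p'.1.2 r t * S.noiseGram p' p := by
  unfold noiseCorr
  rw [hdyn.dot_eq t r (S.hnoiseU _ _ p.2), mul_add, mul_sum]
  congr 1
  refine sum_congr rfl fun p' _ => ?_
  have hD := S.noiseEnergy_pos
  unfold noiseGram
  field_simp

theorem isCompl_SL_SU : IsCompl S.SL S.SU :=
  ⟨S.hdisj, codisjoint_iff.2 S.hunion⟩

/-- The cubic dynamics of adversarial training: signals are `α w_{r,1}` and the coefficients are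
`σ_n² d ρ_{i,j,r}`. -/
def cubicDynamics (hdyn : S.ATDyn) (hE : S.EventE) {C e : ℝ} (h : S.Regime C e) :
    CubicDynamics (Fin S.m) S.NoiseIdx (Fin S.N) where
  learnable := S.SL
  unlearnable := S.SU
  isCompl := isCompl_SL_SU
  sample p := p.1.1
  P := S.P
  mu := 3 * S.ell / √(S.d : ℝ)
  signalRate := 3 * S.eta * S.alpha ^ 2 / S.N
  noiseRate := 3 * S.eta * S.noiseEnergy / S.N
  signal t r := S.alpha * S.wsig t r
  coeff t r p := S.noiseEnergy * S.rho p.1.1 p.1.2 r t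
  corr := S.noiseCorr
  margin := S.marg
  strength := S.advStrength
  gram p' p := S.noiseGram p p'
  signal_update := hdyn.wsig_succ
  coeff_zero r p := by simp [rho]
  coeff_succ t r p := by
    rw [noiseCorr, mul_pow, S.y_sq, rho]
    ring
  corr_eq := hdyn.noiseCorr_eq
  margin_learnable t k hk := S.marg_learnable hk
  margin_unlearnable t k hk := S.marg_unlearnable hk
  signalRate_pos := by
    have := S.halpha
    have := S.heta
    have := S.one_le_N
    positivity
  noiseRate_pos := by
    have := S.noiseEnergy_pos
    have := S.heta
    have := S.one_le_N
    positivity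
  strength_nonneg t k hk := advStrength_nonneg t hk
  strength_le_one t k hk := advStrength_le_one t hk
  one_le_P := S.one_le_P
  card_patches_le := S.card_noiseIdx_sample_le
  mu_nonneg := by
    have := h.ell_ge
    positivity
  abs_gram_le p p' hp := h.abs_noiseGram_le hE hp.symm

/-- The cubic dynamics of adversarial training, together with the smallness conditions of the
sparse-unlearnable regime. -/
def sparseDynamics (hdyn : S.ATDyn) (hE : S.EventE) {C e : ℝ} (h : S.Regime C e) :
    SparseDynamics (Fin S.m) S.NoiseIdx (Fin S.N) where
  toCubicDynamics := cubicDynamics hdyn hE h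
  ell := S.ell
  tol := e
  init := S.initScale
  ratio := S.noiseToSignal
  T := S.T
  ell_ge := h.ell_ge
  tol_pos := h.tol_pos
  tol_le := h.tol_le
  init_pos := S.initScale_pos
  ratio_pos := S.noiseToSignal_pos
  noiseRate_eq := by
    have := S.halpha
    simp only [cubicDynamics, noiseToSignal, noiseEnergy, div_pow, mul_pow, S.sqrt_d_sq]
    field_simp
  mu_small := by simpa [cubicDynamics, CubicDynamics.N, CubicDynamics.m] using h.mu_le
  init_small := by simpa [CubicDynamics.N, CubicDynamics.m] using h.init_noise_le
  width_small := by simpa [cubicDynamics, CubicDynamics.N, CubicDynamics.m] using h.width_le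
  noiseRate_small := by simpa [cubicDynamics, CubicDynamics.N] using h.rate_le h.rate_noise
  signalRate_small := by simpa [cubicDynamics, CubicDynamics.N] using h.rate_le h.rate_signal
  card_unlearnable_le := h.card_SU_le
  ratio_cube_small := h.ratio_cube_le
  horizon_large := h.horizon_large
  log_T_le := h.log_T_le
  abs_signal_zero_small r := by
    rw [CubicDynamics.m₃, CubicDynamics.m, Fintype.card_fin]
    exact h.abs_signal_zero_small hE r
  exists_signal_zero := hE.exists_signal_zero
  abs_corr_zero_le := h.abs_noiseCorr_zero_le hE
  half_le_gram := hE.half_le_noiseGram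
  gram_le := hE.noiseGram_le
  le_strength t k hk := h.one_sub_le_advStrength t hk

end Setting

/-! ### The test-time attack -/

theorem mul_cube_of_sq_eq_one {y : ℝ} (hy : y ^ 2 = 1) (a : ℝ) : y * a ^ 3 = (y * a) ^ 3 := by
  linear_combination (-(y * a ^ 3)) * hy

theorem cube_le_sq_of_sq_le_one {a : ℝ} (ha : a ^ 2 ≤ 1) : a ^ 3 ≤ a ^ 2 := by
  rw [pow_succ]
  exact mul_le_of_le_one_right (sq_nonneg a) (abs_le.1 ((sq_le_one_iff_abs_le_one a).1 ha)).2

theorem sum_cube_le_of_le_two {ι : Type*} [Fintype ι] {a : ι → ℝ} {V : ℝ} {i₀ : ι}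
    (ha : ∀ i, a i ≤ 2) (hi₀ : a i₀ ≤ -V / 2) :
    ∑ i, a i ^ 3 ≤ 8 * Fintype.card ι - V ^ 3 / 8 - 8 := by
  classical
  have others_le : ∑ i ∈ univ.erase i₀, a i ^ 3 ≤ #(univ.erase i₀) • (2 : ℝ) ^ 3 :=
    sum_le_card_nsmul _ _ _ fun i _ => cube_le_cube (ha i)
  have card_eq : (#(univ.erase i₀) : ℝ) + 1 = Fintype.card ι := by
    exact_mod_cast card_erase_add_one (mem_univ i₀)
  have := cube_le_cube hi₀
  rw [nsmul_eq_mul] at others_le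
  rw [← add_sum_erase univ _ (mem_univ i₀)]
  linarith

theorem sqnorm_nonneg {d : ℕ} (a : Fin d → ℝ) : 0 ≤ sqnorm a :=
  Fintype.sum_nonneg fun k => mul_self_nonneg (a k)

theorem abs_dot_le {d : ℕ} (a b : Fin d → ℝ) : |dot a b| ≤ √(sqnorm a) * √(sqnorm b) := by
  rw [← Real.sqrt_mul (sqnorm_nonneg a)]
  exact Real.abs_le_sqrt (by simpa only [dot, sqnorm, sq] using sum_mul_sq_le_sq_mul_sq univ a b)

section Attack

variable {m P d : ℕ} {hd : 0 < d} {ξ : Fin P → Fin d → ℝ} {s p₀ : Fin P} {y α β V : ℝ}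
  {v : Fin d → ℝ}

/-- The input with label `y`, signal patch `s` and noise patches `ξ`, after the attack that adds
`-y v` to the patch `p₀`. -/
def attackedInput (hd : 0 < d) (α y : ℝ) (ξ : Fin P → Fin d → ℝ) (s p₀ : Fin P)
    (v : Fin d → ℝ) : Fin P → Fin d → ℝ :=
  Function.update ξ s ((α * y) • e1 d hd) + Pi.single p₀ ((-y) • v)

theorem label_mul_dot_attackedInput_cube_le {w : Fin d → ℝ} (hne : p₀ ≠ s) (hy : y ^ 2 = 1)
    (hβ : α * w ⟨0, hd⟩ ≤ β) (hξ : ∀ p, dot w (ξ p) ^ 2 ≤ 1) (p : Fin P) :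
    (y * dot w (attackedInput hd α y ξ s p₀ v p)) ^ 3 ≤
      dot w (ξ p) ^ 2 + ((if p = s then β ^ 3 else 0) +
        if p = p₀ then (y * dot w (ξ p₀) - dot w v) ^ 3 else 0) := by
  rw [attackedInput, Pi.add_apply]
  rcases eq_or_ne p s with rfl | hps
  · have signal_eq : y * dot w ((α * y) • e1 d hd) = α * w ⟨0, hd⟩ := by
      rw [dot_smul_right, dot_e1_right]
      linear_combination α * w ⟨0, hd⟩ * hy
    rw [Function.update_self, Pi.single_eq_of_ne hne.symm, add_zero, signal_eq, if_pos rfl,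
      if_neg hne.symm, add_zero]
    exact (cube_le_cube hβ).trans (le_add_of_nonneg_left (sq_nonneg _))
  rw [Function.update_of_ne hps, if_neg hps, zero_add]
  rcases eq_or_ne p p₀ with rfl | hp
  · have attacked_eq : y * dot w (ξ p + (-y) • v) = y * dot w (ξ p) - dot w v := by
      rw [dot_add_right, dot_smul_right]
      linear_combination (-dot w v) * hy
    rw [Pi.single_eq_same, attacked_eq, if_pos rfl]
    exact le_add_of_nonneg_left (sq_nonneg _)
  · have sq_eq : (y * dot w (ξ p)) ^ 2 = dot w (ξ p) ^ 2 := by rw [mul_pow, hy, one_mul]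
    rw [Pi.single_eq_of_ne hp, add_zero, if_neg hp, add_zero, ← sq_eq]
    exact cube_le_sq_of_sq_le_one (sq_eq.trans_le (hξ p))

theorem label_mul_netOut_attackedInput_le {w : Fin m → Fin d → ℝ} (hne : p₀ ≠ s) (hy : y ^ 2 = 1)
    (hβ : ∀ r, α * w r ⟨0, hd⟩ ≤ β) (hξ : ∀ r p, dot (w r) (ξ p) ^ 2 ≤ 1) :
    y * netOut w (attackedInput hd α y ξ s p₀ v) ≤
      ∑ r, ∑ p, dot (w r) (ξ p) ^ 2 + m * β ^ 3 +
        ∑ r, (y * dot (w r) (ξ p₀) - dot (w r) v) ^ 3 := by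
  simp only [netOut_eq_sum_cube, mul_sum, mul_cube_of_sq_eq_one hy]
  refine (sum_le_sum fun r _ => sum_le_sum fun p _ =>
    label_mul_dot_attackedInput_cube_le hne hy (hβ r) (hξ r) p).trans_eq ?_
  simp [sum_add_distrib, add_assoc]

theorem label_mul_netOut_attackedInput_neg {w : Fin m → Fin d → ℝ} (hne : p₀ ≠ s) (hy : y ^ 2 = 1)
    (hβ : ∀ r, α * w r ⟨0, hd⟩ ≤ β) (hv : ∀ r, -1 ≤ dot (w r) v) (hV : 2 ≤ V)
    (hr₀ : ∃ r, V ≤ dot (w r) v) (hV_large : m * β ^ 3 + 8 * m < V ^ 3 / 8)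
    (hξ : ∑ r, ∑ p, dot (w r) (ξ p) ^ 2 < 1) :
    y * netOut w (attackedInput hd α y ξ s p₀ v) < 0 := by
  obtain ⟨r₀, hr₀⟩ := hr₀
  have background_le : ∀ r p, dot (w r) (ξ p) ^ 2 ≤ 1 := fun r p =>
    ((single_le_sum (f := fun p => dot (w r) (ξ p) ^ 2) (fun _ _ => sq_nonneg _)
      (mem_univ p)).trans (single_le_sum (f := fun r => ∑ p, dot (w r) (ξ p) ^ 2)
        (fun _ _ => sum_nonneg fun _ _ => sq_nonneg _) (mem_univ r))).trans hξ.le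
  have response_le : ∀ r, y * dot (w r) (ξ p₀) ≤ 1 := fun r =>
    (abs_le.1 ((sq_le_one_iff_abs_le_one _).1 (by
      rw [mul_pow, hy, one_mul]
      exact background_le r p₀))).2
  have attacked_patch_le := sum_cube_le_of_le_two (V := V) (i₀ := r₀)
    (a := fun r => y * dot (w r) (ξ p₀) - dot (w r) v)
    (fun r => by linarith [response_le r, hv r]) (by linarith [response_le r₀])
  rw [Fintype.card_fin] at attacked_patch_le
  linarith [label_mul_netOut_attackedInput_le (v := v) hne hy hβ background_le]

end Attack

/-! ### Gaussian test noise -/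

section NoiseLaw

theorem noiseCoordLaw_eq (sigman : ℝ) (d : ℕ) (k : Fin d) : noiseCoordLaw sigman d k =
    if (k : ℕ) = 0 ∨ (k : ℕ) = d - 1 then Measure.dirac 0
    else gaussianReal 0 (Real.toNNReal (sigman ^ 2)) := by
  rw [Real.toNNReal_of_nonneg (sq_nonneg sigman)]
  rfl

instance (sigman : ℝ) (d : ℕ) (k : Fin d) : IsProbabilityMeasure (noiseCoordLaw sigman d k) := by
  rw [noiseCoordLaw_eq]
  split_ifs <;> infer_instance

instance (sigman : ℝ) (d : ℕ) : IsProbabilityMeasure (noisePatchLaw sigman d) := by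
  unfold noisePatchLaw
  infer_instance

instance (P : ℕ) (hP : 0 < P) : IsProbabilityMeasure (uniformPatch P hP) := by
  unfold uniformPatch
  infer_instance

theorem labelLaw_signs : labelLaw {y : ℝ | y ^ 2 = 1} = 1 := by
  simp [labelLaw, ENNReal.inv_two_add_inv_two]

/-- The projection of `w` onto the coordinates that carry noise, those other than the first and
the last. -/
def noisePart {d : ℕ} (w : Fin d → ℝ) : Fin d → ℝ := fun k =>
  if (k : ℕ) = 0 ∨ (k : ℕ) = d - 1 then 0 else w k

variable {d : ℕ}

theorem dot_noisePart_self (w : Fin d → ℝ) : dot w (noisePart w) = sqnorm (noisePart w) :=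
  sum_congr rfl fun k _ => by
    unfold noisePart
    split_ifs <;> ring

theorem dot_noisePart_e1 (hd : 0 < d) (w : Fin d → ℝ) : dot (noisePart w) (e1 d hd) = 0 := by
  rw [dot_e1_right]
  simp [noisePart]

variable (sigman : ℝ)

theorem memLp_noiseCoord (k : Fin d) : MemLp (fun x : ℝ => x) 2 (noiseCoordLaw sigman d k) := by
  rw [noiseCoordLaw_eq]
  split_ifs
  · exact (memLp_const (0 : ℝ)).ae_eq
      ((ae_dirac_iff (measurableSet_eq_fun measurable_const measurable_id)).2 rfl)
  · exact memLp_id_gaussianReal 2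

theorem integral_noiseCoord (k : Fin d) : ∫ x, x ∂(noiseCoordLaw sigman d k) = 0 := by
  rw [noiseCoordLaw_eq]
  split_ifs <;> simp

theorem variance_noiseCoord (k : Fin d) : Var[fun x => x; noiseCoordLaw sigman d k] =
    if (k : ℕ) = 0 ∨ (k : ℕ) = d - 1 then 0 else sigman ^ 2 := by
  rw [noiseCoordLaw_eq]
  split_ifs
  · simp
  · rw [variance_fun_id_gaussianReal]
    exact Real.coe_toNNReal _ (sq_nonneg _)

theorem memLp_eval_noisePatch (k : Fin d) :
    MemLp (fun ζ : Fin d → ℝ => ζ k) 2 (noisePatchLaw sigman d) :=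
  (memLp_noiseCoord sigman k).comp_measurePreserving
    (measurePreserving_eval (noiseCoordLaw sigman d) k)

theorem memLp_dot (w : Fin d → ℝ) : MemLp (fun ζ => dot w ζ) 2 (noisePatchLaw sigman d) :=
  memLp_finsetSum _ fun k _ => (memLp_eval_noisePatch sigman k).const_mul (w k)

theorem integral_dot_noisePatch (w : Fin d → ℝ) : ∫ ζ, dot w ζ ∂(noisePatchLaw sigman d) = 0 := by
  unfold dot
  rw [integral_finsetSum _ fun k _ =>
    ((memLp_eval_noisePatch sigman k).integrable (by norm_num)).const_mul (w k)]
  refine sum_eq_zero fun k _ => ?_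
  rw [integral_const_mul, noisePatchLaw, integral_comp_eval (μ := noiseCoordLaw sigman d)
    (f := fun x => x) (memLp_noiseCoord sigman k).aestronglyMeasurable, integral_noiseCoord,
    mul_zero]

theorem integral_dot_sq (w : Fin d → ℝ) :
    ∫ ζ, dot w ζ ^ 2 ∂(noisePatchLaw sigman d) = sigman ^ 2 * sqnorm (noisePart w) := by
  rw [← variance_of_integral_eq_zero (memLp_dot sigman w).aestronglyMeasurable.aemeasurable
    (integral_dot_noisePatch sigman w)]
  have dot_eq : (fun ζ => dot w ζ) = ∑ k, fun ζ : Fin d → ℝ => (fun x => w k * x) (ζ k) := by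
    ext ζ
    simp [dot]
  rw [dot_eq, noisePatchLaw,
    variance_sum_pi (fun k => (memLp_noiseCoord sigman k).const_mul (w k)), sqnorm, dot, mul_sum]
  refine sum_congr rfl fun k _ => ?_
  rw [variance_const_mul, variance_noiseCoord, noisePart]
  split_ifs <;> ring

end NoiseLaw

theorem ofReal_one_sub_le_measure_lt_one {Ω : Type*} [MeasurableSpace Ω] {μ : Measure Ω}
    [IsProbabilityMeasure μ] {f : Ω → ℝ} (hf : ∀ ω, 0 ≤ f ω) (hint : Integrable f μ) {c : ℝ}
    (hc : ∫ ω, f ω ∂μ ≤ c) : ENNReal.ofReal (1 - c) ≤ μ {ω | f ω < 1} := by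
  have markov := mul_meas_ge_le_integral_of_nonneg (ae_of_all μ hf) hint 1
  have compl_eq : {ω | f ω < 1}ᶜ = {ω | 1 ≤ f ω} := by
    ext ω
    simp
  have cover := measureReal_union_le (μ := μ) {ω | f ω < 1} {ω | f ω < 1}ᶜ
  rw [Set.union_compl_self, probReal_univ, compl_eq] at cover
  exact ENNReal.ofReal_le_of_le_toReal (by rw [← measureReal_def]; linarith)

section TestError

variable {m P d : ℕ} {sigman κ : ℝ} {w : Fin m → Fin d → ℝ}

theorem ofReal_one_sub_le_measure_sum_dot_sq_lt_one
    (hκ : ∀ r, ∫ ζ, dot (w r) ζ ^ 2 ∂(noisePatchLaw sigman d) ≤ κ) :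
    ENNReal.ofReal (1 - m * P * κ) ≤ (Measure.pi fun _ : Fin P => noisePatchLaw sigman d)
      {ξ | ∑ r, ∑ p, dot (w r) (ξ p) ^ 2 < 1} := by
  have hint : ∀ r p, Integrable (fun ξ : Fin P → Fin d → ℝ => dot (w r) (ξ p) ^ 2)
      (Measure.pi fun _ => noisePatchLaw sigman d) := fun r p =>
    ((memLp_dot sigman (w r)).comp_measurePreserving (measurePreserving_eval _ p)).integrable_sq
  refine ofReal_one_sub_le_measure_lt_one
    (fun ξ => sum_nonneg fun r _ => sum_nonneg fun p _ => sq_nonneg _)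
    (integrable_finsetSum _ fun r _ => integrable_finsetSum _ fun p _ => hint r p) ?_
  rw [integral_finsetSum _ fun r _ => integrable_finsetSum _ fun p _ => hint r p]
  calc ∑ r, ∫ ξ, ∑ p, dot (w r) (ξ p) ^ 2 ∂(Measure.pi fun _ => noisePatchLaw sigman d)
      ≤ ∑ _r : Fin m, ∑ _p : Fin P, κ := by
        refine sum_le_sum fun r _ => ?_
        rw [integral_finsetSum _ fun p _ => hint r p]
        refine sum_le_sum fun p _ => ?_
        rw [integral_comp_eval (μ := fun _ : Fin P => noisePatchLaw sigman d)
          (f := fun ζ => dot (w r) ζ ^ 2) (memLp_dot sigman (w r)).integrable_sq.1]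
        exact hκ r
    _ = m * P * κ := by
        simp only [sum_const, card_univ, Fintype.card_fin, nsmul_eq_mul]
        ring

theorem measurable_testInput (α : ℝ) (hd : 0 < d) :
    Measurable fun z : ℝ × Fin P × (Fin P → Fin d → ℝ) =>
      (Function.update z.2.2 z.2.1 ((α * z.1) • e1 d hd), z.1) := by
  refine (measurable_pi_lambda _ fun p => ?_).prodMk measurable_fst
  simp only [Function.update_apply]
  refine Measurable.ite ?_ ?_ (by fun_prop)
  · exact measurableSet_eq_fun measurable_const (measurable_fst.comp measurable_snd)
  · refine measurable_pi_lambda _ fun k => ?_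
    simp only [Pi.smul_apply, smul_eq_mul]
    fun_prop

end TestError

theorem Setting.ofReal_one_sub_le_robErr (S : Setting) {t : ℕ} {κ : ℝ}
    (hκ : ∀ r, ∫ ζ, dot (S.w t r) ζ ^ 2 ∂(noisePatchLaw S.sigman S.d) ≤ κ)
    (hattack : ∀ (y : ℝ) (s : Fin S.P) (ξ : Fin S.P → Fin S.d → ℝ), y ^ 2 = 1 →
      ∑ r, ∑ p, dot (S.w t r) (ξ p) ^ 2 < 1 →
      ∃ Δ : Fin S.P → Fin S.d → ℝ, (∀ p k, |Δ p k| ≤ S.eps) ∧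
        y * netOut (S.w t) (Function.update ξ s ((S.alpha * y) • e1 S.d S.hd) + Δ) < 0) :
    ENNReal.ofReal (1 - S.m * S.P * κ) ≤ S.robErr t :=
  calc ENNReal.ofReal (1 - S.m * S.P * κ)
      ≤ (Measure.pi fun _ : Fin S.P => noisePatchLaw S.sigman S.d)
          {ξ | ∑ r, ∑ p, dot (S.w t r) (ξ p) ^ 2 < 1} :=
        ofReal_one_sub_le_measure_sum_dot_sq_lt_one hκ
    _ = (labelLaw.prod ((uniformPatch S.P S.hP).prod
          (Measure.pi fun _ : Fin S.P => noisePatchLaw S.sigman S.d)))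
            ({y | y ^ 2 = 1} ×ˢ Set.univ ×ˢ {ξ | ∑ r, ∑ p, dot (S.w t r) (ξ p) ^ 2 < 1}) := by
        rw [Measure.prod_prod, Measure.prod_prod, labelLaw_signs, measure_univ, one_mul, one_mul]
    _ ≤ _ := measure_mono fun z hz => hattack z.1 z.2.1 z.2.2 hz.1 hz.2.2
    _ ≤ S.robErr t := Measure.le_map_apply (measurable_testInput S.alpha S.hd).aemeasurable _

/-! ### Robust error and training loss -/

namespace Setting

variable {S : Setting}

theorem rho_nonneg (p : S.NoiseIdx) (r : Fin S.m) (t : ℕ) : 0 ≤ S.rho p.1.1 p.1.2 r t := by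
  induction t with
  | zero => exact le_rfl
  | succ t ih =>
    have := S.heta
    have := psi_pos (S.marg t p.1.1)
    rw [rho]
    positivity

theorem EventE.sqrt_sqnorm_le (hE : S.EventE) (p : S.NoiseIdx) :
    √(sqnorm (S.x p.1.1 p.1.2)) ≤ 2 * (S.sigman * √(S.d : ℝ)) := by
  have hσ := S.hsigman
  have hpos : 0 ≤ S.sigman ^ 2 * (S.d : ℝ) := by positivity
  refine Real.sqrt_le_iff.2 ⟨by positivity, ?_⟩
  rw [mul_pow, mul_pow, S.sqrt_d_sq]
  linarith [(hE.1 p.1.1 p.1.2 p.2).2]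

theorem EventE.sqrt_sqnorm_noisePart_le (hE : S.EventE) (hdyn : S.ATDyn) (t : ℕ) (r : Fin S.m) :
    √(sqnorm (noisePart (S.w t r))) ≤ 2 * S.sigma0 * √(S.d : ℝ) +
      (∑ p : S.NoiseIdx, S.rho p.1.1 p.1.2 r t) * (2 * (S.sigman * √(S.d : ℝ))) := by
  set v := noisePart (S.w t r)
  have hσ := S.hsigman
  have hσ₀ := S.hsigma0
  have hρ : 0 ≤ ∑ p : S.NoiseIdx, S.rho p.1.1 p.1.2 r t :=
    sum_nonneg fun p _ => rho_nonneg p r t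
  have patch_le (p : S.NoiseIdx) : S.y p.1.1 * dot (S.x p.1.1 p.1.2) v ≤
      2 * (S.sigman * √(S.d : ℝ)) * √(sqnorm v) :=
    calc S.y p.1.1 * dot (S.x p.1.1 p.1.2) v ≤ |S.y p.1.1 * dot (S.x p.1.1 p.1.2) v| :=
          le_abs_self _
      _ = |dot (S.x p.1.1 p.1.2) v| := by rw [abs_mul, S.abs_y, one_mul]
      _ ≤ √(sqnorm (S.x p.1.1 p.1.2)) * √(sqnorm v) := abs_dot_le _ _
      _ ≤ 2 * (S.sigman * √(S.d : ℝ)) * √(sqnorm v) := by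
          gcongr
          exact hE.sqrt_sqnorm_le p
  have expansion : √(sqnorm v) * √(sqnorm v) = dot (S.w 0 r) v +
      ∑ p : S.NoiseIdx, S.rho p.1.1 p.1.2 r t * (S.y p.1.1 * dot (S.x p.1.1 p.1.2) v) :=
    (Real.mul_self_sqrt (sqnorm_nonneg v)).trans <| (dot_noisePart_self (S.w t r)).symm.trans <|
      hdyn.dot_eq t r (dot_noisePart_e1 S.hd _)
  have quadratic : √(sqnorm v) * √(sqnorm v) ≤ (2 * S.sigma0 * √(S.d : ℝ) +
      (∑ p : S.NoiseIdx, S.rho p.1.1 p.1.2 r t) * (2 * (S.sigman * √(S.d : ℝ)))) *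
        √(sqnorm v) := by
    rw [expansion, add_mul, sum_mul, sum_mul]
    refine add_le_add ((le_abs_self _).trans ((abs_dot_le _ _).trans ?_))
      (sum_le_sum fun p _ => ?_)
    · gcongr
      exact hE.2.2.2.1 r
    · rw [mul_assoc]
      exact mul_le_mul_of_nonneg_left (patch_le p) (rho_nonneg p r t)
  rcases (Real.sqrt_nonneg (sqnorm v)).eq_or_lt with h₀ | h₀
  · rw [← h₀]
    positivity
  · exact le_of_mul_le_mul_right quadratic h₀

namespace Regime

variable {C e : ℝ}

theorem integral_dot_sq_le (h : S.Regime C e) (hdyn : S.ATDyn) (hE : S.EventE) (r : Fin S.m) :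
    ∫ ζ, dot (S.w S.T r) ζ ^ 2 ∂(noisePatchLaw S.sigman S.d) ≤
      (sparseDynamics hdyn hE h).corrBound (S.ell + 2) ^ 2 := by
  set D := sparseDynamics hdyn hE h
  set ρ := ∑ p : S.NoiseIdx, S.rho p.1.1 p.1.2 r S.T
  have hσ := S.hsigman
  have hd := zero_lt_one.trans_le S.one_le_sqrt_d
  have hρ : 0 ≤ ρ := sum_nonneg fun p _ => rho_nonneg p r S.T
  have init_le : 4 * (2 * S.ell * S.initScale) ≤ D.corrBound (S.ell + 2) :=
    D.four_corrInit_le_corrBound (D.capped le_rfl).nonneg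
  have interference_le : 3 * S.ell * (S.sigman ^ 2 * √(S.d : ℝ) * ρ) ≤
      D.corrBound (S.ell + 2) / 2 := by
    refine le_of_eq_of_le ?_ ((D.capped le_rfl).interference_le_half r)
    calc 3 * S.ell * (S.sigman ^ 2 * √(S.d : ℝ) * ρ)
        = 3 * S.ell / √(S.d : ℝ) * (S.sigman ^ 2 * √(S.d : ℝ) ^ 2 * ρ) := by field_simp
      _ = 3 * S.ell / √(S.d : ℝ) * ∑ p : S.NoiseIdx, S.noiseEnergy * S.rho p.1.1 p.1.2 r S.T := by
          rw [S.sqrt_d_sq, ← mul_sum, noiseEnergy]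
  have deviation_le : S.sigman * √(sqnorm (noisePart (S.w S.T r))) ≤ D.corrBound (S.ell + 2) := by
    have hnonneg : 0 ≤ S.sigman ^ 2 * √(S.d : ℝ) * ρ := by positivity
    calc S.sigman * √(sqnorm (noisePart (S.w S.T r)))
        ≤ S.sigman * (2 * S.sigma0 * √(S.d : ℝ) + ρ * (2 * (S.sigman * √(S.d : ℝ)))) := by
          gcongr
          exact hE.sqrt_sqnorm_noisePart_le hdyn S.T r
      _ = 2 * S.initScale + 2 * (S.sigman ^ 2 * √(S.d : ℝ) * ρ) := by
          unfold initScale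
          ring
      _ ≤ D.corrBound (S.ell + 2) := by nlinarith [S.initScale_pos, h.ell_ge]
  rw [integral_dot_sq, ← Real.sq_sqrt (sqnorm_nonneg (noisePart (S.w S.T r))), ← mul_pow]
  gcongr

theorem exists_memorized (h : S.Regime C e) (hdyn : S.ATDyn) (hE : S.EventE) :
    ∃ r, ∃ p : S.NoiseIdx, p.1.1 ∈ S.SU ∧
      1 / (6 * ((S.m : ℝ) * S.P) ^ ((1 : ℝ) / 3)) ≤ S.noiseCorr S.T r p := by
  have card_SU_pos : (0 : ℝ) < #S.SU := h.pos.trans_le h.const_le_card_SU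
  obtain ⟨i, hi⟩ := card_pos.1 (Nat.cast_pos.1 card_SU_pos)
  have : Nontrivial (Fin S.P) := Fin.nontrivial_iff_two_le.2 h.two_le_P
  obtain ⟨j, hj⟩ := exists_ne (S.sig i)
  obtain ⟨r, hr⟩ := hE.exists_le_noiseCorr_zero ⟨(i, j), hj⟩
  have memorized := (sparseDynamics hdyn hE h).exists_le_corr
    (i := (⟨(i, j), hj⟩ : S.NoiseIdx)) hi hr
  rwa [SparseDynamics.M₃, CubicDynamics.m, Fintype.card_fin] at memorized

theorem P_mul_ell_sq_le (h : S.Regime C e) : S.P * S.ell ^ 2 ≤ S.N := by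
  have hP := S.one_le_P
  calc S.P * S.ell ^ 2 = 1 * (1 * S.P * S.ell ^ 2) := by ring
    _ ≤ C * (S.m * S.P * S.ell ^ 2) := by
        have hC := h.pos
        gcongr
        exacts [h.one_le, S.one_le_m]
    _ ≤ S.N := h.const_mul_width_le

theorem attackScale_nonneg (h : S.Regime C e) : 0 ≤ S.attackScale := by
  have := h.ell_ge
  unfold attackScale
  positivity

theorem attackScale_le (h : S.Regime C e) : S.attackScale ≤ S.N * S.m := by
  have hell := h.ell_ge
  have hP : √(S.P : ℝ) ≤ S.P := Real.sqrt_le_self_iff.2 (.inr S.one_le_P)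
  calc S.attackScale = 30 * √(S.P : ℝ) * S.ell * S.m := by unfold attackScale; ring
    _ ≤ S.ell * S.P * S.ell * S.m := by
        gcongr
        linarith
    _ = S.P * S.ell ^ 2 * S.m := by ring
    _ ≤ S.N * S.m := by
        gcongr
        exact h.P_mul_ell_sq_le

theorem le_attack_cube (h : S.Regime C e) : 125 * (S.m * S.ell ^ 3) ≤
    (S.attackScale * (1 / (6 * ((S.m : ℝ) * S.P) ^ ((1 : ℝ) / 3)))) ^ 3 := by
  have hm := S.one_le_m
  have hP := zero_lt_one.trans_le S.one_le_P
  have hell := h.ell_ge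
  have width_ge : 1 ≤ S.m * √(S.P : ℝ) :=
    one_le_mul_of_one_le_of_one_le hm (Real.one_le_sqrt.2 S.one_le_P)
  rw [mul_pow, div_pow, mul_pow, rpow_third_cube (by positivity)]
  calc 125 * (S.m * S.ell ^ 3) ≤ 125 * (S.m * S.ell ^ 3) * (S.m * √(S.P : ℝ)) :=
        le_mul_of_one_le_right (by positivity) width_ge
    _ = 125 * S.m ^ 2 * S.ell ^ 3 * √(S.P : ℝ) * (√(S.P : ℝ) ^ 2 / S.P) := by
        rw [Real.sq_sqrt hP.le, div_self hP.ne']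
        ring
    _ = S.attackScale ^ 3 * (1 ^ 3 / (6 ^ 3 * (S.m * S.P))) := by
        unfold attackScale
        field_simp
        ring

theorem million_mul_m_le (h : S.Regime C e) : 1000000 * S.m ≤ S.m * S.ell ^ 3 := by
  rw [mul_comm]
  gcongr
  calc (1000000 : ℝ) = 100 ^ 3 := by norm_num
    _ ≤ S.ell ^ 3 := cube_le_cube h.ell_ge

theorem two_le_attack (h : S.Regime C e) :
    2 ≤ S.attackScale * (1 / (6 * ((S.m : ℝ) * S.P) ^ ((1 : ℝ) / 3))) := by
  by_contra! hlt
  have hnonneg : 0 ≤ S.attackScale * (1 / (6 * ((S.m : ℝ) * S.P) ^ ((1 : ℝ) / 3))) :=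
    mul_nonneg h.attackScale_nonneg (by positivity)
  linarith [h.le_attack_cube, h.million_mul_m_le, S.one_le_m, pow_le_pow_left₀ hnonneg hlt.le 3]

theorem abs_attack_le (h : S.Regime C e) (hE : S.EventE) {y : ℝ} (hy : y ^ 2 = 1)
    (p : S.NoiseIdx) (k : Fin S.d) :
    |(-y) * (S.attackScale * S.y p.1.1 * S.x p.1.1 p.1.2 k)| ≤ S.eps := by
  have abs_y : |y| = 1 := by rw [← Real.sqrt_sq_eq_abs, hy, Real.sqrt_one]
  rw [abs_mul, abs_neg, abs_y, one_mul, abs_mul, abs_mul, S.abs_y, mul_one,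
    abs_of_nonneg h.attackScale_nonneg]
  exact (mul_le_mul_of_nonneg_left (hE.2.2.1 p.1.1 p.1.2 p.2 k) h.attackScale_nonneg).trans
    h.attackScale_mul_noiseSup_le

theorem mul_corrBound_le (h : S.Regime C e) (hdyn : S.ATDyn) (hE : S.EventE) :
    S.N * S.m * (sparseDynamics hdyn hE h).corrBound (S.ell + 2) ≤ 5 * e := by
  have scaled := (sparseDynamics hdyn hE h).scaled_corrBound_le
    ((sparseDynamics hdyn hE h).capped le_rfl).le
  rwa [CubicDynamics.N, CubicDynamics.m, Fintype.card_fin, Fintype.card_fin] at scaled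

theorem attackScale_mul_corrBound_le_one (h : S.Regime C e) (hdyn : S.ATDyn) (hE : S.EventE) :
    S.attackScale * (sparseDynamics hdyn hE h).corrBound (S.ell + 2) ≤ 1 :=
  calc S.attackScale * (sparseDynamics hdyn hE h).corrBound (S.ell + 2)
      ≤ S.N * S.m * (sparseDynamics hdyn hE h).corrBound (S.ell + 2) :=
        mul_le_mul_of_nonneg_right h.attackScale_le
          ((sparseDynamics hdyn hE h).capped le_rfl).corrBound_pos.le
    _ ≤ 5 * e := h.mul_corrBound_le hdyn hE
    _ ≤ 1 := by linarith [h.tol_le]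

-- The attack adds a large multiple of a memorized training noise patch to a non-signal patch.
theorem exists_attack (h : S.Regime C e) (hdyn : S.ATDyn) (hE : S.EventE) {y : ℝ} (hy : y ^ 2 = 1)
    (s : Fin S.P) {ξ : Fin S.P → Fin S.d → ℝ} (hξ : ∑ r, ∑ p, dot (S.w S.T r) (ξ p) ^ 2 < 1) :
    ∃ Δ : Fin S.P → Fin S.d → ℝ, (∀ p k, |Δ p k| ≤ S.eps) ∧
      y * netOut (S.w S.T) (Function.update ξ s ((S.alpha * y) • e1 S.d S.hd) + Δ) < 0 := by
  obtain ⟨r₀, p, -, memorized⟩ := h.exists_memorized hdyn hE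
  have : Nontrivial (Fin S.P) := Fin.nontrivial_iff_two_le.2 h.two_le_P
  obtain ⟨p₀, hp₀⟩ := exists_ne s
  set D := sparseDynamics hdyn hE h
  have dot_attack (r : Fin S.m) : dot (S.w S.T r) ((S.attackScale * S.y p.1.1) • S.x p.1.1 p.1.2) =
      S.attackScale * S.noiseCorr S.T r p := by
    rw [dot_smul_right, noiseCorr, mul_assoc]
  refine ⟨Pi.single p₀ ((-y) • (S.attackScale * S.y p.1.1) • S.x p.1.1 p.1.2), fun q k => ?_,
    label_mul_netOut_attackedInput_neg (β := 2 * S.ell)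
      (V := S.attackScale * (1 / (6 * ((S.m : ℝ) * S.P) ^ ((1 : ℝ) / 3))))
      hp₀ hy (fun r => D.signal_le le_rfl r) (fun r => ?_) h.two_le_attack ⟨r₀, ?_⟩ ?_ hξ⟩
  · rcases eq_or_ne q p₀ with rfl | hq
    · rw [Pi.single_eq_same]
      exact h.abs_attack_le hE hy p k
    · rw [Pi.single_eq_of_ne hq, Pi.zero_apply, abs_zero]
      exact S.heps.le
  · have lower : -D.corrBound (S.ell + 2) ≤ S.noiseCorr S.T r p :=
      (D.capped le_rfl).neg_corrBound_le_corr r p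
    have scaled := mul_le_mul_of_nonneg_left lower h.attackScale_nonneg
    rw [dot_attack]
    linarith [h.attackScale_mul_corrBound_le_one hdyn hE]
  · rw [dot_attack]
    exact mul_le_mul_of_nonneg_left memorized h.attackScale_nonneg
  · linarith [h.le_attack_cube, h.million_mul_m_le, S.one_le_m]

theorem le_robErr (h : S.Regime C e) (hdyn : S.ATDyn) (hE : S.EventE) :
    ENNReal.ofReal (1 - 5 * e) ≤ S.robErr S.T := by
  set D := sparseDynamics hdyn hE h
  have capped : D.Capped S.T (S.ell + 2) := D.capped le_rfl
  refine (ENNReal.ofReal_le_ofReal ?_).trans (S.ofReal_one_sub_le_robErr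
    (h.integral_dot_sq_le hdyn hE) fun y s ξ hy hξ => h.exists_attack hdyn hE hy s hξ)
  have corrBound_pos := capped.corrBound_pos
  have P_le : (S.P : ℝ) ≤ S.N :=
    (le_mul_of_one_le_right (by linarith [S.one_le_P])
      (one_le_pow₀ (by linarith [h.ell_ge]))).trans h.P_mul_ell_sq_le
  have : S.m * S.P * D.corrBound (S.ell + 2) ^ 2 ≤ 5 * e :=
    calc S.m * S.P * D.corrBound (S.ell + 2) ^ 2
        = S.P * S.m * D.corrBound (S.ell + 2) * D.corrBound (S.ell + 2) := by ring
      _ ≤ S.N * S.m * D.corrBound (S.ell + 2) * 1 := by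
          gcongr
          linarith [capped.corrBound_le]
      _ ≤ 5 * e := by
          rw [mul_one]
          exact h.mul_corrBound_le hdyn hE
  linarith

theorem signal_learned (h : S.Regime C e) (hdyn : S.ATDyn) (hE : S.EventE) :
    S.T0 (1 / 2) ≤ S.T ∧ ∃ r, 1 / 2 / (S.alpha * (S.m : ℝ) ^ ((1 : ℝ) / 3)) ≤ S.wsig S.T r := by
  set D := sparseDynamics hdyn hE h
  obtain ⟨t, ht, r, hr⟩ := D.exists_lt_signal
  have hα := S.halpha
  have learned : 1 / 2 / (S.alpha * (S.m : ℝ) ^ ((1 : ℝ) / 3)) < S.wsig t r := by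
    rw [CubicDynamics.m₃, CubicDynamics.m, Fintype.card_fin] at hr
    change _ < S.alpha * S.wsig t r at hr
    rw [← div_div, div_right_comm, div_div 1, div_lt_iff₀ hα, mul_comm (S.wsig t r)]
    exact hr
  have mono : S.alpha * S.wsig t r ≤ S.alpha * S.wsig S.T r := D.signal_mono r ht
  have T0_le : S.T0 (1 / 2) ≤ t :=
    Nat.sInf_le (show t ∈ {t : ℕ | ∃ r, 1 / 2 / (S.alpha * (S.m : ℝ) ^ ((1 : ℝ) / 3)) < S.wsig t r}
      from ⟨r, learned⟩)
  exact ⟨T0_le.trans ht, r, learned.le.trans (le_of_mul_le_mul_left mono hα)⟩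

theorem avg_lloss_le (h : S.Regime C e) (hdyn : S.ATDyn) (hE : S.EventE) :
    1 / (S.N : ℝ) * ∑ i, lloss (S.marg S.T i) ≤ 2 * S.pun := by
  have sum_le : ∑ i, lloss (S.marg S.T i) ≤ 1 + #S.SU :=
    (sparseDynamics hdyn hE h).sum_lloss_margin_le
  have card_SU_ge : (1 : ℝ) ≤ #S.SU := h.one_le.trans h.const_le_card_SU
  rw [pun, one_div_mul_eq_div, ← mul_div_assoc,
    div_le_div_iff_of_pos_right (zero_lt_one.trans_le S.one_le_N)]
  linarith

end Regime

end Setting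

theorem Setting.signal_loss_nonneg {S : Setting} {C₀ : ℝ} (hT0 : S.T0 C₀ ≤ S.T) :
    0 ≤ 40 * (S.m : ℝ) ^ ((2 : ℝ) / 3) * Real.log S.T ^ ((1 : ℝ) / 3) /
      (C₀ ^ 2 * (1 - S.eps / S.alpha) ^ 3 * S.eta * S.alpha ^ 2 * ((S.T : ℝ) - S.T0 C₀)) := by
  have remaining_time : 0 ≤ (S.T : ℝ) - S.T0 C₀ := sub_nonneg.2 (Nat.cast_le.2 hT0)
  have remaining_signal : 0 ≤ 1 - S.eps / S.alpha :=
    sub_nonneg.2 ((div_le_one S.halpha).2 S.hepsalpha.le)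
  have : 0 ≤ Real.log S.T := Real.log_natCast_nonneg _
  have hη := S.heta
  positivity

theorem exists_regime {θ : ℝ} (hθ : 0 < θ) : ∃ C e : ℝ, 0 < C ∧ 5 * e ≤ θ ∧
    ∀ S : Setting, S.WeakCondH C → S.SparseRegime C → S.Regime C e := by
  obtain ⟨e, he, he_le, heθ⟩ : ∃ e : ℝ, 0 < e ∧ e ≤ 1 / 1000 ∧ 5 * e ≤ θ :=
    ⟨min (1 / 1000) (θ / 5), by positivity, min_le_left _ _, by
      linarith [min_le_right (1 / 1000 : ℝ) (θ / 5)]⟩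
  have hC : 0 < max (Real.exp 10000) (9 / e ^ 2) := lt_max_of_lt_left (Real.exp_pos _)
  refine ⟨max (Real.exp 10000) (9 / e ^ 2), e, hC, heθ, fun S hweak hsparse => ?_⟩
  exact
    { toWeakCondH := hweak
      sparse := hsparse
      tol_pos := he
      tol_le := he_le
      log_ge := (Real.le_log_iff_exp_le hC).2 (le_max_left _ _)
      nine_le_tol_sq_mul := by
        rw [← div_le_iff₀' (by positivity)]
        exact le_max_right _ _ }

theorem stmt15_general :
    ∃ C0 C1 c : ℝ, 0 < C0 ∧ 0 < C1 ∧ 0 < c ∧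
      ∀ θ : ℝ, 0 < θ →
        ∃ C : ℝ, 0 < C ∧
          ∀ S : Setting, S.ATDyn → S.EventE → S.WeakCondH C → S.SparseRegime C →
            S.T0 C0 ≤ S.T ∧
            (∃ r, C0 / (S.alpha * (S.m : ℝ) ^ ((1 : ℝ) / 3)) ≤ S.wsig S.T r) ∧
            (∃ i ∈ S.SU, ∃ r : Fin S.m, ∃ j, j ≠ S.sig i ∧
              C1 / (3 * ((S.m : ℝ) * S.P) ^ ((1 : ℝ) / 3)) ≤ S.y i * dot (S.w S.T r) (S.x i j)) ∧
            (1 / (S.N : ℝ) * ∑ i, lloss (S.marg S.T i) ≤ c * S.pun ∧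
              1 / (S.N : ℝ) * ∑ i, lloss (S.marg S.T i) ≤ θ) ∧
            ENNReal.ofReal (1 - θ) ≤ S.robErr S.T := by
  refine ⟨1 / 2, 1 / 2, 2, by norm_num, by norm_num, by norm_num, fun θ hθ => ?_⟩
  obtain ⟨C, e, hC, heθ, regime⟩ := exists_regime hθ
  refine ⟨C, hC, fun S hdyn hE hweak hsparse => ?_⟩
  have h : S.Regime C e := regime S hweak hsparse
  obtain ⟨T0_le, learned⟩ := h.signal_learned hdyn hE
  obtain ⟨r, p, hp, memorized⟩ := h.exists_memorized hdyn hE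
  have loss_le := h.avg_lloss_le hdyn hE
  refine ⟨T0_le, learned, ⟨p.1.1, hp, r, p.1.2, p.2, le_of_eq_of_le ?_ memorized⟩,
    ⟨loss_le, by linarith [h.pun_le, h.tol_pos]⟩,
    (ENNReal.ofReal_le_ofReal (by linarith)).trans (h.le_robErr hdyn hE)⟩
  rw [div_div, ← mul_assoc]
  norm_num

/-- Adversarial training with unlearnable samples. On the event `E`,
under Condition (H) in the sparse-unlearnable regime: (1) some filter aligns with the
learnable feature; (2) the network memorizes noise on some unlearnable sample; (3) the
average robust training logistic loss obeys the stated bound plus `c·p_un` and is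
`o(1)`; (4) the robust test error on the learnable test distribution is at least
`1/2 − o(1)`. -/
theorem stmt15 :
    ∃ C0 C1 c : ℝ, 0 < C0 ∧ 0 < C1 ∧ 0 < c ∧
      ∀ θ : ℝ, 0 < θ →
        ∃ C : ℝ, 0 < C ∧
          ∀ S : Setting, S.ATDyn → S.EventE → S.CondH C → S.SparseRegime C →
            (∃ r, C0 / (S.alpha * (S.m : ℝ) ^ ((1 : ℝ) / 3)) ≤ S.wsig S.T r) ∧
            (∃ i ∈ S.SU, ∃ r : Fin S.m, ∃ j, j ≠ S.sig i ∧
              C1 / (3 * ((S.m : ℝ) * S.P) ^ ((1 : ℝ) / 3)) ≤ S.y i * dot (S.w S.T r) (S.x i j)) ∧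
            (1 / (S.N : ℝ) * ∑ i, lloss (S.marg S.T i) ≤
                40 * (S.m : ℝ) ^ ((2 : ℝ) / 3) * Real.log S.T ^ ((1 : ℝ) / 3) /
                    (C0 ^ 2 * (1 - S.eps / S.alpha) ^ 3 * S.eta * S.alpha ^ 2 *
                      ((S.T : ℝ) - S.T0 C0)) + c * S.pun ∧
              1 / (S.N : ℝ) * ∑ i, lloss (S.marg S.T i) ≤ θ) ∧
            ENNReal.ofReal (1 / 2 - θ) ≤ S.robErr S.T := by
  obtain ⟨C0, C1, c, hC0, hC1, hc, main⟩ := stmt15_general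
  refine ⟨C0, C1, c, hC0, hC1, hc, fun θ hθ => ?_⟩
  obtain ⟨C, hC, main⟩ := main θ hθ
  refine ⟨C, hC, fun S hdyn hE hH hsparse => ?_⟩
  obtain ⟨T0_le, learned, memorized, ⟨loss_le, loss_le_theta⟩, err⟩ :=
    main S hdyn hE hH.weakCondH hsparse
  exact ⟨learned, memorized,
    ⟨loss_le.trans (le_add_of_nonneg_left (Setting.signal_loss_nonneg T0_le)), loss_le_theta⟩,
    (ENNReal.ofReal_le_ofReal (by linarith)).trans err⟩

end AD

end
end

section
/- Let ℓ(z) = log(1+e^{−z}) be the logistic loss and σ(z) = 1/(1+e^{−z}) the logistic sigmoid, let y ∈ {+1,−1}, let f_T ∈ ℝ be a fixed teacher logit, and for a variable student logit f ∈ ℝ define the adversarial distillation loss L_AD(f) = σ(y f_T)·ℓ(y f) + σ(−y f_T)·ℓ(−y f) and the adversarial training loss L_AT(f) = ℓ(y f). If the teacher margin satisfies y f_T ≥ Γ for some Γ ≥ 0, then for every f the derivatives satisfy |dL_AD/df − dL_AT/df| = σ(−y f_T) ≤ e^{−Γ}. In particular, if Γ ≥ Cd, the difference is at most e^{−Cd}.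 -/
noncomputable section

namespace AD

/-! Since `1 + e^z = e^z (1 + e^{-z})`, flipping the label only adds a linear term to the logistic
loss: `ℓ(-z) = ℓ(z) + z`. As the soft labels `σ(t)` and `σ(-t)` sum to `1`, the distillation loss at
margin `z` is `ℓ(z) + σ(-t) z`, so its gradient differs from the hard-label one by `σ(-t)` times the
gradient of the margin. -/

/-- The adversarial distillation loss: the logistic loss at student margin `z`, averaged over the
two labels with the soft labels `σ(t)`, `σ(-t)` of a teacher. Both `t = y f_T` and `z = y f` are
margins with respect to the true label, not logits. -/
def distillLoss (t z : ℝ) : ℝ := sigm t * lloss z + sigm (-t) * lloss (-z)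

theorem sigm_eq_sigmoid (z : ℝ) : sigm z = Real.sigmoid z := one_div _

theorem sigm_pos (z : ℝ) : 0 < sigm z :=
  sigm_eq_sigmoid z ▸ Real.sigmoid_pos z

theorem sigm_add_sigm_neg (z : ℝ) : sigm z + sigm (-z) = 1 := by
  rw [sigm_eq_sigmoid, sigm_eq_sigmoid, Real.sigmoid_neg, add_sub_cancel]

theorem sigm_neg_le_exp_neg (z : ℝ) : sigm (-z) ≤ Real.exp (-z) := by
  rw [sigm_eq_sigmoid, ← Real.sigmoid_mul_rexp_neg]
  exact mul_le_of_le_one_left (Real.exp_nonneg _) (Real.sigmoid_le_one z)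

theorem lloss_neg (z : ℝ) : lloss (-z) = lloss z + z := by
  have hfactor : 1 + Real.exp z = (1 + Real.exp (-z)) * Real.exp z := by
    rw [add_mul, one_mul, ← Real.exp_add, neg_add_cancel, Real.exp_zero, add_comm]
  rw [lloss, lloss, neg_neg, hfactor, Real.log_mul (by positivity) (Real.exp_ne_zero z),
    Real.log_exp]

theorem differentiable_lloss : Differentiable ℝ lloss :=
  (differentiable_neg.exp.const_add 1).log fun _ => by positivity

theorem distillLoss_eq_lloss_add (t z : ℝ) : distillLoss t z = lloss z + sigm (-t) * z := by
  rw [distillLoss, lloss_neg]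
  linear_combination lloss z * sigm_add_sigm_neg t

theorem deriv_distillLoss_comp_sub_deriv_lloss_comp {m : ℝ → ℝ} {m' x : ℝ} (t : ℝ)
    (hm : HasDerivAt m m' x) :
    deriv (fun u => distillLoss t (m u)) x - deriv (fun u => lloss (m u)) x = sigm (-t) * m' := by
  have hloss : DifferentiableAt ℝ (fun u => lloss (m u)) x :=
    (differentiable_lloss (m x)).comp x hm.differentiableAt
  simp only [distillLoss_eq_lloss_add]
  rw [(hloss.hasDerivAt.fun_add (hm.const_mul (sigm (-t)))).deriv, add_sub_cancel_left]

theorem stmt16_general (m m' : ℝ → ℝ) (t Γ C d : ℝ) (hm : ∀ x, HasDerivAt m (m' x) x)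
    (hmargin : Γ ≤ t) :
    (∀ x, |deriv (fun u => distillLoss t (m u)) x - deriv (fun u => lloss (m u)) x| =
          sigm (-t) * |m' x| ∧
        sigm (-t) ≤ Real.exp (-Γ)) ∧
      (C * d ≤ Γ → ∀ x,
        |deriv (fun u => distillLoss t (m u)) x - deriv (fun u => lloss (m u)) x| ≤
          Real.exp (-(C * d)) * |m' x|) := by
  have habs (x : ℝ) : |deriv (fun u => distillLoss t (m u)) x - deriv (fun u => lloss (m u)) x| =
      sigm (-t) * |m' x| := by
    rw [deriv_distillLoss_comp_sub_deriv_lloss_comp t (hm x), abs_mul, abs_of_pos (sigm_pos _)]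
  have hle {B : ℝ} (hB : B ≤ t) : sigm (-t) ≤ Real.exp (-B) :=
    (sigm_neg_le_exp_neg t).trans (Real.exp_le_exp.2 (neg_le_neg hB))
  refine ⟨fun x => ⟨habs x, hle hmargin⟩, fun hCd x => ?_⟩
  rw [habs x]
  exact mul_le_mul_of_nonneg_right (hle (hCd.trans hmargin)) (abs_nonneg _)

/-- Gradient approximation under a confident teacher. For a fixed
teacher logit `f_T` with margin `y f_T ≥ Γ ≥ 0`, the derivative in the student logit of
the adversarial distillation loss
`L_AD(f) = σ(y f_T) ℓ(y f) + σ(−y f_T) ℓ(−y f)` differs from that of the adversarial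
training loss `L_AT(f) = ℓ(y f)` by exactly `σ(−y f_T) ≤ e^{−Γ}`; in particular, if
`Γ ≥ C d`, the difference is at most `e^{−C d}`. -/
theorem stmt16 (y fT Γ C d : ℝ) (hy : y = 1 ∨ y = -1) (hΓ : 0 ≤ Γ)
    (hmargin : Γ ≤ y * fT) :
    (∀ f : ℝ,
      |deriv (fun g : ℝ => sigm (y * fT) * lloss (y * g) + sigm (-(y * fT)) * lloss (-(y * g))) f -
          deriv (fun g : ℝ => lloss (y * g)) f| = sigm (-(y * fT)) ∧
        sigm (-(y * fT)) ≤ Real.exp (-Γ)) ∧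
      (C * d ≤ Γ → ∀ f : ℝ,
        |deriv (fun g : ℝ => sigm (y * fT) * lloss (y * g) + sigm (-(y * fT)) * lloss (-(y * g))) f -
            deriv (fun g : ℝ => lloss (y * g)) f| ≤ Real.exp (-(C * d))) := by
  have hy_abs : |y| = 1 := (abs_eq zero_le_one).2 hy
  simpa only [distillLoss, hy_abs, mul_one] using
    stmt16_general (y * ·) (fun _ => y) (y * fT) Γ C d (fun _ => hasDerivAt_const_mul y) hmargin

end AD

end
end
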